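/- arXiv:2309.07744 — 5 statements merged into one kernel-verified Lean document; each statement's English description precedes it below -/
import Mathlib

section
/- For every integer d ≥ 2 there exist a constant c > 0 and a threshold Q such that for every prime power q ≥ Q and every real number k ≥ 1 + c·q^{−1/d}, there is a collection 𝒞 of subsets (containers) of 𝔽_q^d satisfying: (i) every general position subset of 𝔽_q^d is contained in some member of 𝒞; (ii) |C| ≤ kq for every C ∈ 𝒞; and (iii) |𝒞| ≤ 2^{c · (q/min{k−1, 1})^{d/(d+1)} · (log q)²}, where log is base 2. -/
/-- A set `P ⊆ 𝔽_q^d` is in general position if every `(d+1)`-element subset of `P`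
is affinely independent. -/
def IsGenPos (F : Type*) [Field F] (d : ℕ) (P : Set (Fin d → F)) : Prop :=
  ∀ s : Finset (Fin d → F), (↑s : Set (Fin d → F)) ⊆ P → s.card = d + 1 →
    AffineIndependent F ((↑) : s → (Fin d → F))

namespace GenPosContainers

open Finset Module

section Linear

variable {F V α : Type*} [Field F] [AddCommGroup V] [Module F V] [DecidableEq α]

/-- All subsets with at most `e+3` elements are linearly independent. -/
def GP (F : Type*) {V α : Type*} [Field F] [AddCommGroup V] [Module F V] (e : ℕ) (v : α → V)
    (S : Finset α) : Prop :=
  ∀ s : Finset α, s ⊆ S → s.card ≤ e + 3 → LinearIndepOn F v (s : Set α)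

lemma GP.mono {e : ℕ} {v : α → V} {S T : Finset α} (h : GP F e v T) (hST : S ⊆ T) :
    GP F e v S := fun s hs hc => h s (hs.trans hST) hc

lemma GP.card_span [FiniteDimensional F V] {e : ℕ} {v : α → V} {S : Finset α}
    (h : GP F e v S) (U : Submodule F V) (hU : finrank F U ≤ e + 2) (s : Finset α)
    (hs : s ⊆ S) (hsU : ∀ x ∈ s, v x ∈ U) : s.card ≤ e + 2 := by
  by_contra hcon
  obtain ⟨t, hts, htc⟩ := Finset.exists_subset_card_eq (s := s) (n := e + 3) (by omega)
  have hli : LinearIndependent F (fun x : t => v x) := h t (hts.trans hs) htc.le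
  have h2 : LinearIndependent F (fun x : t => (⟨v x, hsU x (hts x.2)⟩ : U)) := by
    apply LinearIndependent.of_comp U.subtype
    exact hli
  have := h2.fintype_card_le_finrank
  simp [htc] at this
  omega

/-- A dependent `A ∪ {y,z}` has an element of `A` in the span of the others. -/
lemma exists_of_bad {v : α → V}
    (hv : ∀ y z, y ≠ z → LinearIndepOn F v ({y, z} : Set α))
    (A : Finset α) (y z : α) (hyz : y ≠ z)
    (hbad : ¬ LinearIndepOn F v (insert y (insert z A) : Finset α)) :
    ∃ x ∈ A, x ≠ y ∧ x ≠ z ∧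
      v x ∈ Submodule.span F (v '' (insert y (insert z (A.erase x)) : Finset α)) := by
  by_contra hcon
  push Not at hcon
  apply hbad
  rw [linearIndepOn_finset_iff]
  intro g hg
  have hA : ∀ x ∈ A, x ≠ y → x ≠ z → g x = 0 := by
    intro x hx hxy hxz
    by_contra hgx
    apply hcon x hx hxy hxz
    have hxm : x ∈ insert y (insert z A) := by simp [hx]
    rw [← Finset.add_sum_erase _ _ hxm] at hg
    have : v x = - ((g x)⁻¹ • ∑ i ∈ (insert y (insert z A)).erase x, g i • v i) := by
      rw [← eq_neg_iff_add_eq_zero] at hg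
      rw [← smul_neg, ← hg, smul_smul, inv_mul_cancel₀ hgx, one_smul]
    rw [this]
    apply Submodule.neg_mem
    apply Submodule.smul_mem
    apply Submodule.sum_mem
    intro i hi
    apply Submodule.smul_mem
    apply Submodule.subset_span
    refine ⟨i, ?_, rfl⟩
    simp only [mem_erase, mem_insert, coe_insert, Set.mem_insert_iff, mem_coe] at hi ⊢
    tauto
  have h2 := hv y z hyz
  have h3 : ({y, z} : Set α) = (({y, z} : Finset α) : Set α) := by simp
  rw [h3, linearIndepOn_finset_iff] at h2
  have h4 := h2 g (by
    rw [← hg]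
    apply Finset.sum_subset
    · intro i; simp; tauto
    · intro i hi hi'
      simp at hi hi'
      rw [hA i (by tauto) hi'.1 hi'.2, zero_smul])
  intro i hi
  by_cases hiy : i = y
  · exact h4 i (by simp [hiy])
  by_cases hiz : i = z
  · exact h4 i (by simp [hiz])
  exact hA i (by simp at hi; tauto) hiy hiz

open Classical in
lemma mult_bound [FiniteDimensional F V] {e : ℕ} {v : α → V}
    (hv : ∀ y z, y ≠ z → LinearIndepOn F v ({y, z} : Set α))
    (T : Finset α) (y z : α) (hyz : y ≠ z) (hy : y ∉ T) (hT : GP F e v (insert y T)) :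
    ((T.powersetCard (e + 1)).filter
      (fun A => ¬ LinearIndepOn F v (insert y (insert z A) : Finset α))).card
      ≤ (T.card).choose e := by
  rw [← Finset.card_powersetCard]
  have key : ∀ A : Finset α, ∃ x, ¬ LinearIndepOn F v (insert y (insert z A) : Finset α) →
      (x ∈ A ∧ x ≠ y ∧ x ≠ z ∧
      v x ∈ Submodule.span F (v '' (insert y (insert z (A.erase x)) : Finset α))) := by
    intro A
    by_cases h : LinearIndepOn F v (insert y (insert z A) : Finset α)
    · exact ⟨y, fun h' => absurd h h'⟩
    · obtain ⟨x, hx⟩ := exists_of_bad hv A y z hyz h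
      exact ⟨x, fun _ => ⟨hx.1, hx.2⟩⟩
  choose f hf using key
  apply Finset.card_le_card_of_injOn (fun A => A.erase (f A))
  · intro A hA
    simp only [coe_filter, mem_powersetCard, Set.mem_ofPred_eq] at hA
    obtain ⟨⟨hAT, hAc⟩, hb⟩ := hA
    simp only [mem_coe, mem_powersetCard]
    refine ⟨(Finset.erase_subset _ _).trans hAT, ?_⟩
    rw [Finset.card_erase_of_mem (hf A hb).1, hAc]; rfl
  · intro A hA A' hA' hEq
    simp only [coe_filter, mem_powersetCard, Set.mem_ofPred_eq] at hA hA'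
    obtain ⟨⟨hAT, hAc⟩, hb⟩ := hA
    obtain ⟨⟨hAT', hAc'⟩, hb'⟩ := hA'
    simp only at hEq
    obtain ⟨h1, h2, h3, h4⟩ := hf A hb
    obtain ⟨h1', h2', h3', h4'⟩ := hf A' hb'
    by_cases hff : f A = f A'
    · rw [← Finset.insert_erase h1, ← Finset.insert_erase h1', hEq, hff]
    exfalso
    rw [← hEq] at h4'
    set B := A.erase (f A) with hB
    have hBc : B.card = e := by
      rw [hB, Finset.card_erase_of_mem h1, hAc]; rfl
    have hfB : f A ∉ B := by simp [hB]
    have hfB' : f A' ∉ B := by rw [hEq]; simp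
    have hBT : B ⊆ T := (Finset.erase_subset _ _).trans hAT
    have hyB : y ∉ B := fun h => hy (hBT h)
    have hcard : (insert y (insert (f A) (insert (f A') B))).card = e + 3 := by
      rw [Finset.card_insert_of_notMem, Finset.card_insert_of_notMem,
        Finset.card_insert_of_notMem hfB', hBc]
      · simp [hff, hfB]
      · simp [hyB, Ne.symm h2, Ne.symm h2']
    have hle := hT.card_span
      (Submodule.span F (v '' (insert y (insert z B) : Finset α))) (by
        rw [← Finset.coe_image]
        refine (finrank_span_finset_le_card _).trans ?_
        refine Finset.card_image_le.trans ?_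
        refine (Finset.card_insert_le _ _).trans ?_
        have := Finset.card_insert_le z B
        omega)
      (insert y (insert (f A) (insert (f A') B))) (by
        intro i hi
        simp only [mem_insert] at hi ⊢
        rcases hi with rfl | rfl | rfl | h
        · simp
        · right; exact hAT h1
        · right; exact hAT' h1'
        · right; exact hBT h)
      (by
        intro i hi
        simp only [mem_insert] at hi
        rcases hi with rfl | rfl | rfl | h
        · exact Submodule.subset_span ⟨_, by simp, rfl⟩
        · exact h4
        · exact h4'
        · exact Submodule.subset_span ⟨i, by simp [h], rfl⟩)
    omega

open Classical in
lemma card_image_span_le {W : Type*} [AddCommGroup W] [Module F W] [Fintype F]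
    (hW : finrank F W = 2) (Y : Finset α) (f : α → W) (hf : ∀ y ∈ Y, f y ≠ 0) :
    (Y.image (fun y => Submodule.span F {f y})).card ≤ Fintype.card F + 1 := by
  have h := Projectivization.card_of_finrank_two F W hW
  have : FiniteDimensional F W := FiniteDimensional.of_finrank_pos (by omega)
  have : Finite W := Module.finite_of_finite F
  have : Finite (Projectivization F W) := by
    exact Projectivization.finite_iff_of_finite F W |>.2 inferInstance
  have : Fintype (Projectivization F W) := Fintype.ofFinite _
  rw [Nat.card_eq_fintype_card, Nat.card_eq_fintype_card] at h
  rw [← h, ← Finset.card_univ,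
    ← Finset.card_image_of_injective _ (Projectivization.submodule_injective (K := F) (V := W))]
  apply Finset.card_le_card
  intro S hS
  rw [Finset.mem_image] at hS
  obtain ⟨y, hy, rfl⟩ := hS
  rw [Finset.mem_image]
  exact ⟨Projectivization.mk F (f y) (hf y hy), Finset.mem_univ _, rfl⟩

lemma span_ne {v : α → V} (A : Finset α) (y z : α) (hyz : y ≠ z) (hz : z ∉ A)
    (h : LinearIndepOn F v (insert y (insert z A) : Finset α)) :
    Submodule.span F {(Submodule.span F (v '' A)).mkQ (v y)} ≠
      Submodule.span F {(Submodule.span F (v '' A)).mkQ (v z)} := by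
  intro hEq
  have hm : (Submodule.span F (v '' A)).mkQ (v z) ∈
      Submodule.span F {(Submodule.span F (v '' A)).mkQ (v y)} := by
    rw [hEq]; exact Submodule.mem_span_singleton_self _
  rw [Submodule.mem_span_singleton] at hm
  obtain ⟨a, ha⟩ := hm
  rw [← map_smul, ← sub_eq_zero, ← map_sub, Submodule.mkQ_apply,
    Submodule.Quotient.mk_eq_zero] at ha
  have h' : LinearIndepOn F v (insert z (insert y (A : Set α))) := by
    have : (insert z (insert y (A : Set α))) =
      ((insert y (insert z A) : Finset α) : Set α) := by
      push_cast; exact Set.insert_comm _ _ _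
    rw [this]; exact h
  apply h'.notMem_span_of_insert (by simp [hyz.symm, hz])
  have e1 : v z = a • v y - (a • v y - v z) := by abel
  rw [e1]
  apply Submodule.sub_mem
  · exact Submodule.smul_mem _ _ (Submodule.subset_span ⟨y, by simp, rfl⟩)
  · exact Submodule.span_mono (Set.image_mono (Set.subset_insert _ _)) ha

lemma mkQ_ne {v : α → V} (A : Finset α) (y : α) (hy : y ∉ A)
    (h : LinearIndepOn F v (insert y A : Finset α)) :
    (Submodule.span F (v '' A)).mkQ (v y) ≠ 0 := by
  intro h0
  rw [Submodule.mkQ_apply, Submodule.Quotient.mk_eq_zero] at h0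
  rw [Finset.coe_insert] at h
  exact h.notMem_span_of_insert (by simpa using hy) h0

open Classical in
lemma classes_bound [FiniteDimensional F V] [Fintype F] {e : ℕ} {v : α → V}
    (hV : finrank F V = e + 3)
    (T C A : Finset α) (hT : GP F e v T) (hC : ∀ y ∈ C, y ∉ T ∧ GP F e v (insert y T))
    (hAT : A ⊆ T) (hA : A.card = e + 1) :
    (C.image (fun y => Submodule.span F {(Submodule.span F (v '' A)).mkQ (v y)})).card + T.card
      ≤ Fintype.card F + e + 2 := by
  set cls : α → Submodule F (V ⧸ (Submodule.span F (v '' (A : Set α)))) :=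
    (fun y => Submodule.span F {(Submodule.span F (v '' A)).mkQ (v y)}) with hcls
  have hTA : (T \ A).card + (e + 1) = T.card := by
    rw [← hA]; exact Finset.card_sdiff_add_card_eq_card hAT
  have hW : finrank F (V ⧸ (Submodule.span F (v '' (A : Set α)))) = 2 := by
    have h1 := Submodule.finrank_quotient_add_finrank (Submodule.span F (v '' (A : Set α)))
    have h2 : finrank F (Submodule.span F (v '' (A : Set α))) = e + 1 := by
      have hli : LinearIndependent F (fun x : A => v x) := hT A hAT (by omega)
      have := finrank_span_eq_card hli
      rw [Fintype.card_coe, hA] at this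
      rw [← this, Set.image_eq_range]
      rfl
    omega
  have hb : ((C ∪ (T \ A)).image cls).card ≤ Fintype.card F + 1 := card_image_span_le hW (C ∪ (T \ A))
    (fun y => (Submodule.span F (v '' A)).mkQ (v y)) (by
      intro y hy
      rw [mem_union, mem_sdiff] at hy
      rcases hy with hy | hy
      · apply mkQ_ne A y (fun h => (hC y hy).1 (hAT h))
        apply (hC y hy).2 _ (Finset.insert_subset_insert _ hAT)
        refine (Finset.card_insert_le _ _).trans (by omega)
      · apply mkQ_ne A y hy.2
        apply hT _ (Finset.insert_subset hy.1 hAT)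
        refine (Finset.card_insert_le _ _).trans (by omega))
  rw [Finset.image_union, Finset.card_union_of_disjoint, Finset.card_image_of_injOn (s := T \ A)] at hb
  · omega
  · intro x hx x' hx' hxx
    by_contra hne
    simp only [coe_sdiff, Set.mem_sdiff, mem_coe] at hx hx'
    refine span_ne A x x' hne hx'.2 ?_ hxx
    apply hT _ (Finset.insert_subset hx.1 (Finset.insert_subset hx'.1 hAT))
    have h1 := Finset.card_insert_le x (insert x' A)
    have h2 := Finset.card_insert_le x' A
    omega
  · rw [Finset.disjoint_left]
    intro S hS hS'
    rw [Finset.mem_image] at hS hS'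
    obtain ⟨y, hy, rfl⟩ := hS
    obtain ⟨x, hx, hxy⟩ := hS'
    rw [mem_sdiff] at hx
    refine span_ne A y x ?_ hx.2 ?_ hxy.symm
    · rintro rfl; exact (hC y hy).1 hx.1
    · apply (hC y hy).2 _ (Finset.insert_subset_insert _ (Finset.insert_subset hx.1 hAT))
      have h1 := Finset.card_insert_le y (insert x A)
      have h2 := Finset.card_insert_le x A
      omega

open Classical in
/-- Cauchy-Schwarz for classes. -/
lemma cs_classes {β : Type*} (C : Finset α) (f : α → β) :
    C.card ^ 2 ≤ (C.image f).card *
      (C.card + ∑ y ∈ C, (C.filter (fun z => z ≠ y ∧ f y = f z)).card) := by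
  have h1 : ∀ y ∈ C, (C.filter (fun z => f z = f y)).card =
      1 + (C.filter (fun z => z ≠ y ∧ f y = f z)).card := by
    intro y hy
    have : C.filter (fun z => f z = f y) =
      insert y (C.filter (fun z => z ≠ y ∧ f y = f z)) := by
      ext z
      simp only [mem_filter, mem_insert]
      by_cases h : z = y
      · subst h; simp [hy]
      · simp [h, eq_comm]
    rw [this, Finset.card_insert_of_notMem (by simp), add_comm]
  have h2 : C.card + ∑ y ∈ C, (C.filter (fun z => z ≠ y ∧ f y = f z)).card =
      ∑ b ∈ C.image f, (C.filter (fun z => f z = b)).card ^ 2 := by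
    have : C.card = ∑ y ∈ C, 1 := by simp
    nth_rw 1 [this]
    rw [← Finset.sum_add_distrib, ← Finset.sum_congr rfl h1,
      ← Finset.sum_fiberwise_of_maps_to (g := f) (t := C.image f)
        (fun x hx => Finset.mem_image_of_mem _ hx)]
    apply Finset.sum_congr rfl
    intro b _
    rw [sq]
    rw [Finset.sum_congr rfl (g := fun _ => (C.filter (fun z => f z = b)).card)]
    · simp
    · intro x hx
      rw [(mem_filter.1 hx).2]
  rw [h2]
  conv_lhs => rw [Finset.card_eq_sum_card_image f C]
  exact sq_sum_le_card_mul_sum_sq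

open Classical in
lemma exists_degree [FiniteDimensional F V] [Fintype F] {e : ℕ} {v : α → V}
    (hV : finrank F V = e + 3)
    (hv : ∀ y z, y ≠ z → LinearIndepOn F v ({y, z} : Set α))
    (T C : Finset α) (hT : GP F e v T) (hC : ∀ y ∈ C, y ∉ T ∧ GP F e v (insert y T))
    (hm : e + 1 ≤ T.card) (hne : C.Nonempty) 
    (_hE : (0:ℝ) ≤ C.card + T.card - (Fintype.card F + e + 2)) :
    ∃ y ∈ C, ((T.card : ℝ) - e) * (C.card + T.card - (Fintype.card F + e + 2)) ≤
      (Fintype.card F + 1) * (e + 1) *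
        ((C.filter (fun z => z ≠ y ∧ ¬ GP F e v (insert z (insert y T)))).card : ℝ) := by
  set q := Fintype.card F with hq
  set m := T.card with hmdef
  set n := C.card with hn
  set deg : α → ℕ := fun y =>
    (C.filter (fun z => z ≠ y ∧ ¬ GP F e v (insert z (insert y T)))).card with hdeg
  let bad : Finset α → α → α → Prop := fun A y z =>
    ¬ LinearIndepOn F v (insert y (insert z A) : Finset α)
  let S : Finset α → ℕ := fun A => ∑ y ∈ C, (C.filter (fun z => z ≠ y ∧ bad A y z)).card
  -- lower bound per A
  have hlow : ∀ A ∈ T.powersetCard (e + 1),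
      (n : ℝ) * (n + m - (q + e + 2)) ≤ (q + 1) * (S A : ℝ) := by
    intro A hA
    rw [mem_powersetCard] at hA
    have h1 := classes_bound hV T C A hT hC hA.1 hA.2
    set cls : α → Submodule F (V ⧸ (Submodule.span F (v '' (A : Set α)))) :=
      (fun y => Submodule.span F {(Submodule.span F (v '' A)).mkQ (v y)}) with hcls
    have h2 := cs_classes C cls
    have h3 : ∑ y ∈ C, (C.filter (fun z => z ≠ y ∧ cls y = cls z)).card ≤ S A := by
      apply Finset.sum_le_sum
      intro y hy
      apply Finset.card_le_card
      intro z hz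
      rw [mem_filter] at hz ⊢
      refine ⟨hz.1, hz.2.1, fun hli => ?_⟩
      exact span_ne A y z hz.2.1.symm (fun h => (hC z hz.1).1 (hA.1 h)) hli hz.2.2
    set κ := (C.image cls).card
    have h4 : n ^ 2 ≤ κ * (n + S A) := by
      refine h2.trans (Nat.mul_le_mul_left _ (Nat.add_le_add_left (le_of_eq_of_le ?_ h3) _))
      congr!
    have h4' : (n:ℝ) ^ 2 ≤ κ * (n + S A) := by exact_mod_cast h4
    have h1' : (κ:ℝ) + m ≤ q + e + 2 := by exact_mod_cast h1
    have hm' : (e:ℝ) + 1 ≤ m := by exact_mod_cast hm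
    have hn0 : (0:ℝ) ≤ n := Nat.cast_nonneg _
    have hS0 : (0:ℝ) ≤ S A := Nat.cast_nonneg _
    nlinarith [mul_le_mul_of_nonneg_right h1' hn0, mul_le_mul_of_nonneg_right h1' hS0,
      mul_le_mul_of_nonneg_right hm' hS0]
  have hsum : (m.choose (e+1) : ℝ) * ((n : ℝ) * (n + m - (q + e + 2))) ≤
      (q + 1) * ∑ A ∈ T.powersetCard (e + 1), (S A : ℝ) := by
    rw [Finset.mul_sum]
    have := Finset.card_nsmul_le_sum _ _ _ hlow
    rw [Finset.card_powersetCard, nsmul_eq_mul] at this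
    exact this
  have hup : ∑ A ∈ T.powersetCard (e + 1), S A ≤ ∑ y ∈ C, deg y * m.choose e := by
    simp only [S]
    rw [Finset.sum_comm]
    apply Finset.sum_le_sum
    intro y hy
    have : ∀ A ∈ T.powersetCard (e+1), (C.filter (fun z => z ≠ y ∧ bad A y z)).card =
        ∑ z ∈ C.filter (fun z => z ≠ y ∧ ¬ GP F e v (insert z (insert y T))),
          if bad A y z then 1 else 0 := by
      intro A hA
      rw [mem_powersetCard] at hA
      rw [← Finset.card_filter, Finset.filter_filter]
      congr 1
      apply Finset.filter_congr
      intro z hz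
      constructor
      · rintro ⟨h1, h2⟩
        refine ⟨⟨h1, fun hGP => h2 ?_⟩, h2⟩
        apply hGP
        · intro i hi
          simp only [mem_insert] at hi ⊢
          have := @hA.1 i
          tauto
        · have h1 := Finset.card_insert_le y (insert z A)
          have h2 := Finset.card_insert_le z A
          omega
      · rintro ⟨⟨h1, _⟩, h2⟩
        exact ⟨h1, h2⟩
    rw [Finset.sum_congr rfl this, Finset.sum_comm, hdeg, ← smul_eq_mul]
    apply Finset.sum_le_card_nsmul
    intro z hz
    rw [mem_filter] at hz
    rw [← Finset.card_filter]
    exact mult_bound hv T y z hz.2.1.symm (hC y hy).1 (hC y hy).2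
  by_contra hcon
  push Not at hcon
  have hlt := Finset.sum_lt_sum_of_nonempty hne hcon
  rw [Finset.sum_const, nsmul_eq_mul, ← Finset.mul_sum] at hlt
  have hch : (m.choose (e+1) : ℝ) * (e + 1) = m.choose e * (m - e) := by
    have := Nat.choose_succ_right_eq m e
    have h' : ((m - e : ℕ) : ℝ) = (m:ℝ) - e := Nat.cast_sub (by omega)
    rw [← h']
    exact_mod_cast this
  have hpos : (0:ℝ) < m.choose e := by exact_mod_cast Nat.choose_pos (by omega)
  have hup' : ∑ A ∈ T.powersetCard (e + 1), (S A : ℝ) ≤ (∑ y ∈ C, (deg y : ℝ)) * m.choose e := by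
    rw [Finset.sum_mul]; exact_mod_cast hup
  have h5 := mul_lt_mul_of_pos_right hlt hpos
  have h6 : ((q:ℝ) + 1) * (e+1) * ∑ A ∈ T.powersetCard (e + 1), (S A : ℝ) ≤
     (q + 1) * (e+1) * ((∑ y ∈ C, (deg y : ℝ)) * m.choose e) := by gcongr
  have h7 := mul_le_mul_of_nonneg_right hsum (by positivity : (0:ℝ) ≤ (e:ℝ) + 1)
  have h8 : (m.choose (e+1) : ℝ) * ((n : ℝ) * (n + m - (q + e + 2))) * (e+1) =
     (n:ℝ) * ((m - e) * (n + m - (q + e + 2))) * m.choose e := by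
    rw [show (m.choose (e+1) : ℝ) * ((n : ℝ) * (n + m - (q + e + 2))) * (e+1) = 
      ((m.choose (e+1) : ℝ) * (e+1)) * ((n : ℝ) * (n + m - (q + e + 2))) by ring, hch]
    ring
  linarith

open Classical in
lemma containers_rec {e : ℕ} {v : α → V} (B : ℕ → ℝ) (M K : ℕ)
    (hstep : ∀ T C : Finset α, GP F e v T → (∀ y ∈ C, y ∉ T ∧ GP F e v (insert y T)) →
      K < C.card + T.card → (C.card + T.card : ℝ) ≤ B T.card →
      T.card < M ∧ ∃ y ∈ C, (C.card + T.card : ℝ) -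
        ((C.filter (fun z => z ≠ y ∧ ¬ GP F e v (insert z (insert y T)))).card : ℝ)
          ≤ B (T.card + 1)) :
    ∀ (n R : ℕ) (T C : Finset α), C.card ≤ n → T.card + R = M → GP F e v T →
      (∀ y ∈ C, y ∉ T ∧ GP F e v (insert y T)) → (C.card + T.card : ℝ) ≤ B T.card →
      ∃ 𝒞 : Finset (Finset α), 𝒞.card ≤ (n + 1) ^ R ∧ (∀ X ∈ 𝒞, X.card ≤ K) ∧
        ∀ P, GP F e v P → T ⊆ P → P ⊆ T ∪ C → ∃ X ∈ 𝒞, P ⊆ X := by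
  have hsmall : ∀ (n R : ℕ) (T C : Finset α), C.card + T.card ≤ K →
      ∃ 𝒞 : Finset (Finset α), 𝒞.card ≤ (n + 1) ^ R ∧ (∀ X ∈ 𝒞, X.card ≤ K) ∧
        ∀ P, GP F e v P → T ⊆ P → P ⊆ T ∪ C → ∃ X ∈ 𝒞, P ⊆ X := by
    intro n R T C h
    refine ⟨{T ∪ C}, ?_, ?_, ?_⟩
    · rw [Finset.card_singleton]; exact Nat.one_le_pow _ _ (by omega)
    · intro X hX
      rw [Finset.mem_singleton] at hX
      subst hX
      have := Finset.card_union_le T C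
      omega
    · intro P _ _ h
      exact ⟨_, Finset.mem_singleton_self _, h⟩
  intro n
  induction n with
  | zero =>
    intro R T C hCn hR hT hC hB
    by_cases hK : C.card + T.card ≤ K
    · exact hsmall _ _ T C hK
    · obtain ⟨_, y, hy, _⟩ := hstep T C hT hC (by omega) hB
      have : 0 < C.card := Finset.card_pos.2 ⟨y, hy⟩
      omega
  | succ n ih =>
    intro R T C hCn hR hT hC hB
    by_cases hK : C.card + T.card ≤ K
    · exact hsmall _ _ T C hK
    obtain ⟨hM, y, hy, hyB⟩ := hstep T C hT hC (by omega) hB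
    obtain ⟨R, rfl⟩ : ∃ R', R = R' + 1 := ⟨R - 1, by omega⟩
    have hcpos : 0 < C.card := Finset.card_pos.2 ⟨y, hy⟩
    obtain ⟨𝒞₁, h1c, h1K, h1P⟩ := ih (R + 1) T (C.erase y)
      (by rw [Finset.card_erase_of_mem hy]; omega) hR hT
      (fun z hz => hC z (Finset.mem_of_mem_erase hz))
      (by
        refine le_trans ?_ hB
        gcongr
        exact Finset.erase_subset _ _)
    set C' := C.filter (fun z => z ≠ y ∧ GP F e v (insert z (insert y T))) with hC'
    have hpart : C'.card + (C.filter (fun z => z ≠ y ∧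
        ¬ GP F e v (insert z (insert y T)))).card + 1 = C.card := by
      have h1 := Finset.card_erase_add_one hy
      rw [← h1, ← Finset.card_filter_add_card_filter_not (s := C.erase y)
        (fun z => GP F e v (insert z (insert y T)))]
      congr 3
      · ext z; simp only [hC', mem_filter, mem_erase]; tauto
      · ext z; simp only [mem_filter, mem_erase]; tauto
    have hTc : (insert y T).card = T.card + 1 := Finset.card_insert_of_notMem (hC y hy).1
    obtain ⟨𝒞₂, h2c, h2K, h2P⟩ := ih R (insert y T) C' (by omega) (by omega) (hC y hy).2
      (by
        intro z hz
        rw [hC', mem_filter] at hz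
        refine ⟨?_, hz.2.2⟩
        rw [mem_insert, not_or]
        exact ⟨hz.2.1, (hC z hz.1).1⟩)
      (by
        rw [hTc]
        refine le_trans (le_of_eq ?_) hyB
        rw [← hpart]
        push_cast
        ring)
    refine ⟨𝒞₁ ∪ 𝒞₂, ?_, ?_, ?_⟩
    · calc (𝒞₁ ∪ 𝒞₂).card ≤ 𝒞₁.card + 𝒞₂.card := Finset.card_union_le _ _
        _ ≤ (n + 1) ^ (R + 1) + (n + 1) ^ R := Nat.add_le_add h1c h2c
        _ = (n + 1) ^ R * (n + 1 + 1) := by ring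
        _ ≤ (n + 1 + 1) ^ R * (n + 1 + 1) := by gcongr; omega
        _ = (n + 1 + 1) ^ (R + 1) := by ring
    · intro X hX
      rcases Finset.mem_union.1 hX with h | h
      · exact h1K X h
      · exact h2K X h
    · intro P hP hTP hPC
      by_cases hyP : y ∈ P
      · obtain ⟨X, hX, hPX⟩ := h2P P hP (Finset.insert_subset hyP hTP) (by
          intro z hz
          rw [mem_union, mem_insert]
          by_cases hzy : z = y
          · left; left; exact hzy
          by_cases hzT : z ∈ T
          · left; right; exact hzT
          right
          rw [hC', mem_filter]
          refine ⟨?_, hzy, ?_⟩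
          · have := hPC hz
            rw [mem_union] at this
            tauto
          · exact hP.mono (Finset.insert_subset hz (Finset.insert_subset hyP hTP)))
        exact ⟨X, Finset.mem_union_right _ hX, hPX⟩
      · obtain ⟨X, hX, hPX⟩ := h1P P hP hTP (by
          intro z hz
          have := hPC hz
          rw [mem_union] at this ⊢
          rw [mem_erase]
          have : z ≠ y := fun h => hyP (h ▸ hz)
          tauto)
        exact ⟨X, Finset.mem_union_left _ hX, hPX⟩

open Classical in
lemma containers_linear [FiniteDimensional F V] [Fintype F] [Fintype α] {e : ℕ} {v : α → V}
    (hV : finrank F V = e + 3) (hv0 : ∀ y, v y ≠ 0)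
    (hv : ∀ y z, y ≠ z → LinearIndepOn F v ({y, z} : Set α))
    (M : ℕ) (hM : 2 * e + 2 ≤ M)
    (hX : (Fintype.card α : ℝ) *
      Real.exp (-((M : ℝ) / (2 * (Fintype.card F + 1) * (e + 1)) * M)) ≤ 1) :
    ∃ 𝒞 : Finset (Finset α), 𝒞.card ≤ (Fintype.card α + 1) ^ (2 * M) ∧
      (∀ X ∈ 𝒞, X.card ≤ Fintype.card F + e + 3) ∧
        ∀ P, GP F e v P → ∃ X ∈ 𝒞, P ⊆ X := by
  set q := Fintype.card F with hq
  set δ : ℝ := (M : ℝ) / (2 * (q + 1) * (e + 1)) with hδ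
  have hδ0 : 0 ≤ δ := by positivity
  set B : ℕ → ℝ := fun m => q + e + 2 + Fintype.card α * Real.exp (-(δ * ((m - M : ℕ) : ℝ)))
    with hB
  have hrec := containers_rec (F := F) (e := e) (v := v) B (2 * M) (q + e + 3) (by
    intro T C hT hC hK hE
    have hne : C.Nonempty := by
      rw [Finset.nonempty_iff_ne_empty]
      rintro rfl
      simp only [Finset.card_empty, zero_add] at hK
      obtain ⟨A, hA, hAc⟩ := Finset.exists_subset_card_eq (s := T) (n := e + 1) (by omega)
      have := classes_bound hV T ∅ A hT (by simp) hA hAc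
      omega
    have hK' : (q:ℝ) + e + 3 < C.card + T.card := by exact_mod_cast hK
    constructor
    · by_contra hcon
      have h1 : B T.card ≤ q + e + 3 := by
        have : (Fintype.card α : ℝ) * Real.exp (-(δ * ((T.card - M : ℕ) : ℝ))) ≤
            (Fintype.card α : ℝ) * Real.exp (-(δ * M)) := by
          gcongr
          omega
        simp only [hB]
        linarith
      linarith
    · by_cases hmM : T.card < M
      · obtain ⟨y, hy⟩ := hne
        refine ⟨y, hy, ?_⟩
        have h1 : B (T.card + 1) = B T.card := by
          simp only [hB]
          rw [Nat.sub_eq_zero_of_le (by omega), Nat.sub_eq_zero_of_le (by omega)]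
        rw [h1]
        refine le_trans ?_ hE
        simp
      · obtain ⟨y, hy, hdeg⟩ := exists_degree hV hv T C hT hC (by omega) hne (by
          rw [← hq]; linarith)
        refine ⟨y, hy, ?_⟩
        rw [← hq] at hdeg
        set D : ℝ := ((C.filter (fun z => z ≠ y ∧
          ¬ GP F e v (insert z (insert y T)))).card : ℝ) with hD
        set E : ℝ := (C.card + T.card - (q + e + 2) : ℝ) with hEdef
        have hE0 : 0 ≤ E := by rw [hEdef]; linarith
        have h2 : δ * E ≤ D := by
          rw [hδ, div_mul_eq_mul_div, div_le_iff₀ (by positivity)]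
          have hm1 : (M : ℝ) ≤ 2 * ((T.card : ℝ) - e) := by
            have : M + 2 * e ≤ 2 * T.card := by omega
            have : (M:ℝ) + 2 * e ≤ 2 * T.card := by exact_mod_cast this
            linarith
          have := mul_le_mul_of_nonneg_right hm1 hE0
          linarith
        have h3 : E ≤ Fintype.card α * Real.exp (-(δ * ((T.card - M : ℕ) : ℝ))) := by
          rw [hEdef]; simp only [hB] at hE; linarith
        have h4 : E - D ≤ E * Real.exp (-δ) := by
          have := Real.add_one_le_exp (-δ)
          nlinarith
        have h5 : E * Real.exp (-δ) ≤
            Fintype.card α * Real.exp (-(δ * ((T.card + 1 - M : ℕ) : ℝ))) := by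
          have : ((T.card + 1 - M : ℕ) : ℝ) = ((T.card - M : ℕ) : ℝ) + 1 := by
            rw [← Nat.cast_succ]; congr 1; omega
          rw [this, show -(δ * (((T.card - M : ℕ) : ℝ) + 1)) =
            -(δ * ((T.card - M : ℕ) : ℝ)) + (-δ) by ring, Real.exp_add, ← mul_assoc]
          gcongr
        simp only [hB]
        linarith)
    (Fintype.card α) (2 * M) ∅ Finset.univ (by simp) (by simp)
    (by
      intro s hs _
      rw [Finset.subset_empty] at hs
      subst hs
      simp)
    (by
      intro y _
      refine ⟨by simp, ?_⟩
      intro s hs _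
      have : LinearIndepOn F v ({y} : Set α) := by
        rw [linearIndepOn_singleton_iff]; exact hv0 y
      refine this.mono ?_
      intro x hx
      simpa using hs hx)
    (by
      simp only [hB, Finset.card_univ, Finset.card_empty, Nat.zero_sub]
      simp
      positivity)
  obtain ⟨𝒞, h1, h2, h3⟩ := hrec
  exact ⟨𝒞, h1, h2, fun P hP => h3 P hP (by simp) (by simp)⟩

end Linear

section Affine

variable {F : Type} [Field F] {d : ℕ}

/-- The homogenization of a point. -/
def lift (F : Type) [Field F] (d : ℕ) (x : Fin d → F) : F × (Fin d → F) := (1, x)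

lemma lift_pair (y z : Fin d → F) (hyz : y ≠ z) :
    LinearIndepOn F (lift F d) ({y, z} : Set (Fin d → F)) := by
  classical
  have h3 : ({y, z} : Set (Fin d → F)) = (({y, z} : Finset (Fin d → F)) : Set _) := by simp
  rw [h3, linearIndepOn_finset_iff]
  intro g hg
  rw [Finset.sum_pair hyz] at hg
  have h1 : g y + g z = 0 := by simpa [lift] using congrArg Prod.fst hg
  have h2 : g y • y + g z • z = 0 := by simpa [lift] using congrArg Prod.snd hg
  have h4 : g z = - g y := by linear_combination h1
  rw [h4, neg_smul, ← sub_eq_add_neg, ← smul_sub, smul_eq_zero, sub_eq_zero] at h2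
  have h5 : g y = 0 := by tauto
  intro i hi
  simp at hi
  rcases hi with rfl | rfl
  · exact h5
  · rw [h4, h5, neg_zero]

lemma lift_indep (s : Finset (Fin d → F))
    (h : AffineIndependent F ((↑) : s → (Fin d → F))) :
    LinearIndepOn F (lift F d) (s : Set (Fin d → F)) := by
  classical
  rw [affineIndependent_iff] at h
  rw [linearIndepOn_finset_iff]
  intro g hg i hi
  have h1 : ∑ x ∈ s, g x = 0 := by
    simpa [lift, Prod.fst_sum] using congrArg Prod.fst hg
  have h2 : ∑ x ∈ s, g x • x = 0 := by
    simpa [lift, Prod.snd_sum] using congrArg Prod.snd hg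
  refine h Finset.univ (fun x => g x) ?_ ?_ ⟨i, hi⟩ (Finset.mem_univ _)
  · rw [← h1]; exact Finset.sum_coe_sort s g
  · rw [← h2]; exact Finset.sum_coe_sort s (fun x => g x • x)

end Affine

end GenPosContainers

set_option maxHeartbeats 1000000 in
/-- The second container theorem for general position sets in `𝔽_q^d`. -/
theorem container_theorem_Fqd (d : ℕ) (hd : 2 ≤ d) :
    ∃ c : ℝ, 0 < c ∧ ∃ Q : ℕ, ∀ q : ℕ, Q ≤ q → IsPrimePow q →
      ∀ (F : Type) [Field F] [Fintype F], Fintype.card F = q →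
        ∀ k : ℝ, 1 + c * (q : ℝ) ^ (-(1 : ℝ) / (d : ℝ)) ≤ k →
          ∃ 𝒞 : Finset (Finset (Fin d → F)),
            (∀ P : Set (Fin d → F), IsGenPos F d P → ∃ C ∈ 𝒞, P ⊆ ↑C) ∧
            (∀ C ∈ 𝒞, (C.card : ℝ) ≤ k * q) ∧
            ((𝒞.card : ℝ) ≤ (2 : ℝ) ^
              (c * ((q : ℝ) / min (k - 1) 1) ^ ((d : ℝ) / ((d : ℝ) + 1)) *
                (Real.logb 2 q) ^ 2)) := by
  classical
  obtain ⟨e, rfl⟩ : ∃ e, d = e + 2 := ⟨d - 2, by omega⟩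
  set d : ℕ := e + 2 with hddef
  have hd0 : (2:ℝ) ≤ d := by exact_mod_cast hd
  have hde : (d:ℝ) = e + 2 := by rw [hddef]; push_cast; ring
  refine ⟨16 * d * (d + 1), by positivity, 2 + d, ?_⟩
  intro q hqQ _ F _ _ hFq k hk
  have hq2 : (2:ℝ) ≤ q := by exact_mod_cast (by omega : 2 ≤ q)
  have hqd : (d:ℝ) ≤ q := by exact_mod_cast (by omega : d ≤ q)
  have hq1 : (1:ℝ) ≤ q := by linarith
  have hq0 : (0:ℝ) < q := by linarith
  -- the logarithm
  set l : ℝ := Real.logb 2 q with hl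
  have hl1 : 1 ≤ l := by
    rw [hl, Real.le_logb_iff_rpow_le (by norm_num) hq0]; simpa using hq2
  have hlog : Real.log q ≤ l := by
    rw [hl, Real.logb, le_div_iff₀ (Real.log_pos (by norm_num))]
    have h1 : Real.log 2 ≤ 1 := by
      have := Real.log_two_lt_d9; linarith
    have h2 : 0 ≤ Real.log q := Real.log_nonneg hq1
    nlinarith
  have hsq : Real.sqrt q ^ 2 = q := Real.sq_sqrt hq0.le
  have hsq1 : 1 ≤ Real.sqrt q := Real.one_le_sqrt.2 hq1
  have hsl : 1 ≤ Real.sqrt q * l := by nlinarith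
  -- the fingerprint size
  set M : ℕ := ⌈2 * d * (Real.sqrt q * l)⌉₊ with hM
  have hM1 : 2 * d * (Real.sqrt q * l) ≤ M := Nat.le_ceil _
  have hM2 : (M:ℝ) ≤ 4 * d * (Real.sqrt q * l) := by
    have := Nat.ceil_lt_add_one (a := 2 * d * (Real.sqrt q * l)) (by positivity)
    rw [← hM] at this
    nlinarith
  have hM3 : 2 * d ≤ M := by
    have : (2:ℝ) * d ≤ M := by nlinarith
    exact_mod_cast this
  have hcardα : Fintype.card (Fin d → F) = q ^ d := by simp [hFq]
  obtain ⟨𝒞, h1, h2, h3⟩ := GenPosContainers.containers_linear (F := F) (e := e)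
    (v := GenPosContainers.lift F d)
    (by simp [hddef]; omega) (by intro y h; simpa [GenPosContainers.lift] using congrArg Prod.fst h)
    GenPosContainers.lift_pair M (by omega) (by
      rw [hcardα, hFq]
      have hx : Real.log ((q:ℝ) ^ d) ≤ (M:ℝ) / (2 * (q + 1) * (e + 1)) * M := by
        rw [Real.log_pow, div_mul_eq_mul_div, le_div_iff₀ (by positivity)]
        have ha : (2 * d * (Real.sqrt q * l)) ^ 2 ≤ (M:ℝ) ^ 2 := by gcongr
        have hb : (2 * d * (Real.sqrt q * l)) ^ 2 = 4 * d ^ 2 * q * l ^ 2 := by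
          rw [mul_pow, mul_pow, mul_pow, hsq]; ring
        have hc : (d:ℝ) * Real.log q * (2 * (q + 1) * (e + 1)) ≤ d * l ^ 2 * (2 * (2 * q) * d) := by
          have : Real.log q ≤ l ^ 2 := by nlinarith
          have : 0 ≤ Real.log q := Real.log_nonneg hq1
          gcongr
          · linarith
          · linarith
        nlinarith
      have hy : (q:ℝ) ^ d ≤ Real.exp ((M:ℝ) / (2 * (q + 1) * (e + 1)) * M) := by
        rw [← Real.log_le_iff_le_exp (by positivity)]; exact hx
      push_cast
      rw [Real.exp_neg, ← div_eq_mul_inv, div_le_one (Real.exp_pos _)]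
      exact hy)
  -- `k q` is at least `q + d + 1`
  have hk2 : (q:ℝ) + d + 1 ≤ k * q := by
    have ha : (q:ℝ)⁻¹ ≤ (q:ℝ) ^ (-(1:ℝ) / d) := by
      rw [← Real.rpow_neg_one]
      apply Real.rpow_le_rpow_of_exponent_le hq1
      rw [le_div_iff₀ (by linarith)]
      linarith
    have hb : 1 + (16 * d * (d + 1)) * (q:ℝ)⁻¹ ≤ k := by
      refine le_trans ?_ hk
      gcongr
    have hc := mul_le_mul_of_nonneg_right hb hq0.le
    have he : (1 + (16 * d * (d + 1)) * (q:ℝ)⁻¹) * q = q + 16 * d * (d + 1) := by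
      field_simp
    rw [he] at hc
    nlinarith
  have hk1 : 0 < k - 1 := by
    have : 0 < (16 * d * (d + 1)) * (q:ℝ) ^ (-(1:ℝ) / d) := by positivity
    linarith
  set 𝒮 : Finset (Finset (Fin d → F)) :=
    (Finset.univ : Finset (Fin d → (Fin d → F))).image (fun f => Finset.univ.image f) with h𝒮
  have h𝒮c : 𝒮.card ≤ (q ^ d) ^ d := by
    refine Finset.card_image_le.trans ?_
    simp [hFq]
  refine ⟨𝒞 ∪ 𝒮, ?_, ?_, ?_⟩
  · intro P hP
    have hfin : P.Finite := Set.toFinite P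
    obtain ⟨P, rfl⟩ : ∃ P' : Finset (Fin d → F), P = ↑P' := ⟨hfin.toFinset, by simp⟩
    by_cases hc : P.card ≤ d
    · by_cases hne : P.Nonempty
      · have : Nonempty P := hne.to_subtype
        obtain ⟨g, hg⟩ : ∃ g : Fin d → P, Function.Surjective g := by
          have : Fintype.card P ≤ Fintype.card (Fin d) := by simpa using hc
          obtain ⟨i⟩ := Function.Embedding.nonempty_of_card_le this
          exact ⟨Function.invFun i, Function.invFun_surjective i.injective⟩
        refine ⟨Finset.univ.image (fun j => (g j : Fin d → F)), Finset.mem_union_right _ ?_, ?_⟩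
        · exact Finset.mem_image.2 ⟨_, Finset.mem_univ _, rfl⟩
        · intro x hx
          obtain ⟨j, hj⟩ := hg ⟨x, hx⟩
          rw [Finset.mem_coe, Finset.mem_image]
          exact ⟨j, Finset.mem_univ _, by rw [hj]⟩
      · rw [Finset.not_nonempty_iff_eq_empty] at hne
        subst hne
        refine ⟨(Finset.univ : Finset (Fin d)).image (fun _ => 0), Finset.mem_union_right _ ?_, by simp⟩
        exact Finset.mem_image.2 ⟨_, Finset.mem_univ _, rfl⟩
    · obtain ⟨X, hX, hPX⟩ := h3 P (by
        intro s hs hsc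
        obtain ⟨t, hst, htP, htc⟩ := Finset.exists_subsuperset_card_eq hs
          (n := d + 1) (by omega) (by omega)
        exact (GenPosContainers.lift_indep t (hP t (by exact_mod_cast htP) htc)).mono
          (by exact_mod_cast hst))
      exact ⟨X, Finset.mem_union_left _ hX, by exact_mod_cast hPX⟩
  · intro X hX
    refine le_trans ?_ hk2
    rcases Finset.mem_union.1 hX with h | h
    · have := h2 X h
      rw [hFq] at this
      have : X.card ≤ q + d + 1 := by omega
      exact_mod_cast this
    · rw [h𝒮, Finset.mem_image] at h
      obtain ⟨f, _, rfl⟩ := h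
      have h4 : (Finset.univ.image f).card ≤ d := by
        refine Finset.card_image_le.trans (by simp)
      have : (Finset.univ.image f).card ≤ q + d + 1 := by omega
      exact_mod_cast this
  · have hcount : (𝒞 ∪ 𝒮).card ≤ 2 * (q ^ (d + 1)) ^ (2 * M) := by
      have hq2' : 2 ≤ q := by omega
      have hone : 1 ≤ q ^ d := Nat.one_le_pow _ _ (by omega)
      have hqq : q ^ d + 1 ≤ q ^ (d + 1) := by
        have hps : q ^ (d + 1) = q ^ d * q := pow_succ q d
        have : q ^ d * 2 ≤ q ^ d * q := Nat.mul_le_mul_left _ hq2'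
        omega
      have h5 : 𝒞.card ≤ (q ^ (d + 1)) ^ (2 * M) := by
        refine h1.trans ?_
        rw [hcardα]
        exact Nat.pow_le_pow_left hqq _
      have h6 : 𝒮.card ≤ (q ^ (d + 1)) ^ (2 * M) := by
        refine h𝒮c.trans ?_
        refine (Nat.pow_le_pow_left (by omega : q ^ d ≤ q ^ (d + 1)) _).trans ?_
        exact Nat.pow_le_pow_right (by omega) (by omega)
      have := Finset.card_union_le 𝒞 𝒮
      omega
    have hcount' : ((𝒞 ∪ 𝒮).card : ℝ) ≤ 2 * ((q:ℝ) ^ (d + 1)) ^ (2 * M) := by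
      exact_mod_cast hcount
    have hqpow : (q:ℝ) = 2 ^ l := by
      rw [hl, Real.rpow_logb (by norm_num) (by norm_num) hq0]
    have hrw : 2 * ((q:ℝ) ^ (d + 1)) ^ (2 * M) = (2:ℝ) ^ (1 + l * ((d + 1) * (2 * M))) := by
      rw [Real.rpow_add (by norm_num), Real.rpow_one, Real.rpow_mul (by norm_num), ← hqpow,
        ← pow_mul, ← Real.rpow_natCast]
      push_cast
      rfl
    rw [hrw] at hcount'
    refine hcount'.trans ?_
    apply Real.rpow_le_rpow_of_exponent_le (by norm_num)
    set Y : ℝ := ((q:ℝ) / min (k - 1) 1) ^ ((d:ℝ) / (d + 1)) with hY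
    have hYs : Real.sqrt q ≤ Y := by
      have hmin0 : 0 < min (k - 1) 1 := lt_min hk1 one_pos
      have hmin1 : min (k - 1) 1 ≤ 1 := min_le_right _ _
      have ha : (q:ℝ) ≤ q / min (k - 1) 1 := by
        rw [le_div_iff₀ hmin0]; nlinarith
      rw [Real.sqrt_eq_rpow, hY]
      calc (q:ℝ) ^ ((1:ℝ) / 2) ≤ (q:ℝ) ^ ((d:ℝ) / (d + 1)) := by
            apply Real.rpow_le_rpow_of_exponent_le hq1
            rw [div_le_div_iff₀ (by norm_num) (by linarith)]
            linarith
        _ ≤ _ := by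
            apply Real.rpow_le_rpow hq0.le ha
            positivity
    have hb : 1 + l * ((d + 1) * (2 * M)) ≤ 16 * d * (d + 1) * (Real.sqrt q * l ^ 2) := by
      have h7 : l * ((d + 1) * (2 * M)) ≤
          l * ((d + 1) * (2 * (4 * d * (Real.sqrt q * l)))) := by gcongr
      have h8 : 1 ≤ Real.sqrt q * l ^ 2 := by
        have := one_le_mul_of_one_le_of_one_le hsl hl1
        calc 1 ≤ Real.sqrt q * l * l := this
          _ = _ := by ring
      have h9 : (1:ℝ) ≤ 8 * d * (d + 1) := by nlinarith
      have h10 := one_le_mul_of_one_le_of_one_le h9 h8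
      have h11 : l * (((d:ℝ) + 1) * (2 * (4 * d * (Real.sqrt q * l)))) =
          8 * d * (d + 1) * (Real.sqrt q * l ^ 2) := by ring
      linarith
    calc _ ≤ 16 * d * (d + 1) * (Real.sqrt q * l ^ 2) := hb
      _ ≤ 16 * d * (d + 1) * (Y * l ^ 2) := by gcongr
      _ = _ := by ring
end

section
/- For every integer d ≥ 2 and every ε > 0 there exists a threshold Q such that for every prime power q ≥ Q, the number of subsets of 𝔽_q^d that are in general position is at most 2^{q + q^{2d/(2d+1) + ε}}. -/
open Finset in
lemma gp_kw {α : Type*} [DecidableEq α] (rel : α → α → Prop) (M : ℕ) (β : ℝ) (V : Finset α)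
    [DecidableRel rel]
    (h : ∀ S ⊆ V, M < S.card → ∃ v ∈ S, β * S.card ≤ (S.filter (fun y => rel v y)).card) :
    ∀ (S : Finset α) (k : ℕ), S ⊆ V → (S.card : ℝ) * Real.exp (-(β * k)) ≤ M →
      (S.powerset.filter (fun I => ∀ x ∈ I, ∀ y ∈ I, ¬ rel x y)).card ≤ 2 ^ M * (S.card + 1) ^ k := by
  intro S
  induction S using Finset.strongInduction with
  | H S ih =>
  intro k hSV hk
  by_cases hM : S.card ≤ M
  · calc _ ≤ S.powerset.card := Finset.card_filter_le _ _
      _ = 2 ^ S.card := Finset.card_powerset S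
      _ ≤ 2 ^ M := Nat.pow_le_pow_right (by norm_num) hM
      _ ≤ _ := Nat.le_mul_of_pos_right _ (by positivity)
  · push Not at hM
    obtain ⟨v, hv, hdeg⟩ := h S hSV hM
    cases k with
    | zero =>
      exfalso
      simp at hk
      omega
    | succ k =>
      set S1 := S.erase v with hS1
      set S2 := (S.filter (fun y => ¬ rel v y)).erase v with hS2
      have h1s : S1 ⊂ S := Finset.erase_ssubset hv
      have h2s' : S2 ⊆ S1 := by
        intro a ha
        simp [hS1, hS2] at ha ⊢
        tauto
      have h2s : S2 ⊂ S := lt_of_le_of_lt h2s' h1s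
      have e1 := ih S1 h1s (k+1) (h1s.1.trans hSV) (by
        refine le_trans ?_ hk
        gcongr)
      have e2 := ih S2 h2s k (h2s.1.trans hSV) (by
        refine le_trans ?_ hk
        have hc : (S2.card : ℝ) ≤ (1 - β) * S.card := by
          have a1 : S2.card ≤ (S.filter (fun y => ¬ rel v y)).card :=
            Finset.card_le_card (Finset.erase_subset _ _)
          have a2 := Finset.card_filter_add_card_filter_not (s := S) (fun y => rel v y)
          have a3 : (S2.card : ℝ) + ((S.filter (fun y => rel v y)).card : ℝ) ≤ S.card := by
            exact_mod_cast (by omega)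
          linarith
        have hexp : (1 - β) ≤ Real.exp (-β) := by
          have := Real.add_one_le_exp (-β)
          linarith
        calc (S2.card : ℝ) * Real.exp (-(β * k)) ≤ (Real.exp (-β) * S.card) * Real.exp (-(β * k)) := by
              gcongr
              exact hc.trans (by gcongr)
          _ = S.card * (Real.exp (-β) * Real.exp (-(β * k))) := by ring
          _ = _ := by
              rw [← Real.exp_add]
              congr 2
              push_cast
              ring)
      have hsub : (S.powerset.filter (fun I => ∀ x ∈ I, ∀ y ∈ I, ¬ rel x y)) ⊆
          (S1.powerset.filter (fun I => ∀ x ∈ I, ∀ y ∈ I, ¬ rel x y)) ∪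
          (S2.powerset.filter (fun I => ∀ x ∈ I, ∀ y ∈ I, ¬ rel x y)).image (insert v) := by
        intro I hI
        simp only [Finset.mem_filter, Finset.mem_powerset, Finset.mem_union, Finset.mem_image] at hI ⊢
        obtain ⟨hIS, hI⟩ := hI
        by_cases hvI : v ∈ I
        · right
          refine ⟨I.erase v, ⟨?_, ?_⟩, Finset.insert_erase hvI⟩
          · intro a ha
            have ha' := Finset.mem_erase.1 ha
            simp only [hS2, Finset.mem_erase, Finset.mem_filter]
            exact ⟨ha'.1, hIS ha'.2, hI v hvI a ha'.2⟩
          · intro x hx y hy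
            exact hI x (Finset.mem_of_mem_erase hx) y (Finset.mem_of_mem_erase hy)
        · left
          refine ⟨?_, hI⟩
          intro a ha
          simp only [hS1, Finset.mem_erase]
          exact ⟨fun h => hvI (h ▸ ha), hIS ha⟩
      have hc1 : S1.card + 1 = S.card := Finset.card_erase_add_one hv
      have hc2 : S2.card ≤ S.card := Finset.card_le_card h2s.1
      calc _ ≤ _ := Finset.card_le_card hsub
        _ ≤ _ := Finset.card_union_le _ _
        _ ≤ 2 ^ M * (S1.card + 1) ^ (k+1) + 2 ^ M * (S2.card + 1) ^ k :=
            add_le_add e1 (Finset.card_image_le.trans e2)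
        _ ≤ 2 ^ M * (S.card * (S.card + 1) ^ k) + 2 ^ M * (S.card + 1) ^ k := by
            rw [hc1, pow_succ']
            gcongr
            omega
        _ = _ := by ring

/-- The lift to the affine chart. -/
def gpHat (F : Type*) [Field F] (d : ℕ) (x : Fin d → F) : F × (Fin d → F) := (1, x)

lemma gp_hat_li {F : Type*} [Field F] {d : ℕ} {A : Finset (Fin d → F)}
    (h : AffineIndependent F ((↑) : A → (Fin d → F))) :
    LinearIndepOn F (gpHat F d) (A : Set (Fin d → F)) := by
  rw [affineIndependent_iff] at h
  unfold LinearIndepOn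
  rw [linearIndependent_iff']
  intro s g hg i hi
  have h1 := congrArg Prod.fst hg
  have h2 := congrArg Prod.snd hg
  simp only [Prod.fst_sum, Prod.snd_sum, gpHat, Prod.smul_fst, Prod.smul_snd, smul_eq_mul, mul_one,
    Prod.fst_zero, Prod.snd_zero] at h1 h2
  exact h s g h1 h2 i hi

lemma gp_li {F : Type*} [Field F] {d : ℕ} {Z : Finset (Fin d → F)} (hZ : IsGenPos F d ↑Z)
    (hc : d + 1 ≤ Z.card) {A : Finset (Fin d → F)} (hA : A ⊆ Z) (hAc : A.card ≤ d + 1) :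
    LinearIndepOn F (gpHat F d) (A : Set (Fin d → F)) := by
  obtain ⟨B, hAB, hBZ, hB⟩ := Finset.exists_subsuperset_card_eq hA hAc hc
  exact (gp_hat_li (hZ B (by exact_mod_cast hBZ) hB)).mono (by exact_mod_cast hAB)

lemma gp_nm {F : Type*} [Field F] {d : ℕ} {Z : Finset (Fin d → F)} (hZ : IsGenPos F d ↑Z)
    (hc : d + 1 ≤ Z.card) {A : Finset (Fin d → F)} (hA : A ⊆ Z) (hAc : A.card ≤ d)
    {z : Fin d → F} (hz : z ∈ Z) (hzA : z ∉ A) :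
    gpHat F d z ∉ Submodule.span F (gpHat F d '' (A : Set (Fin d → F))) := by
  classical
  have := gp_li hZ hc (A := insert z A) (Finset.insert_subset hz hA)
    ((Finset.card_insert_le _ _).trans (by omega))
  rw [Finset.coe_insert, linearIndepOn_insert (by simpa using hzA)] at this
  exact this.2

open Classical in
lemma gp_mu {F W : Type*} [Field F] [AddCommGroup W] [Module F W] (s : ℕ) (x y : W)
    (hy : y ∉ Submodule.span F {x}) : ∀ (k : ℕ) (p : Fin k → Fin s → W)
    (_ : ∀ (j : Fin k) (r : Fin k → Fin s) (b : Fin s), b ≠ r j →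
      p j b ∉ Submodule.span F (insert x ((fun i => p i (r i)) '' {i | i ≤ j}))),
    s * (Finset.univ.filter (fun r : Fin k → Fin s =>
      y ∈ Submodule.span F (insert x (Set.range (fun i => p i (r i)))))).card ≤ k * s ^ k := by
  intro k
  induction k with
  | zero =>
    intro p _
    rw [Finset.filter_false_of_mem]
    · simp
    · intro r _
      simpa using hy
  | succ k ih =>
    intro p H
    have ih' := ih (fun i => p i.castSucc) (by
      intro j r b hb
      have := H j.castSucc (Fin.snoc r b : Fin (k+1) → Fin s) b (by simpa using hb)
      intro hmem
      apply this
      refine Submodule.span_mono ?_ hmem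
      apply Set.insert_subset_insert
      rintro _ ⟨i, hi, rfl⟩
      exact ⟨i.castSucc, by simpa using hi, by simp⟩)
    set A := (Finset.univ.filter (fun r : Fin k → Fin s =>
      y ∈ Submodule.span F (insert x (Set.range (fun i => p i.castSucc (r i)))))) with hA
    set B := (Finset.univ.filter (fun r : Fin (k+1) → Fin s =>
      y ∈ Submodule.span F (insert x (Set.range (fun i => p i (r i)))))) with hB
    have hr : ∀ r : Fin (k+1) → Fin s, (insert x (Set.range (fun i => p i (r i)))) =
        insert (p (Fin.last k) (r (Fin.last k)))
          (insert x (Set.range (fun i : Fin k => p i.castSucc (Fin.init r i)))) := by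
      intro r
      ext w
      simp only [Set.mem_insert_iff, Set.mem_range, Fin.exists_fin_succ', Fin.init]
      constructor
      · rintro (h | h | h)
        · exact Or.inr (Or.inl h)
        · exact Or.inr (Or.inr h)
        · exact Or.inl h.symm
      · rintro (h | h | h)
        · exact Or.inr (Or.inr h.symm)
        · exact Or.inl h
        · exact Or.inr (Or.inl h)
    have c1 : (B.filter (fun r => (Fin.init r : Fin k → Fin s) ∈ A)).card ≤ A.card * s := by
      have : A.card * s = (A ×ˢ (Finset.univ : Finset (Fin s))).card := by simp
      rw [this]
      apply Finset.card_le_card_of_injOn (fun r => ((Fin.init r : Fin k → Fin s), r (Fin.last k)))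
      · intro r hr
        have := (Finset.mem_filter.1 hr).2
        simpa using this
      · intro r _ r' _ he
        simp only [Prod.mk.injEq] at he
        rw [← Fin.snoc_init_self r, ← Fin.snoc_init_self r', he.1, he.2]
    have c2 : (B.filter (fun r => ¬ (Fin.init r : Fin k → Fin s) ∈ A)).card ≤ s ^ k := by
      have : s ^ k = (Finset.univ : Finset (Fin k → Fin s)).card := by simp
      rw [this]
      apply Finset.card_le_card_of_injOn (fun r => (Fin.init r : Fin k → Fin s))
      · intro r _; simp
      · intro r h1 r' h2 he
        simp only at he
        by_contra hne
        have hl : r (Fin.last k) ≠ r' (Fin.last k) := by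
          intro h
          apply hne
          rw [← Fin.snoc_init_self r, ← Fin.snoc_init_self r', he, h]
        have h1' := Finset.mem_filter.1 h1
        have h2' := Finset.mem_filter.1 h2
        have m1 : y ∈ Submodule.span F (insert x (Set.range (fun i => p i (r i)))) :=
          (Finset.mem_filter.1 h1'.1).2
        have m2 : y ∈ Submodule.span F (insert x (Set.range (fun i => p i (r' i)))) :=
          (Finset.mem_filter.1 h2'.1).2
        have m3 : y ∉ Submodule.span F
            (insert x (Set.range (fun i : Fin k => p i.castSucc (Fin.init r i)))) := by
          have := h1'.2
          simpa [hA] using this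
        rw [hr] at m1
        have m4 := mem_span_insert_exchange m1 m3
        apply H (Fin.last k) r' (r (Fin.last k)) hl
        have hu : {i : Fin (k+1) | i ≤ Fin.last k} = Set.univ := by
          ext i; simp [Fin.le_last]
        rw [hu, Set.image_univ]
        refine (Submodule.span_le.2 ?_) m4
        apply Set.insert_subset m2
        rw [he, hr r']
        exact (Set.subset_insert _ _).trans Submodule.subset_span
    have c3 := Finset.card_filter_add_card_filter_not (s := B)
      (fun r => (Fin.init r : Fin k → Fin s) ∈ A)
    calc s * B.card ≤ s * (A.card * s + s ^ k) := by
          gcongr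
          omega
      _ = (s * A.card) * s + s ^ (k+1) := by ring
      _ ≤ (k * s ^ k) * s + s ^ (k+1) := by gcongr
      _ = (k+1) * s ^ (k+1) := by ring

lemma gp_colour {F W : Type*} [Field F] [AddCommGroup W] [Module F W] [FiniteDimensional F W]
    (U : Submodule F W) (hU : Module.finrank F (W ⧸ U) = 2) :
    ∃ c : W → Option F, ∀ x y, x ∉ U → c x = c y → ∃ l : F, y - l • x ∈ U := by
  classical
  let b := Module.finBasisOfFinrankEq F (W ⧸ U) hU
  let f : W → Fin 2 → F := fun x => b.equivFun (U.mkQ x)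
  have hf : ∀ x y (l : F), (∀ i, f y i = l * f x i) → y - l • x ∈ U := by
    intro x y l h
    have : b.equivFun (U.mkQ (y - l • x)) = 0 := by
      ext i
      have := h i
      simp only [f] at this
      simp only [map_sub, map_smul, Pi.sub_apply, Pi.smul_apply, smul_eq_mul, this]
      simp
    rw [LinearEquiv.map_eq_zero_iff] at this
    rwa [Submodule.mkQ_apply, Submodule.Quotient.mk_eq_zero] at this
  refine ⟨fun x => if f x 0 = 0 then none else some (f x 1 / f x 0), ?_⟩
  intro x y hx hc
  by_cases h0 : f x 0 = 0
  · have hy0 : f y 0 = 0 := by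
      by_contra h
      simp [h0, h] at hc
    have h1 : f x 1 ≠ 0 := by
      intro h1
      apply hx
      have := hf 0 x 0 (by
        intro i
        fin_cases i <;> simp [h0, h1])
      simpa using this
    refine ⟨f y 1 / f x 1, hf _ _ _ ?_⟩
    intro i
    fin_cases i
    · simp [h0, hy0]
    · simp [h1]
  · have hy0 : f y 0 ≠ 0 := by
      intro h
      simp [h0, h] at hc
    simp only [h0, hy0, if_false, Option.some.injEq] at hc
    refine ⟨f y 0 / f x 0, hf _ _ _ ?_⟩
    intro i
    fin_cases i
    · simp [h0]
    · field_simp at hc ⊢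
      simp
      linear_combination -hc

open Classical in
lemma gp_cs {α F : Type*} [Fintype F] (S : Finset α) (c : α → Option F) :
    S.card ^ 2 ≤ (Fintype.card F + 1) *
      ∑ x ∈ S, (S.filter (fun y => c x = c y)).card := by
  have h1 : S.card = ∑ b : Option F, (S.filter (fun y => c y = b)).card :=
    Finset.card_eq_sum_card_fiberwise (fun _ _ => by simp)
  have h2 : ∑ x ∈ S, (S.filter (fun y => c x = c y)).card
      = ∑ b : Option F, (S.filter (fun y => c y = b)).card ^ 2 := by
    rw [← Finset.sum_fiberwise (s := S) (g := c)]
    apply Finset.sum_congr rfl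
    intro b _
    rw [sq, ← smul_eq_mul, ← Finset.sum_const]
    apply Finset.sum_congr rfl
    intro x hx
    have := (Finset.mem_filter.1 hx).2
    congr 1
    ext y
    simp [this, eq_comm]
  rw [h2]
  conv_lhs => rw [h1]
  have := sq_sum_le_card_mul_sum_sq (s := (Finset.univ : Finset (Option F)))
    (f := fun b => (S.filter (fun y => c y = b)).card)
  simpa using this

lemma gp_hat_ne {F : Type*} [Field F] {d : ℕ} {x y : Fin d → F} (h : y ≠ x) :
    gpHat F d y ∉ Submodule.span F {gpHat F d x} := by
  intro hm
  obtain ⟨l, hl⟩ := Submodule.mem_span_singleton.1 hm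
  have h1 := congrArg Prod.fst hl
  have h2 := congrArg Prod.snd hl
  simp only [gpHat, Prod.smul_fst, Prod.smul_snd, smul_eq_mul, mul_one] at h1 h2
  apply h
  rw [← h2, h1, one_smul]

/-- The forbidden relation given by the configuration `p`. -/
def gpRel {F : Type*} [Field F] {k s : ℕ} (p : Fin k × Fin s → (Fin (k+1) → F))
    (x y : Fin (k+1) → F) : Prop :=
  y ≠ x ∧ ∃ r : Fin k → Fin s, gpHat F (k+1) y ∈
    Submodule.span F (insert (gpHat F (k+1) x) (Set.range (fun i => gpHat F (k+1) (p (i, r i)))))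

/-- The allowed points for the configuration `p`. -/
def gpOK {F : Type*} [Field F] {k s : ℕ} (p : Fin k × Fin s → (Fin (k+1) → F))
    (x : Fin (k+1) → F) : Prop :=
  x ∉ Set.range p ∧ IsGenPos F (k+1) (insert x (Set.range p))

open Classical in
lemma gp_ok_Z {F : Type*} [Field F] {k s : ℕ} (p : Fin k × Fin s → (Fin (k+1) → F))
    (hp : Function.Injective p) (hs : k + 2 ≤ k * s)
    (x : Fin (k+1) → F) (hx : gpOK p x) :
    IsGenPos F (k+1) ↑(insert x (Finset.univ.image p)) ∧
      k + 1 + 1 ≤ (insert x (Finset.univ.image p)).card := by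
  constructor
  · have := hx.2
    simpa using this
  · refine le_trans ?_ (Finset.card_le_card (Finset.subset_insert _ _))
    rw [Finset.card_image_of_injective _ hp]
    simp only [Finset.card_univ, Fintype.card_prod, Fintype.card_fin]
    omega

open Classical in
lemma gp_hull {F : Type*} [Field F] {k s : ℕ} (p : Fin k × Fin s → (Fin (k+1) → F))
    (hp : Function.Injective p) (hs : k + 2 ≤ k * s)
    (x : Fin (k+1) → F) (hx : gpOK p x) (j : Fin k) (r : Fin k → Fin s) (b : Fin s) (hb : b ≠ r j) :
      gpHat F (k+1) (p (j, b)) ∉ Submodule.span F (insert (gpHat F (k+1) x)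
        ((fun i => gpHat F (k+1) (p (i, r i))) '' {i | i ≤ j})) := by
  obtain ⟨hZ, hc⟩ := gp_ok_Z p hp hs x hx
  have hz : p (j, b) ∈ insert x (Finset.univ.image p) := by simp
  have := gp_nm hZ hc (A := insert x (Finset.univ.image (fun i => p (i, r i)))) (by
    apply Finset.insert_subset_insert
    intro a ha
    simp only [Finset.mem_image, Finset.mem_univ, true_and] at ha ⊢
    obtain ⟨i, rfl⟩ := ha
    exact ⟨_, rfl⟩) (by
    refine (Finset.card_insert_le _ _).trans ?_
    have : (Finset.univ.image (fun i => p (i, r i))).card ≤ k := by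
      simpa using (Finset.card_image_le (s := Finset.univ) (f := (fun i => p (i, r i))))
    omega) hz (by
    simp only [Finset.mem_insert, Finset.mem_image, Finset.mem_univ, true_and, not_or, not_exists]
    constructor
    · intro h
      exact hx.1 ⟨_, h⟩
    · intro i h
      have := hp h
      simp only [Prod.mk.injEq] at this
      obtain ⟨rfl, h2⟩ := this
      exact hb h2.symm)
  intro hm
  apply this
  refine Submodule.span_mono ?_ hm
  simp only [Finset.coe_insert, Set.image_insert_eq, Finset.coe_image, Finset.coe_univ]
  apply Set.insert_subset_insert
  rintro _ ⟨i, _, rfl⟩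
  exact ⟨p (i, r i), ⟨i, by simp, rfl⟩, rfl⟩

open Classical in
lemma gp_pairs {F : Type*} [Field F] [Fintype F] {k s : ℕ} (p : Fin k × Fin s → (Fin (k+1) → F))
    (hp : Function.Injective p) (hs : k + 2 ≤ k * s) (S : Finset (Fin (k+1) → F))
    (hS : ∀ x ∈ S, gpOK p x) (r : Fin k → Fin s) :
    S.card ^ 2 ≤ (Fintype.card F + 1) * (S.card + ∑ x ∈ S, (S.filter (fun y => y ≠ x ∧
      gpHat F (k+1) y ∈ Submodule.span F (insert (gpHat F (k+1) x)
        (Set.range (fun i => gpHat F (k+1) (p (i, r i))))))).card) := by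
  rcases S.eq_empty_or_nonempty with rfl | ⟨x0, hx0⟩
  · simp
  set A : Finset (Fin (k+1) → F) := Finset.univ.image (fun i => p (i, r i)) with hA
  have hAc : A.card = k := by
    rw [hA, Finset.card_image_of_injective]
    · simp
    · intro i j h
      have := hp h
      simp only [Prod.mk.injEq] at this
      exact this.1
  have hAp : A ⊆ Finset.univ.image p := by
    intro a ha
    simp only [hA, Finset.mem_image, Finset.mem_univ, true_and] at ha ⊢
    obtain ⟨i, rfl⟩ := ha
    exact ⟨_, rfl⟩
  have hrange : Set.range (fun i => gpHat F (k+1) (p (i, r i))) =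
      gpHat F (k+1) '' (A : Set (Fin (k+1) → F)) := by
    rw [hA, Finset.coe_image, Finset.coe_univ, Set.image_univ, ← Set.range_comp]
    rfl
  set U := Submodule.span F (gpHat F (k+1) '' (A : Set (Fin (k+1) → F))) with hU
  have hfin : Module.finrank F U = k := by
    obtain ⟨hZ, hc⟩ := gp_ok_Z p hp hs x0 (hS x0 hx0)
    have hli := gp_li hZ hc (A := A) (hAp.trans (Finset.subset_insert _ _)) (by omega)
    have := finrank_span_eq_card hli
    rw [hU, Set.image_eq_range]
    simpa [hAc] using this
  have hquot : Module.finrank F ((F × (Fin (k+1) → F)) ⧸ U) = 2 := by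
    have h1 := Submodule.finrank_quotient_add_finrank U
    have h2 : Module.finrank F (F × (Fin (k+1) → F)) = k + 2 := by
      simp
      omega
    omega
  obtain ⟨c, hc⟩ := gp_colour U hquot
  refine (gp_cs S (fun x => c (gpHat F (k+1) x))).trans ?_
  apply Nat.mul_le_mul_left
  rw [Finset.card_eq_sum_ones, ← Finset.sum_add_distrib]
  apply Finset.sum_le_sum
  intro x hx
  have : S.filter (fun y => c (gpHat F (k+1) x) = c (gpHat F (k+1) y)) ⊆ insert x (S.filter (fun y => y ≠ x ∧
      gpHat F (k+1) y ∈ Submodule.span F (insert (gpHat F (k+1) x)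
        (Set.range (fun i => gpHat F (k+1) (p (i, r i))))))) := by
    intro y hy
    simp only [Finset.mem_filter, Finset.mem_insert] at hy ⊢
    by_cases hyx : y = x
    · exact Or.inl hyx
    · right
      refine ⟨hy.1, hyx, ?_⟩
      have hxU : gpHat F (k+1) x ∉ U := by
        obtain ⟨hZ, hc⟩ := gp_ok_Z p hp hs x (hS x hx)
        refine gp_nm hZ hc (hAp.trans (Finset.subset_insert _ _)) (by omega) (by simp) ?_
        intro h
        have := hAp h
        apply (hS x hx).1
        simpa using this
      obtain ⟨l, hl⟩ := hc _ _ hxU hy.2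
      rw [hrange, Submodule.mem_span_insert]
      exact ⟨l, _, hl, by abel⟩
  refine (Finset.card_le_card this).trans ((Finset.card_insert_le _ _).trans ?_)
  omega

open Classical in
lemma gp_deg {F : Type*} [Field F] [Fintype F] {k s : ℕ} (p : Fin k × Fin s → (Fin (k+1) → F))
    (hp : Function.Injective p) (hs : k + 2 ≤ k * s) (S : Finset (Fin (k+1) → F))
    (hS : ∀ x ∈ S, gpOK p x) :
    s * S.card ^ 2 ≤ (Fintype.card F + 1) * (s * S.card + k * ∑ x ∈ S,
      (S.filter (fun y => gpRel p x y)).card) := by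
  have hs0 : 0 < s := by
    rcases Nat.eq_zero_or_pos s with h | h
    · subst h; simp at hs
    · exact h
  have key : ∀ x ∈ S, s * ∑ r : Fin k → Fin s, (S.filter (fun y => y ≠ x ∧
      gpHat F (k+1) y ∈ Submodule.span F (insert (gpHat F (k+1) x)
        (Set.range (fun i => gpHat F (k+1) (p (i, r i))))))).card ≤
        (S.filter (fun y => gpRel p x y)).card * (k * s ^ k) := by
    intro x hx
    have e : ∑ r : Fin k → Fin s, (S.filter (fun y => y ≠ x ∧
      gpHat F (k+1) y ∈ Submodule.span F (insert (gpHat F (k+1) x)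
        (Set.range (fun i => gpHat F (k+1) (p (i, r i))))))).card
        = ∑ y ∈ S, (Finset.univ.filter (fun r : Fin k → Fin s => y ≠ x ∧
      gpHat F (k+1) y ∈ Submodule.span F (insert (gpHat F (k+1) x)
        (Set.range (fun i => gpHat F (k+1) (p (i, r i))))))).card := by
      simp only [Finset.card_filter]
      rw [Finset.sum_comm]
    rw [e, Finset.mul_sum, ← smul_eq_mul, ← Finset.sum_const, Finset.sum_filter]
    apply Finset.sum_le_sum
    intro y _
    split_ifs with hrel
    · have := gp_mu s (gpHat F (k+1) x) (gpHat F (k+1) y) (gp_hat_ne hrel.1) k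
        (fun i a => gpHat F (k+1) (p (i, a)))
        (fun j r b hb => gp_hull p hp hs x (hS x hx) j r b hb)
      refine le_trans ?_ this
      apply Nat.mul_le_mul_left
      apply Finset.card_le_card
      intro r hr
      simp only [Finset.mem_filter, Finset.mem_univ, true_and] at hr ⊢
      exact hr.2
    · rw [Finset.filter_false_of_mem]
      · simp
      · intro r _ hr
        exact hrel ⟨hr.1, r, hr.2⟩
  have hsum := Finset.sum_le_sum (fun (r : Fin k → Fin s) (_ : r ∈ Finset.univ) =>
    gp_pairs p hp hs S hS r)
  rw [← Finset.mul_sum, Finset.sum_add_distrib, Finset.sum_comm] at hsum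
  simp only [Finset.sum_const, Finset.card_univ, Fintype.card_fun, Fintype.card_fin,
    smul_eq_mul] at hsum
  have h2 := Finset.sum_le_sum key
  rw [← Finset.mul_sum, ← Finset.sum_mul] at h2
  have hpos : 0 < s ^ k := by positivity
  refine Nat.le_of_mul_le_mul_left ?_ hpos
  set Y := ∑ y ∈ S, ∑ r : Fin k → Fin s, (S.filter (fun z => z ≠ y ∧
      gpHat F (k+1) z ∈ Submodule.span F (insert (gpHat F (k+1) y)
        (Set.range (fun i => gpHat F (k+1) (p (i, r i))))))).card
  set X := ∑ x ∈ S, (S.filter (fun y => gpRel p x y)).card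
  calc s ^ k * (s * S.card ^ 2) = s * (s ^ k * S.card ^ 2) := by ring
    _ ≤ s * ((Fintype.card F + 1) * (s ^ k * S.card + Y)) := Nat.mul_le_mul_left _ hsum
    _ = (Fintype.card F + 1) * (s ^ k * (s * S.card) + s * Y) := by ring
    _ ≤ (Fintype.card F + 1) * (s ^ k * (s * S.card) + X * (k * s ^ k)) := by gcongr
    _ = _ := by ring

open Classical in
lemma gp_exists {F : Type*} [Field F] [Fintype F] {k s D : ℕ} (hk : 1 ≤ k)
    (p : Fin k × Fin s → (Fin (k+1) → F))
    (hp : Function.Injective p) (hs : k + 2 ≤ k * s) (S : Finset (Fin (k+1) → F))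
    (hS : ∀ x ∈ S, gpOK p x) (hD : D ≤ Fintype.card F + 1)
    (hN : Fintype.card F + 1 + D < S.card) :
    ∃ v ∈ S, ((s : ℝ) * D / (2 * k * (Fintype.card F + 1) ^ 2)) * S.card ≤
      (S.filter (fun y => gpRel p v y)).card := by
  by_contra! hcon
  have hne : S.Nonempty := by
    rw [← Finset.card_pos]; omega
  have hs0 : 0 < s := by
    rcases Nat.eq_zero_or_pos s with h | h
    · subst h; simp at hs
    · exact h
  have h1 := Finset.sum_lt_sum_of_nonempty hne hcon
  rw [Finset.sum_const, nsmul_eq_mul] at h1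
  have h2 := gp_deg p hp hs S hS
  have h3 : (s : ℝ) * S.card ^ 2 ≤ (Fintype.card F + 1) * (s * S.card + k * ∑ x ∈ S,
      ((S.filter (fun y => gpRel p x y)).card : ℝ)) := by exact_mod_cast h2
  have hD' : (D : ℝ) ≤ Fintype.card F + 1 := by exact_mod_cast hD
  have hN' : (Fintype.card F : ℝ) + 1 + D < S.card := by exact_mod_cast hN
  have hk' : (0 : ℝ) < k := by exact_mod_cast hk
  have hs' : (0 : ℝ) < s := by exact_mod_cast hs0
  have hQ : (0 : ℝ) < Fintype.card F + 1 := by positivity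
  generalize (Fintype.card F : ℝ) + 1 = Q at *
  generalize (∑ x ∈ S, ((S.filter (fun y => gpRel p x y)).card : ℝ)) = X at *
  have hD0 : (0 : ℝ) ≤ D := by positivity
  generalize (S.card : ℝ) = N at *
  generalize (D : ℝ) = D' at *
  have hN0 : 0 < N := by linarith
  have h4 : (s : ℝ) * N ^ 2 < Q * (s * N + k * (N * (s * D' / (2 * k * Q ^ 2) * N))) := by
    refine lt_of_le_of_lt h3 ?_
    gcongr
  have h5 : Q * (s * N + k * (N * (s * D' / (2 * k * Q ^ 2) * N))) =
      s * N * (Q + D' * N / (2 * Q)) := by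
    field_simp
  rw [h5] at h4
  have h6 : N < Q + D' * N / (2 * Q) := by
    have : 0 < s * N := by positivity
    have h7 : (s : ℝ) * N * N < s * N * (Q + D' * N / (2 * Q)) := by
      calc _ = (s : ℝ) * N ^ 2 := by ring
        _ < _ := h4
    exact lt_of_mul_lt_mul_left h7 this.le
  have h8 : N * (2 * Q) < Q * (2 * Q) + D' * N := by
    have := mul_lt_mul_of_pos_right h6 (by positivity : (0:ℝ) < 2 * Q)
    rw [add_mul, div_mul_cancel₀ _ (by positivity)] at this
    linarith
  nlinarith [mul_nonneg hD0 (sub_nonneg.2 hD'), mul_pos (sub_pos.2 hN') (by linarith : 0 < 2 * Q - D')]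

open Classical in
lemma gp_small {α : Type*} [Fintype α] (t : ℕ) :
    ((Finset.univ : Finset (Finset α)).filter (fun P => P.card ≤ t)).card ≤
      Fintype.card α ^ t + 1 := by
  have : ((Finset.univ : Finset (Finset α)).filter (fun P => P.card ≤ t)) ⊆
      insert ∅ ((Finset.univ : Finset (Fin t → α)).image (fun f => Finset.univ.image f)) := by
    intro P hP
    have hP : P.card ≤ t := by simpa using hP
    rcases P.eq_empty_or_nonempty with rfl | ⟨a, ha⟩
    · simp
    · apply Finset.mem_insert_of_mem
      simp only [Finset.mem_image, Finset.mem_univ, true_and]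
      refine ⟨fun i => if h : i.1 < P.card then (P.equivFin.symm ⟨i.1, h⟩).1 else a, ?_⟩
      ext x
      simp only [Finset.mem_image, Finset.mem_univ, true_and]
      constructor
      · rintro ⟨i, rfl⟩
        split_ifs
        · exact (P.equivFin.symm _).2
        · exact ha
      · intro hx
        refine ⟨⟨(P.equivFin ⟨x, hx⟩).1, lt_of_lt_of_le (P.equivFin ⟨x, hx⟩).2 hP⟩, ?_⟩
        simp
  refine (Finset.card_le_card this).trans ((Finset.card_insert_le _ _).trans ?_)
  have := Finset.card_image_le (s := (Finset.univ : Finset (Fin t → α)))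
    (f := (fun f => Finset.univ.image f))
  simpa using this

open Classical in
lemma gp_count {F : Type*} [Field F] [Fintype F] {k s D κ : ℕ} (hk : 1 ≤ k)
    (hs : k + 2 ≤ k * s) (hD : D ≤ Fintype.card F + 1)
    (hκ : (Fintype.card F : ℝ) ^ (k+1) *
      Real.exp (-(((s : ℝ) * D / (2 * k * (Fintype.card F + 1) ^ 2)) * κ)) ≤ 1) :
    ({P : Finset (Fin (k+1) → F) | IsGenPos F (k+1) ↑P}).ncard ≤
      2 ^ (Fintype.card F + 1 + D + 1) * (Fintype.card F ^ (k+1) + 1) ^ (k * s + κ) := by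
  set n := Fintype.card F ^ (k+1) with hn
  set M := Fintype.card F + 1 + D with hM
  have hcV : Fintype.card (Fin (k+1) → F) = n := by simp [hn]
  have hn1 : 1 ≤ n := Nat.one_le_pow _ _ Fintype.card_pos
  let OKs : (Fin k × Fin s → (Fin (k+1) → F)) → Finset (Fin (k+1) → F) :=
    fun p => Finset.univ.filter (fun x => gpOK p x)
  let Ind : (Fin k × Fin s → (Fin (k+1) → F)) → Finset (Finset (Fin (k+1) → F)) :=
    fun p => (OKs p).powerset.filter (fun I => ∀ x ∈ I, ∀ y ∈ I, ¬ gpRel p x y)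
  have hInd : ∀ p, Function.Injective p → (Ind p).card ≤ 2 ^ M * (n + 1) ^ κ := by
    intro p hp
    have hcard : (OKs p).card ≤ n := by
      rw [← hcV]; exact Finset.card_le_univ _
    have := gp_kw (gpRel p) M ((s : ℝ) * D / (2 * k * (Fintype.card F + 1) ^ 2)) (OKs p) (by
      intro S hS hMS
      exact gp_exists hk p hp hs S (fun x hx => (Finset.mem_filter.1 (hS hx)).2) hD hMS)
      (OKs p) κ (Finset.Subset.refl _) (by
        have h1 : ((OKs p).card : ℝ) ≤ (Fintype.card F : ℝ) ^ (k+1) := by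
          have : ((OKs p).card : ℝ) ≤ (n : ℝ) := by exact_mod_cast hcard
          simpa [hn] using this
        have h2 : (1 : ℝ) ≤ M := by
          have : 1 ≤ M := by omega
          exact_mod_cast this
        refine le_trans ?_ (hκ.trans h2)
        gcongr)
    refine (Finset.card_le_card ?_).trans (this.trans ?_)
    · intro I hI
      simp only [Ind, Finset.mem_filter] at hI ⊢
      exact hI
    · gcongr
  have hset : {P : Finset (Fin (k+1) → F) | IsGenPos F (k+1) ↑P} ⊆
      (((Finset.univ.filter (fun P : Finset (Fin (k+1) → F) => P.card ≤ k * s)) ∪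
        (Finset.univ.filter (fun p : Fin k × Fin s → (Fin (k+1) → F) =>
          Function.Injective p)).biUnion
          (fun p => (Ind p).image (fun I => I ∪ Finset.univ.image p)) :
            Finset (Finset (Fin (k+1) → F))) : Set (Finset (Fin (k+1) → F))) := by
    intro P hP
    have hP : IsGenPos F (k+1) ↑P := hP
    rw [Finset.mem_coe, Finset.mem_union]
    by_cases hc : P.card ≤ k * s
    · left; simpa using hc
    · right
      push Not at hc
      obtain ⟨e⟩ : Nonempty ((Fin k × Fin s) ↪ P) := by
        apply Function.Embedding.nonempty_of_card_le
        simpa using hc.le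
      let p : Fin k × Fin s → (Fin (k+1) → F) := fun i => (e i).1
      have hp : Function.Injective p := Subtype.val_injective.comp e.injective
      have hpP : Finset.univ.image p ⊆ P := by
        intro a ha
        simp only [Finset.mem_image, Finset.mem_univ, true_and] at ha
        obtain ⟨i, rfl⟩ := ha
        exact (e i).2
      simp only [Finset.mem_biUnion, Finset.mem_filter, Finset.mem_univ, true_and, Finset.mem_image]
      refine ⟨p, hp, P \ Finset.univ.image p, ?_, Finset.sdiff_union_of_subset hpP⟩
      simp only [Ind, OKs, Finset.mem_filter, Finset.mem_powerset]
      constructor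
      · intro x hx
        simp only [Finset.mem_sdiff] at hx
        simp only [Finset.mem_filter, Finset.mem_univ, true_and]
        refine ⟨by simpa using hx.2, ?_⟩
        intro A hA
        refine hP A (hA.trans ?_)
        apply Set.insert_subset hx.1
        rintro _ ⟨i, rfl⟩
        exact (e i).2
      · intro x hx y hy ⟨hxy, r, hr⟩
        simp only [Finset.mem_sdiff] at hx hy
        have := gp_nm hP (by omega)
          (A := insert x (Finset.univ.image (fun i => p (i, r i)))) (by
            apply Finset.insert_subset hx.1
            intro a ha
            simp only [Finset.mem_image, Finset.mem_univ, true_and] at ha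
            obtain ⟨i, rfl⟩ := ha
            exact (e _).2) (by
            refine (Finset.card_insert_le _ _).trans ?_
            have : (Finset.univ.image (fun i => p (i, r i))).card ≤ k := by
              simpa using (Finset.card_image_le (s := Finset.univ) (f := (fun i => p (i, r i))))
            omega) hy.1 (by
            simp only [Finset.mem_insert, not_or]
            refine ⟨hxy, ?_⟩
            intro h
            apply hy.2
            simp only [Finset.mem_image, Finset.mem_univ, true_and] at h ⊢
            obtain ⟨i, h⟩ := h
            exact ⟨_, h⟩)
        apply this
        refine Submodule.span_mono ?_ hr
        simp only [Finset.coe_insert, Set.image_insert_eq, Finset.coe_image, Finset.coe_univ]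
        apply Set.insert_subset_insert
        rintro _ ⟨i, rfl⟩
        exact ⟨p (i, r i), ⟨i, by simp, rfl⟩, rfl⟩
  refine (Set.ncard_le_ncard hset (Finset.finite_toSet _)).trans ?_
  rw [Set.ncard_coe_finset]
  refine (Finset.card_union_le _ _).trans ?_
  have hs1 := gp_small (α := Fin (k+1) → F) (k * s)
  rw [hcV] at hs1
  have hs2 : ((Finset.univ.filter (fun p : Fin k × Fin s → (Fin (k+1) → F) =>
          Function.Injective p)).biUnion
          (fun p => (Ind p).image (fun I => I ∪ Finset.univ.image p))).card ≤
          n ^ (k * s) * (2 ^ M * (n + 1) ^ κ) := by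
    refine (Finset.card_biUnion_le_card_mul _ _ (2 ^ M * (n + 1) ^ κ) ?_).trans ?_
    · intro p hp
      exact Finset.card_image_le.trans (hInd p (Finset.mem_filter.1 hp).2)
    · apply Nat.mul_le_mul_right
      refine (Finset.card_le_univ _).trans ?_
      simp [hn]
  have h3 : n ^ (k * s) + 1 ≤ 2 ^ M * (n + 1) ^ (k * s + κ) := by
    have h4 : n ^ (k * s) < (n + 1) ^ (k * s) := Nat.pow_lt_pow_left (by omega) (by omega)
    have h5 : (n + 1) ^ (k * s) ≤ (n+1) ^ (k * s + κ) := Nat.pow_le_pow_right (by omega) (by omega)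
    have h6 : (n+1) ^ (k * s + κ) ≤ 2 ^ M * (n + 1) ^ (k * s + κ) :=
      Nat.le_mul_of_pos_left _ (by positivity)
    omega
  have h4 : n ^ (k * s) * (2 ^ M * (n + 1) ^ κ) ≤ 2 ^ M * (n + 1) ^ (k * s + κ) := by
    calc n ^ (k * s) * (2 ^ M * (n + 1) ^ κ) ≤ (n+1) ^ (k * s) * (2 ^ M * (n + 1) ^ κ) := by
          gcongr
          omega
      _ = _ := by rw [pow_add]; ring
  calc _ ≤ 2 ^ M * (n + 1) ^ (k * s + κ) + 2 ^ M * (n + 1) ^ (k * s + κ) :=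
        add_le_add (hs1.trans h3) (hs2.trans h4)
    _ = _ := by ring

lemma gp_event (C : ℝ) (hC : 1 ≤ C) : ∃ Q : ℕ, ∀ q : ℕ, Q ≤ q →
    4 ≤ q ∧ 3 ≤ (q : ℝ) ^ (2/3 : ℝ) ∧
    C * Real.log q ^ 2 * (q : ℝ) ^ (2/3 : ℝ) ≤ (q : ℝ) ^ (4/5 : ℝ) := by
  have h1 := (isLittleO_log_rpow_atTop (r := 1/15) (by norm_num)).bound
    (show (0 : ℝ) < 1 / C by positivity)
  have h1' := tendsto_natCast_atTop_atTop.eventually h1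
  have h2 := ((tendsto_rpow_atTop (show (0 : ℝ) < 2/3 by norm_num)).comp
    (tendsto_natCast_atTop_atTop (R := ℝ))).eventually_ge_atTop 3
  have h3 := Filter.eventually_ge_atTop (α := ℕ) 4
  obtain ⟨Q, hQ⟩ := Filter.eventually_atTop.1 (h1'.and (h2.and h3))
  refine ⟨Q, fun q hq => ?_⟩
  obtain ⟨a, b, c⟩ := hQ q hq
  refine ⟨c, b, ?_⟩
  have hq1 : (1 : ℝ) ≤ q := by
    have : 1 ≤ q := by omega
    exact_mod_cast this
  have hq0 : (0 : ℝ) < q := by linarith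
  have hl : 0 ≤ Real.log q := Real.log_nonneg hq1
  rw [Real.norm_of_nonneg hl, Real.norm_of_nonneg (by positivity)] at a
  have e : (q : ℝ) ^ (4/5 : ℝ) = ((q : ℝ) ^ (1/15 : ℝ)) ^ 2 * (q : ℝ) ^ (2/3 : ℝ) := by
    rw [← Real.rpow_natCast, ← Real.rpow_mul hq0.le, ← Real.rpow_add hq0]
    norm_num
  rw [e]
  apply mul_le_mul_of_nonneg_right _ (by positivity)
  set Y := (q : ℝ) ^ (1/15 : ℝ)
  have hsq : Real.log q ^ 2 ≤ (1 / C * Y) ^ 2 := by gcongr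
  calc C * Real.log q ^ 2 ≤ C * (1 / C * Y) ^ 2 := by gcongr
    _ = Y ^ 2 / C := by field_simp
    _ ≤ Y ^ 2 := div_le_self (by positivity) hC

set_option maxHeartbeats 1000000 in
lemma gp_final (k : ℕ) (hk : 1 ≤ k) : ∃ Q : ℕ, ∀ q : ℕ, Q ≤ q →
    ∃ s D κ : ℕ, k + 2 ≤ k * s ∧ D ≤ q + 1 ∧
      (q : ℝ) ^ (k+1) * Real.exp (-(((s : ℝ) * D / (2 * k * (q + 1) ^ 2)) * κ)) ≤ 1 ∧
      (2 : ℝ) ^ (q + 1 + D + 1) * ((q : ℝ) ^ (k+1) + 1) ^ (k * s + κ) ≤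
        (2 : ℝ) ^ ((q : ℝ) + (q : ℝ) ^ (4/5 : ℝ)) := by
  have hkr : (1 : ℝ) ≤ k := by exact_mod_cast hk
  obtain ⟨Q, hQ⟩ := gp_event (4 + 22 * k * (k+1) * (k+2)) (by
    have : (0 : ℝ) ≤ 22 * k * (k+1) * (k+2) := by positivity
    linarith)
  refine ⟨Q, fun q hq => ?_⟩
  obtain ⟨h4, hX3, hfin⟩ := hQ q hq
  set X := (q : ℝ) ^ (2/3 : ℝ) with hX
  have hq4 : (4 : ℝ) ≤ q := by exact_mod_cast h4
  have hq0 : (0 : ℝ) < q := by linarith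
  have hXq : X ≤ q := by
    calc X ≤ (q : ℝ) ^ (1 : ℝ) := Real.rpow_le_rpow_of_exponent_le (by linarith) (by norm_num)
      _ = q := Real.rpow_one _
  set s := ⌈X⌉₊ with hs
  have hsX : X ≤ s := Nat.le_ceil _
  have hsX2 : (s : ℝ) ≤ X + 1 := (Nat.ceil_lt_add_one (by linarith)).le
  have hsq : s ≤ q := Nat.ceil_le.2 hXq
  have hs3 : 3 ≤ s := by
    have : (3 : ℝ) ≤ s := by linarith
    exact_mod_cast this
  set L := Real.log q with hL
  have hl2 : 1/2 < Real.log 2 := by linarith [Real.log_two_gt_d9]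
  have hL1 : 1 ≤ L := by
    have : Real.log 4 ≤ L := Real.log_le_log (by norm_num) hq4
    have e : Real.log 4 = 2 * Real.log 2 := by
      rw [show (4 : ℝ) = 2 ^ 2 by norm_num, Real.log_pow]; norm_num
    linarith
  set β := ((s : ℝ) * s / (2 * k * (q + 1) ^ 2)) with hβ
  have hX2 : X * X * X = q ^ 2 := by
    rw [hX, ← Real.rpow_add hq0, ← Real.rpow_add hq0]
    norm_num
  have hβX : 1 ≤ β * (8 * k * X) := by
    have : β * (8 * k * X) = 4 * (s * s * X) / (q + 1) ^ 2 := by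
      rw [hβ]; field_simp; ring
    rw [this, one_le_div (by positivity)]
    have : X * X * X ≤ s * s * X := by gcongr
    nlinarith
  have hβ0 : 0 < β := by positivity
  set κ := ⌈(k+1) * L * (8 * k * X)⌉₊ with hκ
  have hκ1 : (k+1) * L * (8 * k * X) ≤ κ := Nat.le_ceil _
  have hκ2 : (κ : ℝ) ≤ (k+1) * L * (8 * k * X) + 1 := (Nat.ceil_lt_add_one (by positivity)).le
  refine ⟨s, s, κ, by nlinarith, by omega, ?_, ?_⟩
  · have hβκ : (k+1) * L ≤ β * κ := by
      calc (k+1) * L = (k+1) * L * 1 := by ring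
        _ ≤ (k+1) * L * (β * (8 * k * X)) := by gcongr
        _ = β * ((k+1) * L * (8 * k * X)) := by ring
        _ ≤ β * κ := by gcongr
    have e : (q : ℝ) ^ (k+1) = Real.exp ((k+1) * L) := by
      rw [hL, mul_comm, Real.exp_mul, Real.exp_log hq0]
      exact_mod_cast (Real.rpow_natCast (q:ℝ) (k+1)).symm
    rw [e, ← Real.exp_add, Real.exp_le_one_iff]
    linarith
  · have hq2 : (q : ℝ) ≤ 2 ^ (2 * L) := by
      rw [Real.rpow_def_of_pos (by norm_num)]
      calc (q : ℝ) = Real.exp L := (Real.exp_log hq0).symm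
        _ ≤ _ := by
          apply Real.exp_le_exp.2
          nlinarith
    have hbase : (q : ℝ) ^ (k+1) + 1 ≤ 2 ^ (2 * L * (k+2)) := by
      have h1 : (1 : ℝ) ≤ (q : ℝ) ^ (k+1) := one_le_pow₀ (by linarith)
      calc (q : ℝ) ^ (k+1) + 1 ≤ (q : ℝ) ^ (k+1) * q := by nlinarith
        _ = (q : ℝ) ^ (k+2) := by ring
        _ ≤ ((2 : ℝ) ^ (2 * L)) ^ (k+2) := by gcongr
        _ = _ := by
          rw [← Real.rpow_natCast, ← Real.rpow_mul (by norm_num)]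
          push_cast
          rfl
    calc (2 : ℝ) ^ (q + 1 + s + 1) * ((q : ℝ) ^ (k+1) + 1) ^ (k * s + κ)
        ≤ (2 : ℝ) ^ (q + 1 + s + 1) * ((2 : ℝ) ^ (2 * L * (k+2))) ^ (k * s + κ) := by gcongr
      _ = (2 : ℝ) ^ (((q + 1 + s + 1 : ℕ) : ℝ) + 2 * L * (k+2) * ((k * s + κ : ℕ) : ℝ)) := by
          rw [Real.rpow_add (by norm_num), Real.rpow_natCast,
            Real.rpow_mul (by norm_num) (2 * L * (k+2)), Real.rpow_natCast]
      _ ≤ _ := by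
          apply Real.rpow_le_rpow_of_exponent_le (by norm_num)
          push_cast
          have hm : (k : ℝ) * s + κ ≤ 11 * k * (k+1) * (L * X) := by
            have a1 : X ≤ L * X := by nlinarith
            have a2 : (k : ℝ) * s ≤ k * (2 * (L * X)) := by
              gcongr
              linarith
            have a3 : 0 ≤ L * X := by positivity
            have a4 : (1 : ℝ) ≤ L * X := by linarith
            have a5 : (1:ℝ) ≤ k * (k+1) := by nlinarith
            have a6 : L * X ≤ k * (k+1) * (L * X) :=
              le_mul_of_one_le_left a3 a5
            have a7 : (k : ℝ) * (L * X) ≤ k * (k+1) * (L * X) := by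
              apply mul_le_mul_of_nonneg_right _ a3
              exact le_mul_of_one_le_right (by linarith) (by linarith)
            have a10 : (κ : ℝ) ≤ 8 * (k * (k+1) * (L * X)) + 1 := by
              refine hκ2.trans (le_of_eq ?_)
              ring
            calc (k : ℝ) * s + κ ≤ 11 * (k * (k+1) * (L * X)) := by linarith
              _ = _ := by ring
          have a8 : 2 * L * (k+2) * ((k : ℝ) * s + κ) ≤
              2 * L * (k+2) * (11 * k * (k+1) * (L * X)) := by gcongr
          have a9 : X ≤ L ^ 2 * X := by
            have : 1 ≤ L ^ 2 := one_le_pow₀ hL1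
            exact le_mul_of_one_le_left (by linarith) this
          have a11 : 2 * L * (k+2) * (11 * k * (k+1) * (L * X)) =
            (22 * k * (k+1) * (k+2)) * L ^ 2 * X := by ring
          have a12 : (4 + 22 * k * (k+1) * (k+2)) * L ^ 2 * X =
            4 * (L ^ 2 * X) + (22 * k * (k+1) * (k+2)) * L ^ 2 * X := by ring
          linarith

/-- The number of general position sets in `𝔽_q^d` is at most
`2^{q + q^{2d/(2d+1) + ε}}`. -/
theorem counting_general_position_sets (d : ℕ) (hd : 2 ≤ d) (ε : ℝ) (hε : 0 < ε) :
    ∃ Q : ℕ, ∀ q : ℕ, Q ≤ q → IsPrimePow q →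
      ∀ (F : Type) [Field F] [Fintype F], Fintype.card F = q →
        (({P : Finset (Fin d → F) | IsGenPos F d ↑P}).ncard : ℝ) ≤
          (2 : ℝ) ^ ((q : ℝ) + (q : ℝ) ^ ((2 * (d : ℝ)) / (2 * (d : ℝ) + 1) + ε)) := by
  obtain ⟨k, rfl⟩ : ∃ k, d = k + 1 := ⟨d - 1, by omega⟩
  have hk : 1 ≤ k := by omega
  obtain ⟨Q, hQ⟩ := gp_final k hk
  refine ⟨Q + 1, fun q hq _ F _ _ hF => ?_⟩
  obtain ⟨s, D, κ, h1, h2, h3, h4⟩ := hQ q (by omega)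
  subst hF
  have hc := gp_count (F := F) (κ := κ) hk h1 h2 h3
  have hc' : (({P : Finset (Fin (k+1) → F) | IsGenPos F (k+1) ↑P}).ncard : ℝ) ≤
      (2 : ℝ) ^ (Fintype.card F + 1 + D + 1) *
        ((Fintype.card F : ℝ) ^ (k+1) + 1) ^ (k * s + κ) := by exact_mod_cast hc
  refine hc'.trans (h4.trans ?_)
  have hq1 : (1 : ℝ) ≤ Fintype.card F := by exact_mod_cast (Fintype.card_pos : 0 < Fintype.card F)
  apply Real.rpow_le_rpow_of_exponent_le (by norm_num)
  gcongr
  · have hkr : (1 : ℝ) ≤ k := by exact_mod_cast hk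
    have : (4 / 5 : ℝ) ≤ (2 * ((k + 1 : ℕ) : ℝ)) / (2 * ((k + 1 : ℕ) : ℝ) + 1) := by
      push_cast
      rw [div_le_div_iff₀ (by norm_num) (by positivity)]
      linarith
    linarith
end

section
/- For every integer d ≥ 2 and every ε > 0 there exists a threshold Q such that for every prime power q ≥ Q and every integer m with m ≥ q^{d/(d+1)}·(log q)³, the number of general position subsets of 𝔽_q^d of size exactly m is at most the binomial coefficient C(⌈(1+ε)q⌉, m), where log is base 2. -/
/-- `I` spans no edge of the relation `adj`. -/
def KWIndep {X : Type*} (adj : X → X → Prop) (I : Finset X) : Prop :=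
  ∀ x ∈ I, ∀ y ∈ I, x ≠ y → ¬ adj x y

open Classical in
theorem kw_count {X : Type*} (adj : X → X → Prop) (β : ℝ) (hβ1 : β ≤ 1) (R : ℕ)
    (h : ∀ U : Finset X, R < U.card →
      ∃ v ∈ U, β * U.card ≤ ((U.filter (fun y => y ≠ v ∧ adj v y)).card : ℝ)) :
    ∀ (n k m : ℕ) (U : Finset X), U.card = n → (n : ℝ) * (1 - β) ^ k ≤ R →
      ((U.powersetCard m).filter
        (fun I => KWIndep adj I)).card ≤ (n + 1) ^ k * (R + k).choose m := by
  intro n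
  induction n using Nat.strong_induction_on with
  | _ n ih =>
  intro k m U hU hk
  by_cases hR : n ≤ R
  · calc _ ≤ (U.powersetCard m).card := Finset.card_filter_le _ _
      _ = n.choose m := by rw [Finset.card_powersetCard, hU]
      _ ≤ 1 * (R + k).choose m := by
        rw [one_mul]; exact Nat.choose_le_choose m (by omega)
      _ ≤ _ := Nat.mul_le_mul_right _ (Nat.one_le_pow _ _ (by omega))
  · push Not at hR
    rcases k with _ | k
    · exfalso
      simp at hk
      omega
    rcases m with _ | m
    · calc _ ≤ (U.powersetCard 0).card := Finset.card_filter_le _ _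
        _ = 1 := by simp
        _ ≤ _ := by simp; exact Nat.one_le_pow _ _ (by omega)
    obtain ⟨v, hv, hdeg⟩ := h U (by omega)
    set N := U.filter (fun y => y ≠ v ∧ adj v y) with hN
    set U1 := U.erase v with hU1
    set U2 := U1 \ N with hU2
    have hNU : N ⊆ U1 := by
      intro y hy
      simp only [hN, Finset.mem_filter] at hy
      simp [hU1, hy.1, hy.2.1]
    have c1 : U1.card = n - 1 := by rw [hU1, Finset.card_erase_of_mem hv, hU]
    have c2 : U2.card + N.card = n - 1 := by
      rw [hU2, Finset.card_sdiff_add_card_eq_card hNU, c1]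
    have hn : 1 ≤ n := by omega
    have b0 : 0 ≤ 1 - β := by linarith
    have i1 := ih (n-1) (by omega) (k+1) (m+1) U1 c1 (by
      refine le_trans ?_ hk
      gcongr
      omega)
    have i2 := ih U2.card (by omega) k m U2 rfl (by
      refine le_trans ?_ hk
      rw [pow_succ', ← mul_assoc]
      gcongr
      have : (U2.card : ℝ) + N.card ≤ n := by exact_mod_cast (by omega : U2.card + N.card ≤ n)
      rw [hU] at hdeg
      nlinarith)
    set f1 := ((U1.powersetCard (m+1)).filter
        (fun I => KWIndep adj I))
    set f2 := ((U2.powersetCard m).filter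
        (fun I => KWIndep adj I))
    have sub : ((U.powersetCard (m+1)).filter
        (fun I => KWIndep adj I)) ⊆ f1 ∪ f2.image (fun I => insert v I) := by
      intro I hI
      simp only [Finset.mem_filter, Finset.mem_powersetCard] at hI
      obtain ⟨⟨hIU, hIc⟩, hind⟩ := hI
      rw [Finset.mem_union]
      by_cases hvI : v ∈ I
      · right
        rw [Finset.mem_image]
        refine ⟨I.erase v, ?_, Finset.insert_erase hvI⟩
        simp only [f2, Finset.mem_filter, Finset.mem_powersetCard]
        refine ⟨⟨?_, ?_⟩, ?_⟩
        · intro y hy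
          have hy' := Finset.mem_erase.1 hy
          simp only [hU2, hU1, hN, Finset.mem_sdiff, Finset.mem_erase, Finset.mem_filter]
          refine ⟨⟨hy'.1, hIU hy'.2⟩, fun hh => hind v hvI y hy'.2 (Ne.symm hy'.1) hh.2.2⟩
        · rw [Finset.card_erase_of_mem hvI, hIc]; rfl
        · intro x hx y hy
          exact hind x (Finset.mem_of_mem_erase hx) y (Finset.mem_of_mem_erase hy)
      · left
        simp only [f1, Finset.mem_filter, Finset.mem_powersetCard]
        refine ⟨⟨?_, hIc⟩, hind⟩
        intro y hy
        exact Finset.mem_erase.2 ⟨fun e => hvI (e ▸ hy), hIU hy⟩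
    have e1 : n - 1 + 1 = n := by omega
    rw [e1] at i1
    calc _ ≤ (f1 ∪ f2.image (fun I => insert v I)).card := Finset.card_le_card sub
      _ ≤ f1.card + (f2.image (fun I => insert v I)).card := Finset.card_union_le _ _
      _ ≤ f1.card + f2.card := Nat.add_le_add_left Finset.card_image_le _
      _ ≤ n ^ (k+1) * (R + (k+1)).choose (m+1) + (U2.card + 1)^k * (R+k).choose m := by
        exact add_le_add i1 i2
      _ ≤ n ^ (k+1) * (R + (k+1)).choose (m+1) + n^k * (R+(k+1)).choose (m+1) := by
        gcongr
        · omega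
        · rw [← add_assoc, Nat.choose_succ_succ]; omega
      _ = n^k * (n+1) * (R+(k+1)).choose (m+1) := by ring
      _ ≤ (n+1)^k * (n+1) * (R+(k+1)).choose (m+1) := by gcongr; omega
      _ = _ := by ring

theorem choose_ratio (A B : ℕ) (h : A ≤ B) (m : ℕ) :
    B ^ m * A.choose m ≤ A ^ m * B.choose m := by
  induction m with
  | zero => simp
  | succ m ih =>
    have h1 := Nat.choose_succ_right_eq A m
    have h2 := Nat.choose_succ_right_eq B m
    have h3 : B * (A - m) ≤ A * (B - m) := by
      rw [Nat.mul_sub, Nat.mul_sub, mul_comm B A]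
      have := Nat.mul_le_mul_right m h
      omega
    refine Nat.le_of_mul_le_mul_right ?_ (by omega : 0 < m + 1)
    calc B^(m+1) * A.choose (m+1) * (m+1) = B^(m+1) * (A.choose (m+1) * (m+1)) := by ring
      _ = (B^m * A.choose m) * (B * (A - m)) := by rw [h1]; ring
      _ ≤ (A^m * B.choose m) * (A * (B - m)) := Nat.mul_le_mul ih h3
      _ = A^(m+1) * (B.choose (m+1) * (m+1)) := by rw [h2]; ring
      _ = _ := by ring

theorem choose_shift (n m t : ℕ) : n.choose m ≤ (n+t).choose (m+t) := by
  induction t with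
  | zero => simp
  | succ t ih =>
    refine ih.trans ?_
    rw [← add_assoc, ← add_assoc, Nat.choose_succ_succ]; omega

section lin
variable {F V : Type*} [Field F] [AddCommGroup V] [Module F V]

open Classical in
theorem span_few [Module.Finite F V] {τ : Type*} [Fintype τ] (g : τ → V) (d : ℕ)
    (hg : ∀ s : Finset τ, s.card = d + 1 → LinearIndependent F (fun i : s => g i))
    (j : ℕ) (hj : j ≤ d) (w : Fin j → V) :
    (Finset.univ.filter (fun v : τ => g v ∈ Submodule.span F (Set.range w))).card ≤ d := by
  by_contra hc
  push Not at hc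
  obtain ⟨s, hs, hsc⟩ := Finset.exists_subset_card_eq (Nat.succ_le_of_lt hc)
  have hli := hg s hsc
  have h1 := finrank_span_eq_card hli
  have h2 := finrank_range_le_card (R := F) w
  have h3 : Submodule.span F (Set.range (fun i : s => g i)) ≤ Submodule.span F (Set.range w) := by
    rw [Submodule.span_le]
    rintro _ ⟨i, rfl⟩
    exact (Finset.mem_filter.1 (hs i.2)).2
  have h4 := Submodule.finrank_mono h3
  rw [Set.finrank] at h2
  simp at h1 h2
  omega

open Classical in
theorem mult_bound [Module.Finite F V] {τ : Type*} [Fintype τ] (g : τ → V) (d : ℕ)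
    (hg : ∀ s : Finset τ, s.card = d + 1 → LinearIndependent F (fun i : s => g i))
    (x y : V) (hxy : LinearIndependent F ![x, y]) (n : ℕ) (hn : n + 1 ≤ d) :
    (Finset.univ.filter (fun a : Fin n → τ =>
      ¬ LinearIndependent F (Fin.cons x (Fin.cons y (g ∘ a) : Fin (n+1) → V) : Fin (n+2) → V))).card
      ≤ n * d * Fintype.card τ ^ (n - 1) := by
  induction n with
  | zero =>
    simp only [zero_mul, nonpos_iff_eq_zero, Finset.card_eq_zero]
    rw [Finset.filter_eq_empty_iff]
    intro a _
    rw [not_not]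
    have e0 : (Fin.cons x (Fin.cons y (g ∘ a) : Fin (0+1) → V) : Fin (0+2) → V) = ![x, y] := by
      funext i
      fin_cases i <;> rfl
    rw [e0]
    exact hxy
  | succ n ih =>
    have ih := ih (by omega)
    set bad : Finset (Fin n → τ) := (Finset.univ.filter (fun a : Fin n → τ =>
      ¬ LinearIndependent F (Fin.cons x (Fin.cons y (g ∘ a) : Fin (n+1) → V) : Fin (n+2) → V)))
    let w : (Fin n → τ) → Fin (n+2) → V := fun a => Fin.cons x (Fin.cons y (g ∘ a) : Fin (n+1) → V)
    have key : ∀ a : Fin (n+1) → τ,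
      (¬ LinearIndependent F (Fin.cons x (Fin.cons y (g ∘ a) : Fin (n+2) → V) : Fin (n+3) → V)) →
      Fin.init a ∈ bad ∨ g (a (Fin.last n)) ∈ Submodule.span F (Set.range (w (Fin.init a))) := by
      intro a ha
      have e1 : (Fin.cons x (Fin.cons y (g ∘ a) : Fin (n+2) → V) : Fin (n+3) → V)
          = Fin.snoc (w (Fin.init a)) (g (a (Fin.last n))) := by
        simp only [w]
        rw [← Fin.cons_snoc_eq_snoc_cons, ← Fin.cons_snoc_eq_snoc_cons, ← Fin.comp_snoc,
          Fin.snoc_init_self]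
      rw [e1, linearIndependent_finSnoc] at ha
      by_contra hc
      push Not at hc
      apply ha
      refine ⟨?_, hc.2⟩
      by_contra h'
      exact hc.1 (by simp only [bad, Finset.mem_filter, Finset.mem_univ, true_and]; exact h')
    let S : Finset ((_ : Fin n → τ) × τ) := Finset.univ.sigma
      (fun a => if a ∈ bad then Finset.univ else
        Finset.univ.filter (fun v : τ => g v ∈ Submodule.span F (Set.range (w a))))
    have hS : (Finset.univ.filter (fun a : Fin (n+1) → τ =>
      ¬ LinearIndependent F (Fin.cons x (Fin.cons y (g ∘ a) : Fin (n+2) → V) : Fin (n+3) → V))).card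
      ≤ S.card := by
      apply Finset.card_le_card_of_injOn (fun a => ⟨Fin.init a, a (Fin.last n)⟩)
      · intro a ha
        have ha := (Finset.mem_filter.1 (Finset.mem_coe.1 ha)).2
        simp only [S, Finset.coe_sigma, Set.mem_sigma_iff, Finset.mem_coe, Finset.mem_univ, true_and]
        split_ifs with hb
        · simp
        · simpa using (key a ha).resolve_left hb
      · intro a _ b _ hab
        simp only [Sigma.mk.injEq, heq_eq_eq] at hab
        rw [← Fin.snoc_init_self a, ← Fin.snoc_init_self b, hab.1, hab.2]
    refine hS.trans ?_
    have : S.card ≤ ∑ a : Fin n → τ, ((if a ∈ bad then Fintype.card τ else 0) + d) := by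
      rw [Finset.card_sigma]
      apply Finset.sum_le_sum
      intro a _
      split_ifs with hb
      · simp
      · rw [zero_add]
        exact span_few g d hg (n+2) (by omega) (w a)
    refine this.trans ?_
    rw [Finset.sum_add_distrib, ← Finset.sum_filter]
    simp only [Finset.filter_mem_eq_inter, Finset.univ_inter, Finset.sum_const, smul_eq_mul,
      Finset.card_univ, Fintype.card_fun, Fintype.card_fin, Nat.add_sub_cancel]
    have : bad.card * Fintype.card τ ≤ n * d * Fintype.card τ ^ n := by
      refine (Nat.mul_le_mul_right _ ih).trans ?_
      rcases n with _ | n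
      · simp
      · simp [pow_succ, mul_assoc]
    nlinarith

open Classical in
theorem same_class [Module.Finite F V] [Fintype F] (e : ℕ) (hV : Module.finrank F V = e + 2)
    (a : Fin e → V) (ha : LinearIndependent F a) :
    ∃ c : V → Option F, ∀ x y, c x = c y →
      ¬ LinearIndependent F (Fin.cons x (Fin.cons y a : Fin (e+1) → V) : Fin (e+2) → V) := by
  set W := Submodule.span F (Set.range a) with hW
  have h1 : Module.finrank F W = e := by rw [hW, finrank_span_eq_card ha]; simp
  have h2 := Submodule.finrank_quotient_add_finrank W
  have h3 : Module.finrank F (V ⧸ W) = Module.finrank F (Fin 2 → F) := by simp; omega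
  let φ : V →ₗ[F] (Fin 2 → F) := (LinearEquiv.ofFinrankEq _ _ h3).toLinearMap ∘ₗ W.mkQ
  have hφ : ∀ v, φ v = 0 → v ∈ W := by
    intro v hv
    simpa [φ] using hv
  refine ⟨fun v => if φ v 1 = 0 then none else some (φ v 0 / φ v 1), ?_⟩
  intro x y hxy hli
  have hne : ∀ s t : F, s • x + t • y ∈ W → s = 0 ∧ t = 0 := by
    intro s t hst
    rw [linearIndependent_finCons, linearIndependent_finCons] at hli
    obtain ⟨⟨_, hy⟩, hx⟩ := hli
    rw [Fin.range_cons] at hx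
    have hs : s = 0 := by
      by_contra hs
      apply hx
      rw [Submodule.mem_span_insert]
      refine ⟨-(s⁻¹ * t), s⁻¹ • (s • x + t • y), W.smul_mem _ hst, ?_⟩
      rw [smul_add, smul_smul, smul_smul, inv_mul_cancel₀ hs]
      module
    refine ⟨hs, ?_⟩
    by_contra ht
    apply hy
    have := W.smul_mem t⁻¹ hst
    rw [hs] at this
    simpa [smul_smul, inv_mul_cancel₀ ht] using this
  have hz : ∀ v, v = x ∨ v = y → φ v 1 = 0 → φ v 0 ≠ 0 := by
    intro v hv h1 h0
    have : v ∈ W := hφ v (by ext i; fin_cases i <;> simp [h1, h0])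
    rcases hv with rfl | rfl
    · simpa using hne 1 0 (by simpa using this)
    · simpa using hne 0 1 (by simpa using this)
  by_cases hx : φ x 1 = 0
  · by_cases hy : φ y 1 = 0
    · have := hne (φ y 0) (-φ x 0) (hφ _ (by
        ext i; fin_cases i
        · simp; ring
        · simp [hx, hy]))
      exact hz y (Or.inr rfl) hy this.1
    · simp [hx, hy] at hxy
  · by_cases hy : φ y 1 = 0
    · simp [hx, hy] at hxy
    · simp only [hx, hy, if_false, Option.some.injEq] at hxy
      rw [div_eq_div_iff hx hy] at hxy
      have := hne (φ y 1) (-φ x 1) (hφ _ (by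
        ext i; fin_cases i
        · simp; linear_combination hxy
        · simp; ring))
      exact hy this.1

open Classical in
theorem many_pairs {X C : Type*} [Fintype C] (U : Finset X) (c : X → C) :
    U.card ^ 2 ≤ Fintype.card C * ((U ×ˢ U).filter (fun p => c p.1 = c p.2)).card := by
  have h1 : U.card = ∑ b : C, (U.filter (fun x => c x = b)).card :=
    Finset.card_eq_sum_card_fiberwise (by intro x _; simp)
  have h2 : ((U ×ˢ U).filter (fun p => c p.1 = c p.2)).card =
      ∑ b : C, (U.filter (fun x => c x = b)).card ^ 2 := by
    rw [Finset.card_eq_sum_card_fiberwise (f := fun p => c p.1) (t := Finset.univ)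
      (by intro x _; simp)]
    refine Finset.sum_congr rfl fun b _ => ?_
    rw [sq, ← Finset.card_product]
    congr 1
    ext ⟨x, y⟩
    simp only [Finset.mem_filter, Finset.mem_product]
    grind
  rw [h2]
  conv_lhs => rw [h1]
  exact sq_sum_le_card_mul_sum_sq


/-- Adjacency of `x` and `y` relative to the set `T`. -/
def TAdj (F : Type*) {V X : Type*} [Field F] [AddCommGroup V] [Module F V]
    (hat : X → V) (e : ℕ) (T : Finset X) (x y : X) : Prop :=
  ∃ a : Fin e ↪ T, ¬ LinearIndependent F
    (Fin.cons (hat x) (Fin.cons (hat y) (fun i => hat (a i)) : Fin (e+1) → V) : Fin (e+2) → V)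

open Classical in
theorem dense_vertex [Module.Finite F V] [Fintype F] (e : ℕ) (he : 1 ≤ e)
    (hV : Module.finrank F V = e + 2) {X : Type*} (hat : X → V)
    (hhat : ∀ x y, x ≠ y → LinearIndependent F ![hat x, hat y]) (T : Finset X)
    (hT : ∀ f : Fin (e+2) → X, Function.Injective f → (∀ i, f i ∈ T) →
      LinearIndependent F (fun i => hat (f i)))
    (ht : e + 2 ≤ T.card) (U : Finset X) (hU : 0 < U.card) (β : ℝ)
    (hβ : β * (e * (e + 1) * (T.card : ℝ) ^ (e - 1)) ≤
      (T.card.descFactorial e : ℝ) * (1 / ((Fintype.card F : ℝ) + 1) - 1 / U.card)) :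
    ∃ v ∈ U, β * U.card ≤ ((U.filter (fun y => y ≠ v ∧ TAdj F hat e T v y)).card : ℝ) := by
  by_contra hc
  push Not at hc
  let g : T → V := fun i => hat i
  have hg : ∀ s : Finset T, s.card = (e + 1) + 1 → LinearIndependent F (fun i : s => g i) := by
    intro s hs
    let E := s.equivFinOfCardEq hs
    rw [← linearIndependent_equiv E.symm]
    exact hT (fun i => ((E.symm i : T) : X))
      (fun i j h => E.symm.injective (Subtype.ext (Subtype.ext h))) (fun i => (E.symm i : T).2)
  have hLI : ∀ a : Fin e ↪ T, LinearIndependent F (fun i => g (a i)) := by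
    intro a
    have c0 : (Finset.univ.map a).card = e := by simp
    obtain ⟨s, hs, hsc⟩ := Finset.exists_superset_card_eq (s := Finset.univ.map a) (n := e + 2)
      (by omega) (by simpa using ht)
    exact (hg s hsc).comp (fun i => ⟨a i, hs (by simp)⟩)
      (fun i j h => a.injective (by simpa using h))
  let dep : (Fin e ↪ T) → X × X → Prop := fun a p => ¬ LinearIndependent F
    (Fin.cons (hat p.1) (Fin.cons (hat p.2) (fun i => hat (a i)) : Fin (e+1) → V) : Fin (e+2) → V)
  set D := (U ×ˢ U).filter (fun p => p.1 ≠ p.2) with hD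
  set q := Fintype.card F
  set t := T.card
  set u := U.card
  have u0 : (0:ℝ) < u := by exact_mod_cast hU
  have lower : ∀ a : Fin e ↪ T, (u:ℝ)^2 / (q + 1) - u ≤ (D.filter (dep a)).card := by
    intro a
    obtain ⟨c, hcl⟩ := same_class e hV _ (hLI a)
    have h1 : u ^ 2 ≤ (q + 1) *
        ((U ×ˢ U).filter (fun p => c (hat p.1) = c (hat p.2))).card := by
      have h1 := many_pairs U (fun x => c (hat x))
      rw [Fintype.card_option] at h1
      convert h1
    have h2 : ((U ×ˢ U).filter (fun p => c (hat p.1) = c (hat p.2))).card ≤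
        (D.filter (dep a)).card + u := by
      have : (U ×ˢ U).filter (fun p => c (hat p.1) = c (hat p.2)) ⊆
          D.filter (dep a) ∪ U.image (fun x => (x, x)) := by
        rintro ⟨x, y⟩ hp
        simp only [Finset.mem_filter, Finset.mem_product] at hp
        rw [Finset.mem_union]
        by_cases hxy : x = y
        · right
          subst hxy
          exact Finset.mem_image.2 ⟨x, hp.1.1, rfl⟩
        · left
          simp only [hD, Finset.mem_filter, Finset.mem_product]
          exact ⟨⟨hp.1, hxy⟩, hcl _ _ hp.2⟩
      exact (Finset.card_le_card this).trans ((Finset.card_union_le _ _).trans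
        (Nat.add_le_add_left Finset.card_image_le _))
    have h3 : (u:ℝ)^2 ≤ (q + 1) * ((D.filter (dep a)).card + u) := by
      exact_mod_cast h1.trans (Nat.mul_le_mul_left _ h2)
    rw [sub_le_iff_le_add, div_le_iff₀ (by positivity)]
    linarith
  have dc : ∑ a : Fin e ↪ T, (D.filter (dep a)).card =
      ∑ p ∈ D, (Finset.univ.filter (fun a => dep a p)).card :=
    Finset.sum_card_bipartiteAbove_eq_sum_card_bipartiteBelow dep
  set K := e * (e + 1) * t ^ (e - 1) with hK
  have upper : ∀ p ∈ D, (Finset.univ.filter (fun a => dep a p)).card ≤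
      if TAdj F hat e T p.1 p.2 then K else 0 := by
    intro p hp
    split_ifs with hadj
    · have hne : p.1 ≠ p.2 := (Finset.mem_filter.1 hp).2
      have hm := mult_bound g (e+1) hg (hat p.1) (hat p.2) (hhat _ _ hne) e le_rfl
      rw [Fintype.card_coe] at hm
      refine le_trans ?_ hm
      refine Finset.card_le_card_of_injOn (fun (a : Fin e ↪ T) => (a : Fin e → T)) ?_ ?_
      · intro a ha
        have ha := (Finset.mem_filter.1 (Finset.mem_coe.1 ha)).2
        simp only [Finset.coe_filter, Finset.mem_univ, true_and, Set.mem_ofPred_eq]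
        exact ha
      · intro a _ b _ hab
        exact DFunLike.coe_injective hab
    · rw [nonpos_iff_eq_zero, Finset.card_eq_zero, Finset.filter_eq_empty_iff]
      intro a _ h
      exact hadj ⟨a, h⟩
  have deg : (D.filter (fun p => TAdj F hat e T p.1 p.2)).card =
      ∑ v ∈ U, (U.filter (fun y => y ≠ v ∧ TAdj F hat e T v y)).card := by
    rw [← Finset.card_sigma]
    have memD : ∀ p, p ∈ D ↔ (p.1 ∈ U ∧ p.2 ∈ U) ∧ p.1 ≠ p.2 := by
      intro p
      rw [hD, Finset.mem_filter, Finset.mem_product]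
    refine Finset.card_bij' (fun p _ => ⟨p.1, p.2⟩) (fun s _ => (s.1, s.2)) ?_ ?_ ?_ ?_
    · rintro ⟨x, y⟩ hp
      simp only [Finset.mem_filter, memD, Finset.mem_sigma] at hp ⊢
      exact ⟨hp.1.1.1, hp.1.1.2, hp.1.2.symm, hp.2⟩
    · rintro ⟨x, y⟩ hp
      simp only [Finset.mem_filter, memD, Finset.mem_sigma] at hp ⊢
      exact ⟨⟨⟨hp.1, hp.2.1⟩, hp.2.2.1.symm⟩, hp.2.2.2⟩
    · simp
    · simp
  have up2 : ∑ p ∈ D, (Finset.univ.filter (fun a => dep a p)).card ≤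
      K * ∑ v ∈ U, (U.filter (fun y => y ≠ v ∧ TAdj F hat e T v y)).card := by
    refine (Finset.sum_le_sum upper).trans ?_
    rw [← Finset.sum_filter, Finset.sum_const, deg, smul_eq_mul, mul_comm]
  have low2 : (t.descFactorial e : ℝ) * ((u:ℝ)^2 / (q + 1) - u) ≤
      K * ∑ v ∈ U, ((U.filter (fun y => y ≠ v ∧ TAdj F hat e T v y)).card : ℝ) := by
    have h1 : (∑ a : Fin e ↪ T, ((u:ℝ)^2 / (q + 1) - u)) ≤
        ∑ a : Fin e ↪ T, ((D.filter (dep a)).card : ℝ) := Finset.sum_le_sum fun a _ => lower a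
    rw [Finset.sum_const, Finset.card_univ, Fintype.card_embedding_eq, Fintype.card_coe,
      Fintype.card_fin, nsmul_eq_mul] at h1
    refine h1.trans ?_
    exact_mod_cast dc.le.trans up2
  have hlt : ∑ v ∈ U, ((U.filter (fun y => y ≠ v ∧ TAdj F hat e T v y)).card : ℝ) < u * (β * u) := by
    have := Finset.sum_lt_sum_of_nonempty (Finset.card_pos.1 hU) hc
    rwa [Finset.sum_const, nsmul_eq_mul] at this
  have K0 : (0:ℝ) < K := by
    have : 0 < K := by
      rw [hK]
      have : 0 < t := by omega
      positivity
    exact_mod_cast this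
  have hKc : (K:ℝ) = e * (e + 1) * (t : ℝ) ^ (e - 1) := by rw [hK]; push_cast; ring
  rw [← hKc] at hβ
  have h5 := mul_le_mul_of_nonneg_right hβ (sq_nonneg (u:ℝ))
  have h6 : (t.descFactorial e : ℝ) * (1 / ((q : ℝ) + 1) - 1 / u) * (u:ℝ)^2 =
      (t.descFactorial e : ℝ) * ((u:ℝ)^2 / (q + 1) - u) := by
    field_simp
  have h7 := mul_lt_mul_of_pos_left hlt K0
  nlinarith

end lin


/-- Homogenisation. -/
def hom (F : Type*) [Field F] (d : ℕ) (x : Fin d → F) : F × (Fin d → F) := (1, x)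

theorem hom_pair (F : Type*) [Field F] (d : ℕ) (x y : Fin d → F) (h : x ≠ y) :
    LinearIndependent F ![hom F d x, hom F d y] := by
  rw [LinearIndependent.pair_iff]
  intro s t hst
  simp only [hom, Prod.smul_mk, Prod.mk_add_mk, Prod.mk_eq_zero, smul_eq_mul, mul_one] at hst
  obtain ⟨h1, h2⟩ := hst
  have ht : t = -s := by linear_combination h1
  subst ht
  have : s • (x - y) = 0 := by rw [← h2]; module
  rcases smul_eq_zero.1 this with h3 | h3
  · simp [h3]
  · exact absurd (sub_eq_zero.1 h3) h

open Classical in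
theorem hom_genpos (F : Type*) [Field F] (d : ℕ) (P : Set (Fin d → F)) (hP : IsGenPos F d P)
    (f : Fin (d + 1) → (Fin d → F)) (hf : Function.Injective f) (hfP : ∀ i, f i ∈ P) :
    LinearIndependent F (fun i => hom F d (f i)) := by
  have h1 := hP (Finset.univ.map ⟨f, hf⟩) (by intro x hx; simp at hx; obtain ⟨i, rfl⟩ := hx; exact hfP i)
    (by simp)
  have h2 : AffineIndependent F f := by
    have := h1.comp_embedding (⟨fun i => ⟨f i, by simp⟩, fun i j h => hf (by simpa using h)⟩ :
      Fin (d+1) ↪ (Finset.univ.map ⟨f, hf⟩ : Finset (Fin d → F)))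
    exact this
  rw [affineIndependent_iff] at h2
  rw [Fintype.linearIndependent_iff]
  intro g hg i
  have e1 := congrArg Prod.fst hg
  have e2 := congrArg Prod.snd hg
  rw [Prod.fst_sum] at e1
  rw [Prod.snd_sum] at e2
  exact h2 Finset.univ g (by simpa [hom] using e1) (by simpa [hom] using e2) i (Finset.mem_univ i)

open Classical in
theorem genpos_indep (F : Type*) [Field F] (e : ℕ) (P T : Finset (Fin (e+1) → F))
    (hP : IsGenPos F (e+1) ↑P) (hT : T ⊆ P) :
    KWIndep (TAdj F (hom F (e+1)) e T) (P \ T) := by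
  rintro x hx y hy hxy ⟨a, ha⟩
  apply ha
  rw [Finset.mem_sdiff] at hx hy
  have h1 := hom_genpos F (e+1) ↑P hP
    (Fin.cons x (Fin.cons y (fun i => (a i : Fin (e+1) → F)) : Fin (e+1) → (Fin (e+1) → F)) :
      Fin (e+2) → (Fin (e+1) → F)) (by
      rw [Fin.cons_injective_iff, Fin.cons_injective_iff]
      refine ⟨?_, ?_, ?_⟩
      · rintro ⟨i, hi⟩
        refine Fin.cases (fun h => hxy h.symm) (fun i h => hx.2 ?_) i hi
        simp only [Fin.cons_succ] at h
        exact h ▸ (a i).2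
      · rintro ⟨i, hi⟩
        exact hy.2 (hi ▸ (a i).2)
      · exact fun i j h => a.injective (Subtype.ext h)) (by
      intro i
      refine Fin.cases ?_ (fun i => Fin.cases ?_ (fun i => ?_) i) i
      · simpa using hx.1
      · simpa using hy.1
      · simpa using hT (a i).2)
  have h2 : (Fin.cons (hom F (e+1) x) (Fin.cons (hom F (e+1) y) (fun i => hom F (e+1) (a i)) :
      Fin (e+1) → F × (Fin (e+1) → F)) : Fin (e+2) → F × (Fin (e+1) → F)) =
      fun i => hom F (e+1) ((Fin.cons x (Fin.cons y (fun i => (a i : Fin (e+1) → F)) :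
        Fin (e+1) → (Fin (e+1) → F)) : Fin (e+2) → (Fin (e+1) → F)) i) := by
    funext i
    refine Fin.cases ?_ (fun i => Fin.cases ?_ (fun i => ?_) i) i <;> simp
  rw [h2]
  exact h1

open Classical in
theorem count_bound (F : Type*) [Field F] [Fintype F] (e : ℕ) (he : 1 ≤ e) (t : ℕ) (ht : e + 2 ≤ t)
    (R : ℕ) (hR : 0 < R) (β : ℝ) (hβ1 : β ≤ 1)
    (hβ : β * (e * (e + 1) * (t : ℝ) ^ (e - 1)) ≤
      (t.descFactorial e : ℝ) * (1 / ((Fintype.card F : ℝ) + 1) - 1 / R))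
    (k : ℕ) (hk : ((Fintype.card F : ℝ) ^ (e + 1)) * (1 - β) ^ k ≤ R) (m : ℕ) (hm : t ≤ m) :
    ({P : Finset (Fin (e+1) → F) | P.card = m ∧ IsGenPos F (e+1) ↑P}).ncard ≤
      (Fintype.card F ^ (e+1)) ^ t * ((Fintype.card F ^ (e+1) + 1) ^ k * (R + k).choose (m - t)) := by
  set q := Fintype.card F
  set N := q ^ (e+1) with hN
  have hX : Fintype.card (Fin (e+1) → F) = N := by simp [hN, q]
  have hch : ∀ P : Finset (Fin (e+1) → F), ∃ T ⊆ P, t ≤ P.card → T.card = t := by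
    intro P
    by_cases h : t ≤ P.card
    · obtain ⟨T, h1, h2⟩ := Finset.exists_subset_card_eq h
      exact ⟨T, h1, fun _ => h2⟩
    · exact ⟨∅, by simp, fun h' => absurd h' h⟩
  choose Tf hTs hTc using hch
  let fam : Finset (Fin (e+1) → F) → Finset (Finset (Fin (e+1) → F)) := fun T =>
    ((Finset.univ : Finset (Fin (e+1) → F)).powersetCard (m - t)).filter
      (fun I => KWIndep (TAdj F (hom F (e+1)) e T) I)
  let base : Finset (Finset (Fin (e+1) → F)) :=
    ((Finset.univ : Finset (Fin (e+1) → F)).powersetCard t).filter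
      (fun T => IsGenPos F (e+1) ↑T)
  have hV : Module.finrank F (F × (Fin (e+1) → F)) = e + 2 := by
    simp; omega
  have hfam : ∀ T ∈ base, (fam T).card ≤ (N + 1) ^ k * (R + k).choose (m - t) := by
    intro T hTb
    simp only [base, Finset.mem_filter, Finset.mem_powersetCard] at hTb
    obtain ⟨⟨_, hTt⟩, hTg⟩ := hTb
    apply kw_count (TAdj F (hom F (e+1)) e T) β hβ1 R
    · intro U hU
      apply dense_vertex e he hV (hom F (e+1)) (hom_pair F (e+1)) T
        (hom_genpos F (e+1) ↑T hTg) (by omega) U (by omega) β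
      rw [hTt]
      refine hβ.trans ?_
      gcongr
    · rw [Finset.card_univ, hX]
    · rw [hN]; push_cast; exact hk
  set S := {P : Finset (Fin (e+1) → F) | P.card = m ∧ IsGenPos F (e+1) ↑P} with hS
  have h1 : S.ncard ≤ (base.sigma fam).card := by
    rw [← Set.ncard_coe_finset]
    apply Set.ncard_le_ncard_of_injOn (fun P => (⟨Tf P, P \ Tf P⟩ :
      (_ : Finset (Fin (e+1) → F)) × Finset (Fin (e+1) → F)))
    · rintro P ⟨hPm, hPg⟩
      have c := hTc P (by omega)
      simp only [Finset.coe_sigma, Set.mem_sigma_iff, Finset.mem_coe, base, fam,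
        Finset.mem_filter, Finset.mem_powersetCard, Finset.subset_univ, true_and]
      refine ⟨⟨c, ?_⟩, ?_, genpos_indep F e P (Tf P) hPg (hTs P)⟩
      · intro s hs
        exact hPg s (hs.trans (by exact_mod_cast hTs P))
      · rw [Finset.card_sdiff_of_subset (hTs P), c, hPm]
    · intro P _ P' _ h
      simp only [Sigma.mk.injEq, heq_eq_eq] at h
      rw [← Finset.sdiff_union_of_subset (hTs P), ← Finset.sdiff_union_of_subset (hTs P'),
        h.2, h.1]
  refine h1.trans ?_
  rw [Finset.card_sigma]
  refine (Finset.sum_le_sum hfam).trans ?_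
  rw [Finset.sum_const, smul_eq_mul]
  apply Nat.mul_le_mul_right
  refine (Finset.card_filter_le _ _).trans ?_
  rw [Finset.card_powersetCard, Finset.card_univ, hX]
  exact Nat.choose_le_pow _ _

theorem asym (C G : ℝ) (_hC : 0 ≤ C) (hG : 0 ≤ G) : ∃ Q : ℕ, ∀ q : ℕ, Q ≤ q →
    1 ≤ Real.log q ∧
      G * ((Real.sqrt q + 2 + C * Real.sqrt q * Real.log q) * Real.log q) ≤ (q:ℝ) ^ (2/3 : ℝ) := by
  have h1 : ∀ᶠ x : ℝ in Filter.atTop, 1 ≤ Real.log x := Real.tendsto_log_atTop.eventually_ge_atTop 1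
  have h2 : ∀ᶠ x : ℝ in Filter.atTop, ‖Real.log x‖ ≤ 1 * ‖x ^ (1/24 : ℝ)‖ :=
    (isLittleO_log_rpow_atTop (by norm_num : (0:ℝ) < 1/24)).bound one_pos
  have h3 : ∀ᶠ x : ℝ in Filter.atTop, G * (3 + C) ≤ x ^ (1/12 : ℝ) :=
    (tendsto_rpow_atTop (by norm_num : (0:ℝ) < 1/12)).eventually_ge_atTop _
  have h4 : ∀ᶠ x : ℝ in Filter.atTop, (1:ℝ) ≤ x := Filter.eventually_ge_atTop 1
  have h := ((h1.and h2).and (h3.and h4))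
  obtain ⟨Q, hQ⟩ := Filter.eventually_atTop.1 (tendsto_natCast_atTop_atTop.eventually h)
  refine ⟨Q, fun q hq => ?_⟩
  obtain ⟨⟨g1, g2⟩, g3, g4⟩ := hQ q hq
  set x : ℝ := (q:ℝ)
  refine ⟨g1, ?_⟩
  have x0 : 0 < x := by linarith
  rw [Real.norm_of_nonneg (by linarith), Real.norm_of_nonneg (by positivity), one_mul] at g2
  have s1 : 1 ≤ Real.sqrt x := Real.one_le_sqrt.2 g4
  set l := Real.log x
  have a1 : Real.sqrt x + 2 + C * Real.sqrt x * l ≤ (3 + C) * (Real.sqrt x * l) := by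
    have : Real.sqrt x ≤ Real.sqrt x * l := by nlinarith
    nlinarith
  calc G * ((Real.sqrt x + 2 + C * Real.sqrt x * l) * l)
      ≤ G * (((3 + C) * (Real.sqrt x * l)) * l) := by gcongr
    _ = G * (3 + C) * (Real.sqrt x * l * l) := by ring
    _ ≤ x ^ (1/12 : ℝ) * (x ^ (1/2:ℝ) * x ^ (1/24 : ℝ) * x ^ (1/24 : ℝ)) := by
      rw [Real.sqrt_eq_rpow]
      gcongr
    _ = x ^ (2/3 : ℝ) := by
      rw [← Real.rpow_add x0, ← Real.rpow_add x0, ← Real.rpow_add x0]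
      norm_num

theorem beta_cond (e : ℕ) (he : 1 ≤ e) (ε : ℝ) (hε : 0 < ε) (q t R : ℕ) (c : ℝ)
    (hc : c = ε / (16 + 4 * ε) / (2 ^ e * (e * (e + 1)))) (hq : 1 ≤ q) (hqε : 8 / ε ≤ q)
    (hsq : Real.sqrt q ≤ t) (ht : 2 * e ≤ t) (hR : (1 + ε / 4) * q ≤ (R:ℝ)) :
    c / Real.sqrt q * (e * (e + 1) * (t : ℝ) ^ (e - 1)) ≤
      (t.descFactorial e : ℝ) * (1 / ((q : ℝ) + 1) - 1 / R) := by
  have q1 : (1:ℝ) ≤ q := by exact_mod_cast hq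
  have q0 : (0:ℝ) < q := by linarith
  have s0 : 0 < Real.sqrt q := Real.sqrt_pos.2 q0
  have e0 : (0:ℝ) < e := by exact_mod_cast he
  have hss : Real.sqrt q * Real.sqrt q = q := Real.mul_self_sqrt q0.le
  have b1 : ε / (16 + 4 * ε) / q ≤ 1 / ((q : ℝ) + 1) - 1 / R := by
    have : 1 / (R:ℝ) ≤ 1 / ((1 + ε / 4) * q) := by
      apply one_div_le_one_div_of_le (by positivity) hR
    have h8 : 8 ≤ q * ε := by rwa [div_le_iff₀ hε] at hqε
    have h2 : ε / (16 + 4 * ε) / q ≤ 1 / ((q : ℝ) + 1) - 1 / ((1 + ε / 4) * q) := by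
      have e2 : 1 / ((q : ℝ) + 1) - 1 / ((1 + ε / 4) * q) =
          (ε * q - 4) / ((q + 1) * (4 + ε) * q) := by
        field_simp
        ring
      have e3 : ε / (16 + 4 * ε) / q = ε / (4 * (4 + ε) * q) := by
        field_simp
        ring
      rw [e2, e3, div_le_div_iff₀ (by positivity) (by positivity)]
      have : 0 < (4 + ε) * q := by positivity
      have h9 : ε * (q + 1) ≤ (ε * q - 4) * 4 := by nlinarith
      nlinarith
    linarith
  have b2 : ((t:ℝ) / 2) ^ e ≤ (t.descFactorial e : ℝ) := by
    have h1 : ((t + 1 - e : ℕ) : ℝ) ^ e ≤ (t.descFactorial e : ℝ) := by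
      exact_mod_cast Nat.pow_sub_le_descFactorial t e
    refine le_trans ?_ h1
    gcongr
    rw [div_le_iff₀ two_pos]
    exact_mod_cast (by omega : t ≤ (t + 1 - e) * 2)
  have b3 : ((t:ℝ) / 2) ^ e * (ε / (16 + 4 * ε) / q) ≤
      (t.descFactorial e : ℝ) * (1 / ((q : ℝ) + 1) - 1 / R) := by
    gcongr
  refine le_trans ?_ b3
  obtain ⟨f, rfl⟩ : ∃ f, e = f + 1 := ⟨e - 1, by omega⟩
  rw [Nat.add_sub_cancel, hc]
  set E : ℝ := ((f + 1 : ℕ) : ℝ)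
  have : ε / (16 + 4 * ε) / (2 ^ (f+1) * (E * (E + 1))) / Real.sqrt q * (E * (E + 1) * (t:ℝ) ^ f) =
      (ε / (16 + 4 * ε) / 2 ^ (f+1) * (t:ℝ)^f / q) * Real.sqrt q := by
    have : (q:ℝ) ≠ 0 := q0.ne'
    field_simp
    rw [sq, hss]
    ring
  rw [this]
  have : ((t:ℝ) / 2) ^ (f+1) * (ε / (16 + 4 * ε) / q) =
    (ε / (16 + 4 * ε) / 2 ^ (f+1) * (t:ℝ)^f / q) * t := by
    rw [div_pow]; field_simp; ring
  rw [this]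
  gcongr

set_option maxHeartbeats 2000000 in
/-- For `m ≥ q^{d/(d+1)}(log q)³`, the number of general position sets
of size `m` in `𝔽_q^d` is at most `C(⌈(1+ε)q⌉, m)`. -/
theorem counting_general_position_sets_fixed_size
    (d : ℕ) (hd : 2 ≤ d) (ε : ℝ) (hε : 0 < ε) :
    ∃ Q : ℕ, ∀ q : ℕ, Q ≤ q → IsPrimePow q →
      ∀ (F : Type) [Field F] [Fintype F], Fintype.card F = q →
        ∀ m : ℕ, (q : ℝ) ^ ((d : ℝ) / ((d : ℝ) + 1)) * (Real.logb 2 q) ^ 3 ≤ (m : ℝ) →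
          ({P : Finset (Fin d → F) | P.card = m ∧ IsGenPos F d ↑P}).ncard ≤
            Nat.choose ⌈(1 + ε) * (q : ℝ)⌉₊ m := by
  obtain ⟨e, rfl⟩ : ∃ e, d = e + 1 := ⟨d - 1, by omega⟩
  have he : 1 ≤ e := by omega
  have e0 : (1:ℝ) ≤ e := by exact_mod_cast he
  set c : ℝ := ε / (16 + 4 * ε) / (2 ^ e * (e * (e + 1))) with hc
  have c0 : 0 < c := by positivity
  have c1 : c ≤ 1 := by
    rw [hc, div_div, div_le_one (by positivity)]
    have h1 : (1:ℝ) ≤ 2 ^ e * (e * (e + 1)) := by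
      have h2 : (1:ℝ) ≤ 2 ^ e := one_le_pow₀ one_le_two
      have : (1:ℝ) ≤ e * (e+1) := by nlinarith
      nlinarith
    nlinarith
  set C : ℝ := (e + 1) / c with hC
  set ρ : ℝ := (1 + ε) / (1 + ε / 2) with hρ
  have ρ1 : 1 < ρ := by rw [hρ, one_lt_div (by positivity)]; linarith
  have lρ : 0 < Real.log ρ := Real.log_pos ρ1
  obtain ⟨Q, hQ⟩ := asym C (1 + 8 / ε + (e + 2) / Real.log ρ) (by positivity) (by positivity)
  refine ⟨max Q (max ⌈8 / ε⌉₊ ((2 * e + 2) ^ 2)), ?_⟩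
  intro q hq _ F _ _ hF m hm
  obtain ⟨hl, hmain⟩ := hQ q (le_trans (le_max_left _ _) hq)
  have hq8 : 8 / ε ≤ q := Nat.ceil_le.1
    (le_trans (le_trans (le_max_left _ _) (le_max_right _ _)) hq)
  have hqe : (2 * e + 2) ^ 2 ≤ q := le_trans (le_trans (le_max_right _ _) (le_max_right _ _)) hq
  have hq2 : 2 ≤ q := by nlinarith
  have q1 : (1:ℝ) ≤ q := by exact_mod_cast (by omega : 1 ≤ q)
  have q0 : (0:ℝ) < q := by linarith
  set s := Real.sqrt q with hs
  have s0 : 0 < s := Real.sqrt_pos.2 q0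
  have s1 : 1 ≤ s := Real.one_le_sqrt.2 q1
  set l := Real.log q with hl'
  set t := ⌈s⌉₊ with ht
  set R := ⌈(1 + ε / 4) * q⌉₊ with hR
  set k := ⌈C * s * l⌉₊ with hk
  have C0 : 0 < C := by positivity
  have hst : s ≤ t := Nat.le_ceil _
  have hts : (t:ℝ) ≤ s + 1 := (Nat.ceil_lt_add_one s0.le).le
  have hks : (k:ℝ) ≤ C * s * l + 1 := (Nat.ceil_lt_add_one (by positivity)).le
  have hRR : (1 + ε / 4) * q ≤ (R:ℝ) := Nat.le_ceil _
  have hRu : (R:ℝ) ≤ (1 + ε / 4) * q + 1 := (Nat.ceil_lt_add_one (by positivity)).le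
  have hes : (2 * e + 2 : ℝ) ≤ s := by
    apply Real.le_sqrt_of_sq_le
    exact_mod_cast hqe
  have het : 2 * e + 2 ≤ t := by exact_mod_cast hes.trans hst
  set W := s + 2 + C * s * l with hW
  have W0 : 2 ≤ W := by
    have : 0 ≤ C * s * l := by positivity
    linarith
  have hWl : W ≤ W * l := by nlinarith
  have hP23 : (q:ℝ) ^ (2/3 : ℝ) ≤ m := by
    refine le_trans ?_ hm
    have h1 : (q:ℝ) ^ (2/3 : ℝ) ≤ (q : ℝ) ^ (((e+1 : ℕ) : ℝ) / (((e+1 : ℕ) : ℝ) + 1)) := by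
      apply Real.rpow_le_rpow_of_exponent_le q1
      push_cast
      rw [div_le_div_iff₀ (by norm_num) (by positivity)]
      linarith
    have h2 : 1 ≤ Real.logb 2 q := by
      rw [Real.logb, le_div_iff₀ (Real.log_pos one_lt_two), one_mul]
      exact Real.log_le_log two_pos (by exact_mod_cast hq2)
    have h3 : 1 ≤ Real.logb 2 q ^ 3 := one_le_pow₀ h2
    calc (q:ℝ) ^ (2/3 : ℝ) = (q:ℝ) ^ (2/3 : ℝ) * 1 := (mul_one _).symm
      _ ≤ _ := by gcongr
  have hPq : (q:ℝ) ^ (2/3 : ℝ) ≤ q := by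
    calc (q:ℝ) ^ (2/3 : ℝ) ≤ (q:ℝ) ^ (1:ℝ) := Real.rpow_le_rpow_of_exponent_le q1 (by norm_num)
      _ = q := Real.rpow_one _
  have p1 : 0 ≤ 8 / ε * (W * l) := by positivity
  have p2 : 0 ≤ (e + 2) / Real.log ρ * (W * l) := by positivity
  have p3 : 0 ≤ W * l := by positivity
  have hexp : (1 + 8 / ε + (e + 2) / Real.log ρ) * (W * l) =
    W * l + 8 / ε * (W * l) + (e + 2) / Real.log ρ * (W * l) := by ring
  rw [hexp] at hmain
  have m1 : t ≤ m := by
    have : (t:ℝ) ≤ m := by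
      have : 0 ≤ C * s * l := by positivity
      linarith
    exact_mod_cast this
  have m2 : W ≤ ε / 8 * q := by
    have : 8 / ε * (W * l) ≤ q := by linarith
    rw [div_mul_eq_mul_div, div_le_iff₀ hε] at this
    linarith
  have m3 : (e + 2) * (W * l) ≤ m * Real.log ρ := by
    have : (e + 2) / Real.log ρ * (W * l) ≤ m := by linarith
    rwa [div_mul_eq_mul_div, div_le_iff₀ lρ] at this
  have R0 : 0 < R := by
    have : (0:ℝ) < R := lt_of_lt_of_le (by positivity) hRR
    exact_mod_cast this
  have hβ1 : c / s ≤ 1 := by rw [div_le_one s0]; linarith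
  have hcb := count_bound F e he t (by omega) R R0 (c / s) hβ1
    (by rw [hF]; exact beta_cond e he ε hε q t R c hc (by omega) hq8 hst (by omega) hRR) k
    (by
      rw [hF]
      have h1 : (1 - c / s) ^ k ≤ Real.exp (-((e + 1) * l)) := by
        have h2 : 1 - c / s ≤ Real.exp (-(c / s)) := by
          have := Real.add_one_le_exp (-(c / s)); linarith
        calc (1 - c / s) ^ k ≤ Real.exp (-(c / s)) ^ k := by
              gcongr
          _ = Real.exp (k * (-(c / s))) := by rw [← Real.exp_nat_mul]
          _ ≤ _ := by
            apply Real.exp_le_exp.2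
            have h3 : C * s * l ≤ k := Nat.le_ceil _
            have h4 : (e + 1) * l = (C * s * l) * (c / s) := by rw [hC]; field_simp
            have h5 : 0 ≤ c / s := by positivity
            rw [h4]
            nlinarith
      have h6 : (q:ℝ) ^ (e+1) = Real.exp ((e + 1) * l) := by
        have : ((e:ℝ) + 1) = ((e + 1 : ℕ) : ℝ) := by push_cast; ring
        rw [this, Real.exp_nat_mul, Real.exp_log q0]
      calc (q:ℝ) ^ (e+1) * (1 - c / s) ^ k ≤ (q:ℝ) ^ (e+1) * Real.exp (-((e + 1) * l)) := by gcongr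
        _ = 1 := by rw [h6, ← Real.exp_add]; simp
        _ ≤ R := by exact_mod_cast R0) m m1
  rw [hF] at hcb
  refine hcb.trans ?_
  set A := R + k + t with hA
  set B := ⌈(1 + ε) * (q : ℝ)⌉₊ with hB
  have hBB : (1 + ε) * q ≤ (B:ℝ) := Nat.le_ceil _
  have hAA : (A:ℝ) ≤ (1 + ε / 2) * q := by
    rw [hA]; push_cast; linarith
  have hAB : A ≤ B := by
    have : (A:ℝ) ≤ B := by nlinarith
    exact_mod_cast this
  have A0 : 0 < A := by omega
  have hshift : (R + k).choose (m - t) ≤ A.choose m := by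
    have := choose_shift (R + k) (m - t) t
    rwa [Nat.sub_add_cancel m1] at this
  have hpow : (q ^ (e+1)) ^ t * (q ^ (e+1) + 1) ^ k ≤ q ^ ((e + 2) * (t + k)) := by
    have a1 : q ^ (e+1) ≤ q ^ (e+2) := Nat.pow_le_pow_right (by omega) (by omega)
    have a2 : q ^ (e+1) + 1 ≤ q ^ (e+2) := by
      have : 1 ≤ q ^ (e+1) := Nat.one_le_pow _ _ (by omega)
      rw [pow_succ q (e+1)]
      nlinarith
    calc _ ≤ (q ^ (e+2)) ^ t * (q ^ (e+2)) ^ k := by gcongr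
      _ = _ := by rw [← pow_add, ← pow_mul]
  have hbig : q ^ ((e + 2) * (t + k)) * A ^ m ≤ B ^ m := by
    have h1 : (q:ℝ) ^ ((e + 2) * (t + k)) ≤ ρ ^ m := by
      have ρ0 : 0 < ρ := by linarith
      rw [← Real.log_le_log_iff (by positivity) (by positivity), Real.log_pow, Real.log_pow]
      refine le_trans ?_ m3
      push_cast
      rw [mul_assoc]
      gcongr
      linarith
    have h2 : ρ * A ≤ B := by
      refine le_trans ?_ hBB
      calc ρ * A ≤ ρ * ((1 + ε / 2) * q) := by gcongr
        _ = _ := by rw [hρ]; field_simp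
    have : (q:ℝ) ^ ((e + 2) * (t + k)) * (A:ℝ) ^ m ≤ (B:ℝ) ^ m := by
      calc _ ≤ ρ ^ m * (A:ℝ) ^ m := by gcongr
        _ = (ρ * A) ^ m := (mul_pow _ _ _).symm
        _ ≤ _ := by gcongr
    exact_mod_cast this
  refine Nat.le_of_mul_le_mul_left ?_ (Nat.pow_pos (n := m) A0)
  calc A ^ m * ((q ^ (e+1)) ^ t * ((q ^ (e+1) + 1) ^ k * (R + k).choose (m - t)))
      = A ^ m * ((q ^ (e+1)) ^ t * (q ^ (e+1) + 1) ^ k) * (R + k).choose (m - t) := by ring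
    _ ≤ A ^ m * (q ^ ((e + 2) * (t + k))) * A.choose m := by gcongr
    _ = q ^ ((e + 2) * (t + k)) * A ^ m * A.choose m := by ring
    _ ≤ B ^ m * A.choose m := by gcongr
    _ ≤ A ^ m * B.choose m := choose_ratio A B hAB m
end

section
/- There exist an absolute constant c > 0 and a threshold Q such that for every prime power q ≥ Q and every integer m with m ≥ q^{1/2}·(log q)², the number of general position subsets of 𝔽_q² of size exactly m is at most the binomial coefficient C(⌈cq⌉, m), where log is base 2. -/
open Finset in
theorem kw_lemma {V : Type*} [DecidableEq V] (r : V → V → Prop) [DecidableRel r] (R m D : ℕ) (β : ℝ)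
    (hβ : β ≤ 1) (V0 : Finset V)
    (h : ∀ S ⊆ V0, R < S.card → ∃ x ∈ S, β * S.card ≤ ((S.filter (fun y => y ≠ x ∧ r x y)).card : ℝ))
    (hD : ∀ j ≤ m, Nat.choose R j ≤ D) :
    ∀ n : ℕ, ∀ S ⊆ V0, S.card = n → ∀ k j : ℕ, j ≤ m → (n : ℝ) * (1 - β) ^ k ≤ R →
      ((S.powersetCard j).filter (fun B => ∀ x ∈ B, ∀ y ∈ B, x ≠ y → ¬ r x y)).card ≤ (n + 1) ^ k * D := by
  intro n
  induction n using Nat.strong_induction_on with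
  | _ n ih =>
  intro S hS hn k j hj hk
  by_cases hR : S.card ≤ R
  · calc _ ≤ (S.powersetCard j).card := card_filter_le _ _
      _ = S.card.choose j := card_powersetCard _ _
      _ ≤ R.choose j := Nat.choose_le_choose _ hR
      _ ≤ D := hD j hj
      _ ≤ _ := Nat.le_mul_of_pos_left _ (by positivity)
  push Not at hR
  obtain ⟨v, hv, hdeg⟩ := h S hS hR
  have hnpos : 0 < n := by omega
  cases k with
  | zero =>
    exfalso
    have : (n : ℝ) ≤ R := by simpa using hk
    have : n ≤ R := by exact_mod_cast this
    omega
  | succ k =>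
    have hb : (0:ℝ) ≤ 1 - β := by linarith
    -- sets avoiding v
    have h1 := ih (n - 1) (by omega) (S.erase v) ((erase_subset _ _).trans hS)
      (by rw [card_erase_of_mem hv, hn]) (k+1) j hj (by
        refine le_trans ?_ hk
        apply mul_le_mul_of_nonneg_right _ (by positivity)
        exact_mod_cast Nat.sub_le _ _)
    have hn1 : n - 1 + 1 = n := by omega
    rw [hn1] at h1
    -- sets containing v
    have h2 : ((S.powersetCard j).filter (fun B => (∀ x ∈ B, ∀ y ∈ B, x ≠ y → ¬ r x y) ∧ v ∈ B)).card ≤ n ^ k * D := by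
      cases j with
      | zero =>
        rw [card_eq_zero.2]
        · exact Nat.zero_le _
        · ext B
          simp only [powersetCard_zero, mem_filter, mem_singleton, notMem_empty, iff_false]
          rintro ⟨rfl, _, hB⟩
          simp at hB
      | succ j =>
        set T := (S.erase v).filter (fun y => ¬ r v y) with hT
        have hTS : T ⊆ S.erase v := filter_subset _ _
        have hTc : T.card ≤ n - 1 := by
          calc T.card ≤ _ := card_le_card hTS
            _ = n - 1 := by rw [card_erase_of_mem hv, hn]
        have hsum : T.card + (S.filter (fun y => y ≠ v ∧ r v y)).card + 1 = S.card := by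
          have e1 := card_filter_add_card_filter_not (s := S.erase v) (fun y => r v y)
          have e2 : (S.erase v).filter (fun y => r v y) = S.filter (fun y => y ≠ v ∧ r v y) := by
            ext y; simp only [mem_filter, mem_erase]; tauto
          have e3 : ((S.erase v).filter (fun y => ¬ r v y)).card = T.card := by rw [hT]
          rw [e2, card_erase_of_mem hv] at e1
          simp only [hT]
          have : 0 < S.card := card_pos.2 ⟨v, hv⟩
          omega
        have hTr : (T.card : ℝ) ≤ n * (1 - β) := by
          have : (T.card : ℝ) + ((S.filter (fun y => y ≠ v ∧ r v y)).card : ℝ) + 1 = n := by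
            rw [← hn]; exact_mod_cast hsum
          rw [hn] at hdeg
          linarith
        have h3 := ih T.card (by omega) T (hTS.trans ((erase_subset _ _).trans hS)) rfl k j (by omega) (by
          refine le_trans ?_ hk
          rw [pow_succ', ← mul_assoc]
          exact mul_le_mul_of_nonneg_right hTr (by positivity))
        calc _ ≤ ((T.powersetCard j).filter (fun B => ∀ x ∈ B, ∀ y ∈ B, x ≠ y → ¬ r x y)).card := by
              apply card_le_card_of_injOn (fun B => B.erase v)
              · intro B hB
                simp only [coe_filter, mem_powersetCard, Set.mem_ofPred_eq] at hB ⊢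
                obtain ⟨⟨hBS, hBc⟩, hBi, hvB⟩ := hB
                refine ⟨⟨?_, ?_⟩, ?_⟩
                · intro y hy
                  rw [mem_erase] at hy
                  rw [hT, mem_filter, mem_erase]
                  exact ⟨⟨hy.1, hBS hy.2⟩, hBi v hvB y hy.2 (Ne.symm hy.1)⟩
                · rw [card_erase_of_mem hvB, hBc]; rfl
                · intro x hx y hy
                  exact hBi x (mem_of_mem_erase hx) y (mem_of_mem_erase hy)
              · intro B hB B' hB' hE
                simp only [coe_filter, Set.mem_ofPred_eq] at hB hB'
                simp only at hE
                rw [← insert_erase hB.2.2, hE, insert_erase hB'.2.2]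
          _ ≤ _ := h3
          _ ≤ n ^ k * D := by
            apply Nat.mul_le_mul_right
            apply Nat.pow_le_pow_left
            omega
    have hsplit : ((S.powersetCard j).filter (fun B => ∀ x ∈ B, ∀ y ∈ B, x ≠ y → ¬ r x y)) ⊆
        (((S.erase v).powersetCard j).filter (fun B => ∀ x ∈ B, ∀ y ∈ B, x ≠ y → ¬ r x y)) ∪
        ((S.powersetCard j).filter (fun B => (∀ x ∈ B, ∀ y ∈ B, x ≠ y → ¬ r x y) ∧ v ∈ B)) := by
      intro B hB
      rw [mem_union, mem_filter, mem_filter]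
      rw [mem_filter] at hB
      by_cases hvB : v ∈ B
      · exact Or.inr ⟨hB.1, hB.2, hvB⟩
      · left
        refine ⟨?_, hB.2⟩
        rw [mem_powersetCard] at hB ⊢
        exact ⟨subset_erase.2 ⟨hB.1.1, hvB⟩, hB.1.2⟩
    calc _ ≤ _ := card_le_card hsplit
      _ ≤ _ := card_union_le _ _
      _ ≤ n ^ (k+1) * D + n ^ k * D := add_le_add h1 h2
      _ = (n ^ k * (n + 1)) * D := by ring
      _ ≤ ((n+1) ^ k * (n+1)) * D := by
        gcongr
        omega
      _ = _ := by ring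

/-- The orientation determinant of three points. -/
def det3 {F : Type*} [Field F] (p x y : Fin 2 → F) : F :=
  (x 0 - p 0) * (y 1 - p 1) - (x 1 - p 1) * (y 0 - p 0)

/-- The slope of the line through two points. -/
noncomputable def slp {F : Type*} [Field F] (p x : Fin 2 → F) : Option F :=
  open Classical in if x 0 = p 0 then none else some ((x 1 - p 1) / (x 0 - p 0))

theorem det3_of_slp {F : Type*} [Field F] {p x y : Fin 2 → F} (h : slp p x = slp p y) :
    det3 p x y = 0 := by
  unfold slp at h
  unfold det3
  by_cases hx : x 0 = p 0
  · by_cases hy : y 0 = p 0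
    · simp [hx, hy]
    · simp [hx, hy] at h
  · by_cases hy : y 0 = p 0
    · simp [hx, hy] at h
    · simp only [hx, hy, if_false, Option.some.injEq] at h
      have h1 : x 0 - p 0 ≠ 0 := sub_ne_zero.2 hx
      have h2 : y 0 - p 0 ≠ 0 := sub_ne_zero.2 hy
      rw [div_eq_div_iff h1 h2] at h
      linear_combination -h

theorem det3_ne {F : Type*} [Field F] {P : Set (Fin 2 → F)} (hP : IsGenPos F 2 P)
    {a b c : Fin 2 → F} (ha : a ∈ P) (hb : b ∈ P) (hc : c ∈ P) (hab : a ≠ b) (hac : a ≠ c) (hbc : b ≠ c) :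
    det3 a b c ≠ 0 := by
  classical
  intro h0
  have hs := hP {a, b, c} (by
    intro z hz
    simp only [Finset.coe_insert, Finset.coe_singleton, Set.mem_insert_iff, Set.mem_singleton_iff] at hz
    rcases hz with rfl | rfl | rfl <;> assumption) (Finset.card_eq_three.2 ⟨a, b, c, hab, hac, hbc, rfl⟩)
  have hinj : Function.Injective (fun i : Fin 3 => (⟨![a, b, c] i, by fin_cases i <;> simp⟩ : ({a, b, c} : Finset (Fin 2 → F)))) := by
    intro i j hij
    simp only [Subtype.mk.injEq] at hij
    fin_cases i <;> fin_cases j <;> simp_all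
  have hf := hs.comp_embedding ⟨_, hinj⟩
  have key : ∀ w : Fin 3 → F, w 0 + w 1 + w 2 = 0 →
      (∀ i, w 0 * a i + w 1 * b i + w 2 * c i = 0) → ∀ i, w i = 0 := by
    intro w hw hw2 i
    rw [affineIndependent_iff] at hf
    refine hf Finset.univ w ?_ ?_ i (Finset.mem_univ i)
    · rw [Fin.sum_univ_three]; exact hw
    · rw [Fin.sum_univ_three]
      ext i
      simpa using hw2 i
  unfold det3 at h0
  have k1 := key ![-((c 0 - a 0) - (b 0 - a 0)), c 0 - a 0, - (b 0 - a 0)] (by simp)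
    (by
      intro i
      fin_cases i
      · simp; ring
      · simp; linear_combination -h0)
  have k2 := key ![-((c 1 - a 1) - (b 1 - a 1)), c 1 - a 1, - (b 1 - a 1)] (by simp)
    (by
      intro i
      fin_cases i
      · simp; linear_combination h0
      · simp; ring)
  have e1 := k1 2
  have e2 := k2 2
  simp at e1 e2
  apply hab
  ext i
  fin_cases i
  · simp; linear_combination e1
  · simp; linear_combination e2

theorem det3_trans {F : Type*} [Field F] {x y a b c : Fin 2 → F} (hxy : x ≠ y)
    (ha : det3 a x y = 0) (hb : det3 b x y = 0) (hc : det3 c x y = 0) : det3 a b c = 0 := by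
  unfold det3 at *
  have h0 : (x 0 - y 0) * ((b 0 - a 0) * (c 1 - a 1) - (b 1 - a 1) * (c 0 - a 0)) = 0 := by
    linear_combination (b 0 - c 0) * ha + (c 0 - a 0) * hb + (a 0 - b 0) * hc
  have h1 : (x 1 - y 1) * ((b 0 - a 0) * (c 1 - a 1) - (b 1 - a 1) * (c 0 - a 0)) = 0 := by
    linear_combination (b 1 - c 1) * ha + (c 1 - a 1) * hb + (a 1 - b 1) * hc
  by_contra hne
  apply hxy
  ext i
  fin_cases i
  · exact sub_eq_zero.1 ((mul_eq_zero.1 h0).resolve_right hne)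
  · exact sub_eq_zero.1 ((mul_eq_zero.1 h1).resolve_right hne)

open Finset in
theorem genPos_card_le {F : Type*} [Field F] [Fintype F] {P : Finset (Fin 2 → F)}
    (hP : IsGenPos F 2 (P : Set (Fin 2 → F))) : P.card ≤ Fintype.card F + 2 := by
  classical
  rcases P.eq_empty_or_nonempty with rfl | ⟨p, hp⟩
  · simp
  have : (P.erase p).card ≤ (univ : Finset (Option F)).card := by
    apply card_le_card_of_injOn (slp p) (by simp)
    intro x hx y hy hxy
    by_contra hne
    simp only [coe_erase, Set.mem_sdiff, mem_coe, Set.mem_singleton_iff] at hx hy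
    exact det3_ne hP (mem_coe.2 hp) (mem_coe.2 hx.1) (mem_coe.2 hy.1) (Ne.symm hx.2) (Ne.symm hy.2) hne (det3_of_slp hxy)
  rw [card_erase_of_mem hp, card_univ, Fintype.card_option] at this
  omega

open Finset Classical in
theorem degree_lemma {F : Type*} [Field F] [Fintype F] {P : Finset (Fin 2 → F)}
    (hP : IsGenPos F 2 (P : Set (Fin 2 → F))) (S : Finset (Fin 2 → F))
    (hS : 2 * (Fintype.card F + 1) < S.card) :
    ∃ x ∈ S, ((P.card : ℝ) / (4 * (Fintype.card F + 1))) * S.card ≤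
      ((S.filter (fun y => y ≠ x ∧ ∃ p ∈ P, slp p x = slp p y)).card : ℝ) := by
  set q := Fintype.card F
  by_contra hcon
  push Not at hcon
  have hSr : (2 * ((q:ℝ) + 1)) < S.card := by exact_mod_cast hS
  have hq1 : (0:ℝ) < (q:ℝ) + 1 := by positivity
  -- lower bound for each p
  have hlow : ∀ p ∈ P, (S.card : ℝ) ^ 2 / (2 * (q + 1)) ≤
      ∑ x ∈ S, ((S.filter (fun y => y ≠ x ∧ slp p x = slp p y)).card : ℝ) := by
    intro p hp
    have e1 : ∀ x ∈ S, ((S.filter (fun y => y ≠ x ∧ slp p x = slp p y)).card : ℝ) =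
        ((S.filter (fun y => slp p y = slp p x)).card : ℝ) - 1 := by
      intro x hx
      have : S.filter (fun y => y ≠ x ∧ slp p x = slp p y) = (S.filter (fun y => slp p y = slp p x)).erase x := by
        ext y; simp only [mem_filter, mem_erase]
        constructor
        · rintro ⟨a, b, c⟩; exact ⟨b, a, c.symm⟩
        · rintro ⟨b, a, c⟩; exact ⟨a, b, c.symm⟩
      rw [this, eq_sub_iff_add_eq]
      exact_mod_cast card_erase_add_one (s := S.filter (fun y => slp p y = slp p x)) (by simp [hx])
    rw [sum_congr rfl e1, sum_sub_distrib]
    have e2 : ∑ x ∈ S, ((S.filter (fun y => slp p y = slp p x)).card : ℝ) =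
        ∑ c : Option F, ((S.filter (fun y => slp p y = c)).card : ℝ) ^ 2 := by
      rw [← sum_fiberwise S (slp p)]
      apply sum_congr rfl
      intro c _
      rw [sum_congr rfl (g := fun _ => ((S.filter (fun y => slp p y = c)).card : ℝ))]
      · rw [sum_const, nsmul_eq_mul, sq]
      · intro x hx
        rw [(mem_filter.1 hx).2]
    have e3 : ∑ c : Option F, ((S.filter (fun y => slp p y = c)).card : ℝ) = S.card := by
      have := card_eq_sum_card_fiberwise (f := slp p) (s := S) (t := univ) (by simp)
      rw [this]; push_cast; rfl
    have e4 := sq_sum_le_card_mul_sum_sq (s := (univ : Finset (Option F))) (f := fun c => ((S.filter (fun y => slp p y = c)).card : ℝ))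
    rw [e3, card_univ, Fintype.card_option] at e4
    rw [e2]
    simp only [sum_const, nsmul_eq_mul, mul_one]
    push_cast at e4
    change _ ≤ ((q:ℝ) + 1) * _ at e4
    rw [div_le_iff₀ (by positivity)]
    nlinarith
  have hup : ∀ x ∈ S, ∑ p ∈ P, ((S.filter (fun y => y ≠ x ∧ slp p x = slp p y)).card : ℝ) ≤
      2 * ((S.filter (fun y => y ≠ x ∧ ∃ p ∈ P, slp p x = slp p y)).card : ℝ) := by
    intro x hx
    have : ∑ p ∈ P, (S.filter (fun y => y ≠ x ∧ slp p x = slp p y)).card ≤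
      2 * (S.filter (fun y => y ≠ x ∧ ∃ p ∈ P, slp p x = slp p y)).card := by
      have c1 : ∀ p ∈ P, (S.filter (fun y => y ≠ x ∧ slp p x = slp p y)) =
          ((S.filter (fun y => y ≠ x ∧ ∃ p ∈ P, slp p x = slp p y)).filter (fun y => slp p x = slp p y)) := by
        intro p hp
        ext y
        simp only [mem_filter]
        constructor
        · rintro ⟨a, b, c⟩; exact ⟨⟨a, b, p, hp, c⟩, c⟩
        · rintro ⟨⟨a, b, _⟩, c⟩; exact ⟨a, b, c⟩
      rw [sum_congr rfl (fun p hp => by rw [c1 p hp])]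
      have c2 := sum_card_bipartiteAbove_eq_sum_card_bipartiteBelow (s := P)
        (t := S.filter (fun y => y ≠ x ∧ ∃ p ∈ P, slp p x = slp p y)) (fun p y => slp p x = slp p y)
      simp only [bipartiteAbove, bipartiteBelow] at c2
      rw [c2, mul_comm]
      apply sum_le_card_nsmul
      intro y hy
      by_contra hlt
      push Not at hlt
      obtain ⟨a, ha, b, hb, c, hc, hab, hac, hbc⟩ := two_lt_card.1 hlt
      rw [mem_filter] at ha hb hc hy
      exact det3_ne hP (mem_coe.2 ha.1) (mem_coe.2 hb.1) (mem_coe.2 hc.1) hab hac hbc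
        (det3_trans hy.2.1.symm (det3_of_slp ha.2) (det3_of_slp hb.2) (det3_of_slp hc.2))
    exact_mod_cast this
  have t1 : (P.card : ℝ) * ((S.card : ℝ) ^ 2 / (2 * (q + 1))) ≤
      ∑ p ∈ P, ∑ x ∈ S, ((S.filter (fun y => y ≠ x ∧ slp p x = slp p y)).card : ℝ) := by
    rw [← nsmul_eq_mul]
    exact card_nsmul_le_sum _ _ _ hlow
  rw [sum_comm] at t1
  have t2 : ∑ x ∈ S, ∑ p ∈ P, ((S.filter (fun y => y ≠ x ∧ slp p x = slp p y)).card : ℝ) <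
      ∑ x ∈ S, 2 * (((P.card : ℝ) / (4 * (q + 1))) * S.card) := by
    apply sum_lt_sum_of_nonempty (card_pos.1 (by omega))
    intro x hx
    have := hup x hx
    have := hcon x hx
    linarith
  rw [sum_const, nsmul_eq_mul] at t2
  have : (P.card : ℝ) * ((S.card : ℝ) ^ 2 / (2 * (q + 1))) = S.card * (2 * (((P.card : ℝ) / (4 * (q + 1))) * S.card)) := by
    field_simp
    ring
  linarith

theorem choose_mono_half {N m : ℕ} (h : 2 * m ≤ N) : ∀ j ≤ m, N.choose j ≤ N.choose m := by
  intro j hj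
  induction m, hj using Nat.le_induction with
  | base => exact le_rfl
  | succ m _ ih => exact (ih (by omega)).trans (Nat.choose_le_succ_of_lt_half_left (by omega))

theorem choose_scale (a N m : ℕ) (ha : 1 ≤ a) : a ^ m * N.choose m ≤ (a * N).choose m := by
  have h : a ^ m * N.descFactorial m ≤ (a * N).descFactorial m := by
    rw [Nat.descFactorial_eq_prod_range, Nat.descFactorial_eq_prod_range]
    conv_lhs => rw [← Finset.card_range m, ← Finset.prod_const, Finset.card_range, ← Finset.prod_mul_distrib]
    apply Finset.prod_le_prod'
    intro i _
    rw [Nat.mul_sub]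
    have : i ≤ a * i := Nat.le_mul_of_pos_left _ ha
    omega
  rw [Nat.descFactorial_eq_factorial_mul_choose, Nat.descFactorial_eq_factorial_mul_choose] at h
  have hp := Nat.factorial_pos m
  apply Nat.le_of_mul_le_mul_left _ hp
  calc _ = a ^ m * (m.factorial * N.choose m) := by ring
    _ ≤ _ := h

open Finset Classical in
theorem count_lemma {F : Type*} [Field F] [Fintype F] (m t k D : ℕ) (htm : t ≤ m)
    (ht : t ≤ 4 * (Fintype.card F + 1))
    (hk : ((Fintype.card F : ℝ) ^ 2) * (1 - (t : ℝ) / (4 * (Fintype.card F + 1))) ^ k ≤ 2 * (Fintype.card F + 1))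
    (hD : ∀ j ≤ m, (2 * (Fintype.card F + 1)).choose j ≤ D) :
    ((univ : Finset (Finset (Fin 2 → F))).filter (fun P : Finset (Fin 2 → F) => P.card = m ∧ IsGenPos F 2 (P : Set (Fin 2 → F)))).card
      ≤ (Fintype.card F ^ 2 + 1) ^ (t + k) * D := by
  set q := Fintype.card F with hq
  have hcard : Fintype.card (Fin 2 → F) = q ^ 2 := by simp [hq]
  let r : Finset (Fin 2 → F) → (Fin 2 → F) → (Fin 2 → F) → Prop := fun P x y => ∃ p ∈ P, slp p x = slp p y
  let I : Finset (Fin 2 → F) → Finset (Finset (Fin 2 → F)) := fun P =>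
    ((univ \ P).powersetCard (m - t)).filter (fun B => ∀ x ∈ B, ∀ y ∈ B, x ≠ y → ¬ r P x y)
  have hI : ∀ P : Finset (Fin 2 → F), P.card = t → IsGenPos F 2 (P : Set (Fin 2 → F)) →
      (I P).card ≤ (q ^ 2 + 1) ^ k * D := by
    intro P hPc hP
    have hle : (univ \ P).card ≤ q ^ 2 := by
      rw [← hcard]; exact card_le_univ _
    have hb : (t : ℝ) / (4 * (q + 1)) ≤ 1 := by
      rw [div_le_one (by positivity)]
      exact_mod_cast ht
    have hkw := kw_lemma (r P) (2 * (q + 1)) m D ((t : ℝ) / (4 * (q + 1))) hb (univ \ P) ?_ hD _ (univ \ P)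
      subset_rfl rfl k (m - t) (Nat.sub_le _ _) ?_
    · refine le_trans (le_of_eq ?_) (hkw.trans ?_)
      · simp only [I]
        congr!
      · gcongr
    · intro S _ hSR
      have := degree_lemma hP S hSR
      rw [hPc] at this
      exact this
    · push_cast
      refine le_trans (mul_le_mul_of_nonneg_right ?_ (pow_nonneg (by linarith) _)) hk
      exact_mod_cast hle
  have hsub : ((univ : Finset (Finset (Fin 2 → F))).filter (fun P : Finset (Fin 2 → F) => P.card = m ∧ IsGenPos F 2 (P : Set (Fin 2 → F)))) ⊆
      (((univ : Finset (Fin 2 → F)).powersetCard t).filter (fun P : Finset (Fin 2 → F) => IsGenPos F 2 (P : Set (Fin 2 → F)))).biUnion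
        (fun P : Finset (Fin 2 → F) => (I P).image (fun B => P ∪ B)) := by
    intro A hA
    simp only [mem_filter, mem_univ, true_and] at hA
    obtain ⟨hAc, hA⟩ := hA
    obtain ⟨P, hPA, hPc⟩ := exists_subset_card_eq (s := A) (n := t) (by omega)
    rw [mem_biUnion]
    refine ⟨P, ?_, ?_⟩
    · rw [mem_filter, mem_powersetCard]
      refine ⟨⟨subset_univ _, hPc⟩, ?_⟩
      intro s hs
      exact hA s (hs.trans (by exact_mod_cast hPA))
    · rw [mem_image]
      refine ⟨A \ P, ?_, union_sdiff_of_subset hPA⟩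
      simp only [I, mem_filter, mem_powersetCard]
      refine ⟨⟨sdiff_subset_sdiff (subset_univ _) subset_rfl, ?_⟩, ?_⟩
      · rw [card_sdiff_of_subset hPA, hAc, hPc]
      · rintro x hx y hy hxy ⟨p, hp, hs⟩
        rw [mem_sdiff] at hx hy
        refine det3_ne hA (mem_coe.2 (hPA hp)) (mem_coe.2 hx.1) (mem_coe.2 hy.1) ?_ ?_ hxy (det3_of_slp hs)
        · rintro rfl; exact hx.2 hp
        · rintro rfl; exact hy.2 hp
  calc _ ≤ _ := card_le_card hsub
    _ ≤ (((univ : Finset (Fin 2 → F)).powersetCard t).filter (fun P : Finset (Fin 2 → F) => IsGenPos F 2 (P : Set (Fin 2 → F)))).card *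
        ((q ^ 2 + 1) ^ k * D) := by
      apply card_biUnion_le_card_mul
      intro P hP
      rw [mem_filter, mem_powersetCard] at hP
      exact card_image_le.trans (hI P hP.1.2 hP.2)
    _ ≤ (q ^ 2 + 1) ^ t * ((q ^ 2 + 1) ^ k * D) := by
      apply Nat.mul_le_mul_right
      calc _ ≤ _ := card_filter_le _ _
        _ = (q ^ 2).choose t := by rw [card_powersetCard, card_univ, hcard]
        _ ≤ (q ^ 2) ^ t := Nat.choose_le_pow _ _
        _ ≤ _ := Nat.pow_le_pow_left (by omega) _
    _ = _ := by ring

theorem numeric_lemma (q m : ℕ) (hq : 2 ≤ q)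
    (hm : (q : ℝ) ^ ((1 : ℝ) / 2) * (Real.logb 2 q) ^ 2 ≤ (m : ℝ)) :
    ∃ t k : ℕ, t ≤ m ∧ t ≤ 4 * (q + 1) ∧
      ((q : ℝ) ^ 2) * (1 - (t : ℝ) / (4 * (q + 1))) ^ k ≤ 2 * (q + 1) ∧
      (q ^ 2 + 1) ^ (t + k) ≤ (2 ^ 33) ^ m := by
  rw [← Real.sqrt_eq_rpow] at hm
  set s := Real.sqrt q with hs
  set L := Real.logb 2 q with hL
  have hq2 : (2 : ℝ) ≤ q := by exact_mod_cast hq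
  have hs2 : s * s = q := Real.mul_self_sqrt (by linarith)
  have hs1 : 1 ≤ s := by
    rw [hs, Real.one_le_sqrt]; linarith
  have hL1 : 1 ≤ L := by
    rw [hL, Real.le_logb_iff_rpow_le (by norm_num) (by linarith)]
    simpa using hq2
  have h2L : (2 : ℝ) ^ L = q := Real.rpow_logb (by norm_num) (by norm_num) (by linarith)
  have hlogL : Real.log q ≤ L := by
    have h2 : Real.log 2 ≤ 1 := by
      have := Real.log_two_lt_d9; linarith
    have h2p : 0 < Real.log 2 := Real.log_pos (by norm_num)
    have h0 : 0 ≤ Real.log q := Real.log_nonneg (by linarith)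
    rw [hL, Real.logb, le_div_iff₀ h2p]
    nlinarith
  have hsL : s ≤ s * L ^ 2 := le_mul_of_one_le_right (by linarith) (one_le_pow₀ hL1)
  refine ⟨⌈s⌉₊, ⌈8 * s * L⌉₊, ?_, ?_, ?_, ?_⟩
  · rw [Nat.ceil_le]; linarith
  · rw [Nat.ceil_le]; push_cast; nlinarith
  · set t := ⌈s⌉₊
    set k := ⌈8 * s * L⌉₊
    have ht : s ≤ t := Nat.le_ceil _
    have ht2 : (t : ℝ) < s + 1 := Nat.ceil_lt_add_one (by linarith)
    have hkk : 8 * s * L ≤ k := Nat.le_ceil _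
    have hβ : 1 / (8 * s) ≤ (t : ℝ) / (4 * (q + 1)) := by
      rw [div_le_div_iff₀ (by positivity) (by positivity)]
      nlinarith
    have hβ1 : (t : ℝ) / (4 * (q + 1)) ≤ 1 := by
      rw [div_le_one (by positivity)]; nlinarith
    set β := (t : ℝ) / (4 * (q + 1))
    have hpow : (1 - β) ^ k ≤ 1 / q := by
      calc (1 - β) ^ k ≤ (Real.exp (-β)) ^ k := by
            apply pow_le_pow_left₀ (by linarith)
            exact Real.one_sub_le_exp_neg β
        _ = Real.exp (-(k * β)) := by rw [← Real.exp_nat_mul]; ring_nf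
        _ ≤ Real.exp (- Real.log q) := by
            apply Real.exp_le_exp.2
            have : L ≤ k * β := by
              calc L = 8 * s * L * (1 / (8 * s)) := by field_simp
                _ ≤ k * β := by gcongr
            linarith
        _ = 1 / q := by rw [Real.exp_neg, Real.exp_log (by linarith), one_div]
    calc (q : ℝ) ^ 2 * (1 - β) ^ k ≤ (q : ℝ) ^ 2 * (1 / q) := by gcongr
      _ = (q : ℝ) := by field_simp
      _ ≤ _ := by linarith
  · set t := ⌈s⌉₊
    set k := ⌈8 * s * L⌉₊
    have ht2 : (t : ℝ) < s + 1 := Nat.ceil_lt_add_one (by linarith)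
    have hk2 : (k : ℝ) < 8 * s * L + 1 := Nat.ceil_lt_add_one (by positivity)
    have hsL1 : s ≤ s * L := by nlinarith
    have htk : ((t + k : ℕ) : ℝ) ≤ 11 * (s * L) := by
      push_cast; nlinarith
    have hfin : (3 * L) * ((t + k : ℕ) : ℝ) ≤ 33 * m := by
      calc _ ≤ (3 * L) * (11 * (s * L)) := by gcongr
        _ = 33 * (s * L ^ 2) := by ring
        _ ≤ _ := by linarith
    have : ((q : ℝ) ^ 2 + 1) ^ (t + k) ≤ (2 ^ 33) ^ m := by
      calc ((q : ℝ) ^ 2 + 1) ^ (t + k) ≤ ((q : ℝ) ^ 3) ^ (t + k) := by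
            apply pow_le_pow_left₀ (by positivity)
            nlinarith [sq_nonneg ((q:ℝ))]
        _ = (2 : ℝ) ^ ((3 * L) * ((t + k : ℕ) : ℝ)) := by
            rw [Real.rpow_mul (by norm_num), Real.rpow_natCast, mul_comm 3 L, Real.rpow_mul (by norm_num), h2L]
            congr 1
            exact_mod_cast (Real.rpow_natCast (q:ℝ) 3).symm
        _ ≤ (2 : ℝ) ^ (33 * (m : ℝ)) := Real.rpow_le_rpow_of_exponent_le (by norm_num) hfin
        _ = _ := by
            rw [← pow_mul, ← Real.rpow_natCast]; push_cast; rfl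
    exact_mod_cast this

/-- There is an absolute constant `c > 0` such that for all
sufficiently large prime powers `q` and every `m ≥ q^{1/2}(log q)²`, the number of
general position sets of size `m` in `𝔽_q²` is at most `C(⌈cq⌉, m)`. -/
theorem counting_general_position_sets_fixed_size_Fq2 :
    ∃ c : ℝ, 0 < c ∧ ∃ Q : ℕ, ∀ q : ℕ, Q ≤ q → IsPrimePow q →
      ∀ (F : Type) [Field F] [Fintype F], Fintype.card F = q →
        ∀ m : ℕ, (q : ℝ) ^ ((1 : ℝ) / 2) * (Real.logb 2 q) ^ 2 ≤ (m : ℝ) →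
          ({P : Finset (Fin 2 → F) | P.card = m ∧ IsGenPos F 2 ↑P}).ncard ≤
            Nat.choose ⌈c * (q : ℝ)⌉₊ m := by
  classical
  refine ⟨2 ^ 33 * 4, by norm_num, 2, ?_⟩
  intro q hq _ F _ _ hF m hm
  have hceil : ⌈(2 ^ 33 * 4 : ℝ) * (q : ℝ)⌉₊ = 2 ^ 33 * (4 * q) := by
    rw [show (2 ^ 33 * 4 : ℝ) * (q : ℝ) = ((2 ^ 33 * (4 * q) : ℕ) : ℝ) by push_cast; ring, Nat.ceil_natCast]
  rw [hceil]
  have hset : {P : Finset (Fin 2 → F) | P.card = m ∧ IsGenPos F 2 ↑P} =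
      (((Finset.univ : Finset (Finset (Fin 2 → F))).filter
        (fun P : Finset (Fin 2 → F) => P.card = m ∧ IsGenPos F 2 (P : Set (Fin 2 → F))) : Finset _) : Set (Finset (Fin 2 → F))) := by
    ext P; simp
  by_cases hmq : m ≤ q + 2
  · obtain ⟨t, k, htm, ht, hk, hfin⟩ := numeric_lemma q m hq hm
    rw [hset, Set.ncard_coe_finset]
    subst hF
    refine (count_lemma m t k ((4 * Fintype.card F).choose m) htm ht hk ?_).trans ?_
    · intro j hj
      refine (Nat.choose_le_choose j (by omega)).trans (choose_mono_half (by omega) j hj)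
    · exact (Nat.mul_le_mul_right _ hfin).trans (choose_scale _ _ _ (by norm_num))
  · have : {P : Finset (Fin 2 → F) | P.card = m ∧ IsGenPos F 2 ↑P} = ∅ := by
      ext P
      simp only [Set.mem_ofPred_eq, Set.mem_empty_iff_false, iff_false]
      rintro ⟨h1, h2⟩
      have := genPos_card_le h2
      omega
    rw [this]; simp
end

section
/- For every integer d ≥ 2 there exists a constant c > 0 such that for every prime power q and every point set P ⊆ 𝔽_q^d with |P| ≥ 4d·q^{d−1}, the number of (d+1)-element subsets of P that are critical coplanar is at least c·|P|^{d+1}/q. -/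
/-- A `(d+1)`-element subset of `𝔽_q^d` is critical coplanar if it is affinely dependent
(coplanar) while every proper subset of it is affinely independent. -/
def IsCriticalCoplanar (F : Type*) [Field F] (d : ℕ) (t : Finset (Fin d → F)) : Prop :=
  t.card = d + 1 ∧ ¬ AffineIndependent F ((↑) : t → (Fin d → F)) ∧
    ∀ s : Finset (Fin d → F), s ⊂ t → AffineIndependent F ((↑) : s → (Fin d → F))


theorem aux_insert {F : Type} [Field F] {d : ℕ} [DecidableEq (Fin d → F)]
    (S : Finset (Fin d → F)) (x : Fin d → F)
    (hS : AffineIndependent F ((↑) : S → (Fin d → F)))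
    (hx : x ∉ affineSpan F (S : Set (Fin d → F))) :
    AffineIndependent F (Subtype.val : {z // z ∈ insert x S} → (Fin d → F)) := by
  have hxS : x ∉ S := fun h => hx (subset_affineSpan F _ h)
  refine AffineIndependent.affineIndependent_of_notMem_span (i := ⟨x, by simp⟩) ?_ ?_
  · let e : {y : {z // z ∈ insert x S} // y ≠ ⟨x, by simp⟩} ↪ S :=
      ⟨fun y => ⟨y.1.1, by
        have h1 := y.1.2
        have h2 := y.2
        rw [Finset.mem_insert] at h1
        rcases h1 with h1 | h1
        · exact absurd (Subtype.ext h1) h2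
        · exact h1⟩, by
        intro a b h
        simp only [Subtype.mk.injEq] at h
        exact Subtype.ext (Subtype.ext h)⟩
    exact hS.comp_embedding e
  · intro h
    apply hx
    refine affineSpan_mono F ?_ h
    rintro _ ⟨⟨y, hy⟩, h2, rfl⟩
    rw [Finset.mem_insert] at hy
    rcases hy with rfl | hy
    · simp at h2
    · exact hy

theorem aux_mono {F : Type} [Field F] {d : ℕ}
    {S T : Finset (Fin d → F)} (h : S ⊆ T)
    (hT : AffineIndependent F ((↑) : T → (Fin d → F))) :
    AffineIndependent F ((↑) : S → (Fin d → F)) :=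
  AffineIndependent.mono (s := (S : Set (Fin d → F))) (t := (T : Set (Fin d → F))) hT h

theorem aux_span_card {F : Type} [Field F] [Fintype F] {d : ℕ}
    (S : Finset (Fin d → F)) (n : ℕ) (hn : S.card ≤ n + 1) :
    Nat.card (affineSpan F (S : Set (Fin d → F))) ≤ Fintype.card F ^ n := by
  classical
  rcases S.eq_empty_or_nonempty with rfl | ⟨s, hs⟩
  · simp
  have hsm : s ∈ affineSpan F (S : Set (Fin d → F)) := subset_affineSpan F _ hs
  have h1 : Nat.card (affineSpan F (S : Set (Fin d → F)))
      ≤ Nat.card (affineSpan F (S : Set (Fin d → F))).direction := by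
    refine Nat.card_le_card_of_injective
      (fun x => ⟨x.1 -ᵥ s, AffineSubspace.vsub_mem_direction x.2 hsm⟩) ?_
    intro a b h
    simp only [Subtype.mk.injEq] at h
    exact Subtype.ext (vsub_left_cancel h)
  refine h1.trans ?_
  rw [direction_affineSpan, Nat.card_eq_fintype_card, Module.card_eq_pow_finrank (K := F)]
  apply Nat.pow_le_pow_right Fintype.card_pos
  have hc : S.card = (S.card - 1) + 1 := by
    have := Finset.card_pos.2 ⟨s, hs⟩
    omega
  have := finrank_vectorSpan_image_finset_le F id S hc
  rw [Finset.image_id] at this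
  omega

theorem aux_filter_span {F : Type} [Field F] [Fintype F] {d : ℕ}
    (P S : Finset (Fin d → F)) (n : ℕ) (hn : S.card ≤ n + 1)
    [DecidablePred (· ∈ affineSpan F (S : Set (Fin d → F)))] :
    (P.filter (· ∈ affineSpan F (S : Set (Fin d → F)))).card ≤ Fintype.card F ^ n := by
  classical
  refine le_trans ?_ (aux_span_card S n hn)
  rw [← Fintype.card_coe, ← Nat.card_eq_fintype_card]
  refine Nat.card_le_card_of_injective
    (fun x => ⟨x.1, (Finset.mem_filter.1 x.2).2⟩) ?_
  intro a b h
  simp only [Subtype.mk.injEq] at h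
  exact Subtype.ext h

/-- The classes of a pencil of hyperplanes. -/
theorem aux_classes {F : Type} [Field F] [Fintype F] {d : ℕ}
    (S : Finset (Fin d → F)) (hS : AffineIndependent F ((↑) : S → (Fin d → F)))
    (hc : S.card + 1 = d) (hd : 2 ≤ d) :
    ∃ cls : (Fin d → F) → Option F, ∀ x y, x ∉ affineSpan F (S : Set (Fin d → F)) →
      y ∉ affineSpan F (S : Set (Fin d → F)) → cls x = cls y →
      y ∈ affineSpan F (insert x (S : Set (Fin d → F))) := by
  classical
  have hpos : 0 < S.card := by omega
  obtain ⟨s, hs⟩ := Finset.card_pos.1 hpos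
  have hsm : s ∈ affineSpan F (S : Set (Fin d → F)) := subset_affineSpan F _ hs
  set D := vectorSpan F (S : Set (Fin d → F)) with hD
  have hfr : Module.finrank F D = S.card - 1 := by
    have := hS.finrank_vectorSpan (n := S.card - 1) (by simp; omega)
    have hr : Set.range (Subtype.val : S → (Fin d → F)) = (S : Set (Fin d → F)) :=
      Subtype.range_coe
    have key : ∀ T : Set (Fin d → F), T = (S : Set (Fin d → F)) →
        Module.finrank F (vectorSpan F T) = S.card - 1 →
        Module.finrank F (vectorSpan F (S : Set (Fin d → F))) = S.card - 1 := by
      rintro T rfl h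
      exact h
    exact key _ hr this
  have hq : Module.finrank F ((Fin d → F) ⧸ D) = 2 := by
    have := D.finrank_quotient_add_finrank
    rw [Module.finrank_fin_fun] at this
    omega
  obtain ⟨e⟩ : Nonempty (((Fin d → F) ⧸ D) ≃ₗ[F] (Fin 2 → F)) :=
    FiniteDimensional.nonempty_linearEquiv_of_finrank_eq (by simp [hq])
  let g : (Fin d → F) →ₗ[F] (Fin 2 → F) := e.toLinearMap ∘ₗ D.mkQ
  have hg : ∀ v, g v = 0 ↔ v ∈ D := by
    intro v
    simp [g]
  have hmem : ∀ x, x ∉ affineSpan F (S : Set (Fin d → F)) → g (x - s) ≠ 0 := by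
    intro x hx h
    apply hx
    rw [hg, hD, ← direction_affineSpan] at h
    exact (AffineSubspace.vsub_right_mem_direction_iff_mem hsm x).1 h
  refine ⟨fun x => if g (x - s) 0 = 0 then none else some (g (x - s) 1 / g (x - s) 0), ?_⟩
  intro x y hx hy hxy
  obtain ⟨c, hcc⟩ : ∃ c : F, g (y - s) = c • g (x - s) := by
    have h1 := hmem x hx
    have h2 := hmem y hy
    dsimp only at hxy
    generalize g (x - s) = u at *
    generalize g (y - s) = v at *
    by_cases hu : u 0 = 0
    · by_cases hv : v 0 = 0
      · have hu1 : u 1 ≠ 0 := by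
          intro h
          apply h1
          ext i
          fin_cases i <;> simp [hu, h]
        refine ⟨v 1 / u 1, ?_⟩
        ext i
        fin_cases i
        · simp [hu, hv]
        · simp [hu1]
      · simp [hu, hv] at hxy
    · by_cases hv : v 0 = 0
      · simp [hu, hv] at hxy
      · simp only [hu, hv, if_false, Option.some.injEq] at hxy
        refine ⟨v 0 / u 0, ?_⟩
        ext i
        fin_cases i
        · simp [hu]
        · simp
          field_simp at hxy ⊢
          linear_combination -hxy
  have hw : y - s - c • (x - s) ∈ D := by
    rw [← hg, map_sub, map_smul, hcc, sub_self]
  have hs' : s ∈ affineSpan F (insert x (S : Set (Fin d → F))) :=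
    subset_affineSpan F _ (Set.mem_insert_of_mem _ hs)
  have hx' : x ∈ affineSpan F (insert x (S : Set (Fin d → F))) :=
    subset_affineSpan F _ (Set.mem_insert _ _)
  rw [← AffineSubspace.vsub_right_mem_direction_iff_mem hs']
  have h3 : y - s - c • (x - s) ∈ (affineSpan F (insert x (S : Set (Fin d → F)))).direction := by
    rw [direction_affineSpan]
    exact vectorSpan_mono F (Set.subset_insert _ _) hw
  have h4 := Submodule.smul_mem _ c (AffineSubspace.vsub_mem_direction hx' hs')
  have h5 := Submodule.add_mem _ h3 h4
  simpa using h5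

theorem aux_critical {F : Type} [Field F] {d : ℕ} [DecidableEq (Fin d → F)]
    (S : Finset (Fin d → F)) (hS : AffineIndependent F ((↑) : S → (Fin d → F)))
    (hc : S.card + 1 = d) (hd : 2 ≤ d) (x y : Fin d → F)
    (hx : x ∉ affineSpan F (S : Set (Fin d → F)))
    (hy : y ∉ affineSpan F (S : Set (Fin d → F)))
    (hxy : y ∈ affineSpan F (insert x (S : Set (Fin d → F))))
    (hb : ∀ z ∈ S, y ∉ affineSpan F ((insert x (S.erase z) : Finset (Fin d → F)) :
      Set (Fin d → F))) :
    IsCriticalCoplanar F d (insert y (insert x S)) := by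
  have hxS : x ∉ S := fun h => hx (subset_affineSpan F _ h)
  have hyS : y ∉ S := fun h => hy (subset_affineSpan F _ h)
  by_cases hyx : y = x
  · exfalso
    subst hyx
    rcases S.eq_empty_or_nonempty with rfl | ⟨z, hz⟩
    · simp only [Finset.card_empty] at hc
      omega
    · exact hb z hz (subset_affineSpan F _ (by simp))
  refine ⟨?_, ?_, ?_⟩
  · rw [Finset.card_insert_of_notMem (by simp [hyx, hyS]), Finset.card_insert_of_notMem hxS, hc]
  · intro h
    have := h.notMem_affineSpan_sdiff ⟨y, by simp⟩ Set.univ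
    apply this
    refine affineSpan_mono F ?_ hxy
    intro z hz
    have hz' : z ∈ insert x S := by simpa using hz
    refine ⟨⟨z, Finset.mem_insert_of_mem hz'⟩, ⟨trivial, ?_⟩, rfl⟩
    intro h2
    simp only [Set.mem_singleton_iff, Subtype.mk.injEq] at h2
    subst h2
    simp [hyx, hyS] at hz'
  · intro s hs
    obtain ⟨hsub, hne⟩ := Finset.ssubset_iff_subset_ne.1 hs
    obtain ⟨z, hz, hzs⟩ := Finset.exists_of_ssubset hs
    rcases Finset.mem_insert.1 hz with rfl | hz
    · refine aux_mono ?_ (aux_insert S x hS hx)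
      intro u hu
      rcases Finset.mem_insert.1 (hsub hu) with rfl | h
      · exact absurd hu hzs
      · exact h
    rcases Finset.mem_insert.1 hz with rfl | hz
    · refine aux_mono ?_ (aux_insert S y hS hy)
      intro u hu
      have := hsub hu
      simp only [Finset.mem_insert] at this ⊢
      rcases this with h | rfl | h
      · exact Or.inl h
      · exact absurd hu hzs
      · exact Or.inr h
    · have hx2 : x ∉ affineSpan F ((S.erase z : Finset (Fin d → F)) : Set (Fin d → F)) := by
        intro h
        exact hx (affineSpan_mono F (by exact_mod_cast Finset.erase_subset z S) h)
      have h1 := aux_insert (S.erase z) x (aux_mono (Finset.erase_subset z S) hS) hx2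
      refine aux_mono ?_ (aux_insert _ y h1 (hb z hz))
      intro u hu
      have := hsub hu
      have huz : u ≠ z := by
        rintro rfl
        exact hzs hu
      simp only [Finset.mem_insert, Finset.mem_erase] at this ⊢
      tauto

theorem aux_cs {F V : Type} [Fintype F] [DecidableEq F] [DecidableEq V] (X : Finset V)
    (cls : V → Option F) :
    X.card ^ 2 ≤ (Fintype.card F + 1) *
      ((X ×ˢ X).filter (fun p => cls p.1 = cls p.2)).card := by
  have h1 : X.card = ∑ b : Option F, (X.filter (fun a => cls a = b)).card :=
    Finset.card_eq_sum_card_fiberwise (fun _ _ => by simp)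
  have h2 : ((X ×ˢ X).filter (fun p => cls p.1 = cls p.2)).card
      = ∑ b : Option F, (X.filter (fun a => cls a = b)).card ^ 2 := by
    rw [Finset.card_eq_sum_card_fiberwise (f := fun p : V × V => cls p.1) (t := Finset.univ)
      (fun _ _ => by simp)]
    refine Finset.sum_congr rfl fun b _ => ?_
    rw [sq, ← Finset.card_product]
    congr 1
    ext ⟨u, v⟩
    simp only [Finset.mem_filter, Finset.mem_product]
    grind
  rw [h2]
  conv_lhs => rw [h1]
  have := sq_sum_le_card_mul_sum_sq (s := (Finset.univ : Finset (Option F)))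
    (f := fun b => (X.filter (fun a => cls a = b)).card)
  simpa [Fintype.card_option] using this

open Classical in
theorem aux_pairs {F : Type} [Field F] [Fintype F] (m : ℕ)
    (P S : Finset (Fin (m + 2) → F))
    (hS : AffineIndependent F ((↑) : S → (Fin (m + 2) → F)))
    (hc : S.card = m + 1) (hSP : S ⊆ P)
    (hP : 4 * (m + 2) * Fintype.card F ^ (m + 1) ≤ P.card) :
    (P.card : ℝ) ^ 2 / (16 * Fintype.card F) ≤
      ((P.powerset.filter (fun t => IsCriticalCoplanar F (m + 2) t ∧ S ⊆ t)).card : ℝ)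
        * ((m : ℝ) + 3) ^ 2 := by
  obtain ⟨cls, hcls⟩ := aux_classes S hS (by omega) (by omega)
  set W := affineSpan F (S : Set (Fin (m + 2) → F)) with hW
  set q := Fintype.card F with hq
  set X := P.filter (· ∉ W) with hX
  set C := P.powerset.filter (fun t => IsCriticalCoplanar F (m + 2) t ∧ S ⊆ t) with hC
  set G := (X ×ˢ X).filter (fun p => cls p.1 = cls p.2) with hG
  set B := (X ×ˢ X).filter (fun p => ∃ z ∈ S, p.2 ∈ affineSpan F
    ((insert p.1 (S.erase z) : Finset (Fin (m + 2) → F)) : Set (Fin (m + 2) → F))) with hB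
  have hXc : P.card ≤ X.card + q ^ m := by
    have h1 : (P.filter (· ∈ W)).card ≤ q ^ m := aux_filter_span P S m (by omega)
    have h2 : (P.filter (· ∈ W)).card + X.card = P.card :=
      Finset.card_filter_add_card_filter_not (s := P) (· ∈ W)
    omega
  have hGc : X.card ^ 2 ≤ (q + 1) * G.card := aux_cs X cls
  have hBc : B.card ≤ X.card * ((m + 1) * q ^ m) := by
    have : B ⊆ X.biUnion (fun x => S.biUnion (fun z => (P.filter (fun y => y ∈ affineSpan F
      ((insert x (S.erase z) : Finset (Fin (m + 2) → F)) : Set (Fin (m + 2) → F)))).image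
        (fun y => (x, y)))) := by
      rintro ⟨x, y⟩ h
      simp only [hB, Finset.mem_filter, Finset.mem_product] at h
      obtain ⟨⟨hx, hy⟩, z, hz, hh⟩ := h
      simp only [Finset.mem_biUnion, Finset.mem_image, Finset.mem_filter]
      exact ⟨x, hx, z, hz, y, ⟨(Finset.mem_filter.1 hy).1, hh⟩, rfl⟩
    refine (Finset.card_le_card this).trans ?_
    refine Finset.card_biUnion_le_card_mul _ _ _ fun x _ => ?_
    rw [← hc]
    refine Finset.card_biUnion_le_card_mul _ _ _ fun z hz => ?_
    refine Finset.card_image_le.trans ?_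
    refine aux_filter_span P _ m ?_
    refine (Finset.card_insert_le _ _).trans ?_
    rw [Finset.card_erase_of_mem hz]
    omega
  have hGB : G.card ≤ (G \ B).card + B.card := by
    have := Finset.le_card_sdiff B G
    omega
  have hcount : (G \ B).card ≤ C.card * (m + 3) ^ 2 := by
    have hmaps : ∀ p ∈ G \ B, insert p.2 (insert p.1 S) ∈ C := by
      rintro ⟨x, y⟩ h
      simp only [hG, hB, hX, Finset.mem_sdiff, Finset.mem_filter, Finset.mem_product] at h
      obtain ⟨⟨⟨⟨hxP, hxW⟩, ⟨hyP, hyW⟩⟩, hxy⟩, hnb⟩ := h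
      simp only [hC, Finset.mem_filter, Finset.mem_powerset]
      refine ⟨?_, ?_, ?_⟩
      · intro u hu
        simp only [Finset.mem_insert] at hu
        rcases hu with rfl | rfl | hu
        exacts [hyP, hxP, hSP hu]
      · refine aux_critical S hS (by omega) (by omega) x y hxW hyW (hcls x y hxW hyW hxy) ?_
        intro z hz hh
        exact hnb ⟨⟨⟨hxP, hxW⟩, ⟨hyP, hyW⟩⟩, z, hz, hh⟩
      · intro u hu
        simp [hu]
    rw [mul_comm]
    refine Finset.card_le_mul_card_image_of_maps_to hmaps _ fun t ht => ?_
    have htc : t.card = m + 3 := (Finset.mem_filter.1 ht).2.1.1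
    rw [sq, ← htc, ← Finset.card_product]
    refine Finset.card_le_card ?_
    rintro ⟨x, y⟩ h
    have h2 := (Finset.mem_filter.1 h).2
    simp only at h2
    rw [Finset.mem_product, ← h2]
    simp
  have hq1 : 1 ≤ q := Fintype.card_pos
  have hN : 1 ≤ q ^ m := Nat.one_le_pow _ _ hq1
  rw [pow_succ] at hP
  generalize q ^ m = N at *
  have hXr : (P.card : ℝ) ≤ X.card + N := by exact_mod_cast hXc
  have hGr : (X.card : ℝ) ^ 2 ≤ (q + 1) * G.card := by exact_mod_cast hGc
  have hBr : (B.card : ℝ) ≤ X.card * ((m + 1) * N) := by exact_mod_cast hBc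
  have hGBr : (G.card : ℝ) ≤ (G \ B).card + B.card := by exact_mod_cast hGB
  have hcr : ((G \ B).card : ℝ) ≤ C.card * ((m : ℝ) + 3) ^ 2 := by exact_mod_cast hcount
  have hPr : 4 * ((m : ℝ) + 2) * (N * q) ≤ P.card := by exact_mod_cast hP
  have hqr : (1 : ℝ) ≤ q := by exact_mod_cast hq1
  have hNr : (1 : ℝ) ≤ N := by exact_mod_cast hN
  have hmr : (0 : ℝ) ≤ m := by positivity
  refine le_trans ?_ hcr
  clear_value q
  generalize ((G \ B).card : ℝ) = gb at *
  generalize (G.card : ℝ) = g at *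
  generalize (B.card : ℝ) = b at *
  generalize (X.card : ℝ) = n at *
  generalize (P.card : ℝ) = p at *
  generalize (N : ℝ) = N' at *
  generalize (q : ℝ) = q' at *
  generalize (m : ℝ) = m' at *
  clear hcr
  have hNq : N' ≤ N' * q' := by nlinarith
  have hNq0 : 0 ≤ N' * q' := by nlinarith
  have hmNq : 0 ≤ m' * (N' * q') := by positivity
  -- n is at least p / 2
  have hn2 : p ≤ 2 * n := by nlinarith
  -- n dominates the bad flats
  have hn3 : 2 * (m' + 1) * N' * (q' + 1) ≤ n := by
    have : 2 * (m' + 1) * N' * (q' + 1) ≤ 2 * (m' + 1) * N' * (2 * q') := by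
      apply mul_le_mul_of_nonneg_left <;> first | linarith | positivity
    nlinarith
  have hn0 : 0 ≤ n := le_trans (by positivity) hn3
  have h1 : n ^ 2 ≤ (q' + 1) * gb + (q' + 1) * (n * ((m' + 1) * N')) := by
    have : (q' + 1) * g ≤ (q' + 1) * (gb + n * ((m' + 1) * N')) := by
      apply mul_le_mul_of_nonneg_left <;> linarith
    linarith
  have h2 : (q' + 1) * (n * ((m' + 1) * N')) ≤ n ^ 2 / 2 := by nlinarith
  have h3 : n ^ 2 / 2 ≤ (q' + 1) * gb := by linarith
  have hgb : 0 ≤ gb := by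
    by_contra h
    push Not at h
    nlinarith [sq_nonneg n]
  have h4 : (q' + 1) * gb ≤ 2 * q' * gb := by nlinarith
  have hp0 : 0 ≤ p := le_trans (by positivity) hPr
  have h5 : p ^ 2 ≤ 4 * n ^ 2 := by nlinarith
  rw [div_le_iff₀ (by positivity)]
  nlinarith

open Classical in
/-- Number of affinely independent subsets. -/
theorem aux_indep {F : Type} [Field F] [Fintype F] (m : ℕ)
    (P : Finset (Fin (m + 2) → F))
    (hP : 4 * (m + 2) * Fintype.card F ^ (m + 1) ≤ P.card) (k : ℕ) (hk : k ≤ m + 1) :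
    (P.card : ℝ) ^ k / (2 ^ k * k.factorial) ≤
      ((P.powerset.filter (fun t : Finset (Fin (m + 2) → F) => t.card = k ∧
        AffineIndependent F ((↑) : t → (Fin (m + 2) → F)))).card : ℝ) := by
  induction k with
  | zero =>
    have : (∅ : Finset (Fin (m + 2) → F)) ∈ P.powerset.filter (fun t : Finset (Fin (m + 2) → F) => t.card = 0 ∧
        AffineIndependent F ((↑) : t → (Fin (m + 2) → F))) := by
      simp only [Finset.mem_filter, Finset.mem_powerset, Finset.empty_subset,
        Finset.card_empty, true_and]
      exact affineIndependent_of_subsingleton F _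
    have h1 : 1 ≤ (P.powerset.filter (fun t : Finset (Fin (m + 2) → F) => t.card = 0 ∧
        AffineIndependent F ((↑) : t → (Fin (m + 2) → F)))).card :=
      Finset.card_pos.2 ⟨_, this⟩
    simpa using h1
  | succ k ih =>
    have ih := ih (by omega)
    set A := P.powerset.filter (fun t : Finset (Fin (m + 2) → F) => t.card = k ∧
        AffineIndependent F ((↑) : t → (Fin (m + 2) → F))) with hA
    set A' := P.powerset.filter (fun t : Finset (Fin (m + 2) → F) => t.card = k + 1 ∧
        AffineIndependent F ((↑) : t → (Fin (m + 2) → F))) with hA'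
    have hdc : A.card • ((P.card : ℝ) / 2) ≤ A'.card • ((k + 1 : ℕ) : ℝ) := by
      refine Finset.card_nsmul_le_card_nsmul (fun S T => S ⊆ T) ?_ ?_
      · intro S hS
        simp only [hA, Finset.mem_filter, Finset.mem_powerset] at hS
        obtain ⟨hSP, hSc, hSi⟩ := hS
        have h1 := aux_filter_span P S m (by omega)
        have h2 := Finset.card_filter_add_card_filter_not (s := P)
          (· ∈ affineSpan F (S : Set (Fin (m + 2) → F)))
        have h3 : (P.filter (fun x => ¬ x ∈ affineSpan F (S : Set (Fin (m + 2) → F)))).card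
            ≤ (A'.bipartiteAbove (fun S T => S ⊆ T) S).card := by
          refine Finset.card_le_card_of_injOn (fun x => insert x S) ?_ ?_
          · intro x hx
            obtain ⟨hxP, hxS⟩ := Finset.mem_filter.1 (Finset.mem_coe.1 hx)
            have hxS' : x ∉ S := fun h => hxS (subset_affineSpan F _ h)
            simp only [Finset.mem_coe, Finset.mem_bipartiteAbove, hA', Finset.mem_filter,
              Finset.mem_powerset]
            refine ⟨⟨Finset.insert_subset hxP hSP, ?_, aux_insert S x hSi hxS⟩,
              Finset.subset_insert _ _⟩
            rw [Finset.card_insert_of_notMem hxS', hSc]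
          · intro x hx y hy hxy
            obtain ⟨hxP, hxS⟩ := Finset.mem_filter.1 (Finset.mem_coe.1 hx)
            have hxS' : x ∉ S := fun h => hxS (subset_affineSpan F _ h)
            have : x ∈ insert y S := by
              simp only at hxy
              rw [← hxy]
              simp
            rcases Finset.mem_insert.1 this with h | h
            · exact h
            · exact absurd h hxS'
        have hq1 : 1 ≤ Fintype.card F := Fintype.card_pos
        have h4 : 2 * Fintype.card F ^ m ≤ P.card := by
          refine le_trans ?_ hP
          rw [pow_succ]
          have : Fintype.card F ^ m ≤ Fintype.card F ^ m * Fintype.card F :=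
            Nat.le_mul_of_pos_right _ hq1
          nlinarith
        have h5 : P.card ≤ 2 * (A'.bipartiteAbove (fun S T => S ⊆ T) S).card := by omega
        have h6 : (P.card : ℝ) ≤ 2 * (A'.bipartiteAbove (fun S T => S ⊆ T) S).card := by
          exact_mod_cast h5
        linarith
      · intro T hT
        simp only [hA', Finset.mem_filter, Finset.mem_powerset] at hT
        obtain ⟨hTP, hTc, hTi⟩ := hT
        have : A.bipartiteBelow (fun S T => S ⊆ T) T ⊆ T.powersetCard k := by
          intro S hS
          simp only [Finset.mem_bipartiteBelow, hA, Finset.mem_filter] at hS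
          exact Finset.mem_powersetCard.2 ⟨hS.2, hS.1.2.1⟩
        have h7 := Finset.card_le_card this
        rw [Finset.card_powersetCard, hTc, Nat.choose_succ_self_right] at h7
        exact_mod_cast h7
    simp only [nsmul_eq_mul] at hdc
    rw [div_le_iff₀ (by positivity)] at ih ⊢
    rw [Nat.factorial_succ, pow_succ, pow_succ]
    push_cast at hdc ⊢
    have hp0 : (0 : ℝ) ≤ P.card := by positivity
    calc (P.card : ℝ) ^ k * P.card ≤ (A.card * (2 ^ k * k.factorial)) * P.card := by gcongr
      _ = (2 ^ k * 2 * k.factorial) * (A.card * (P.card / 2)) := by ring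
      _ ≤ (2 ^ k * 2 * k.factorial) * (A'.card * (k + 1)) := by gcongr
      _ = _ := by ring

/-- Supersaturation for critical coplanar `(d+1)`-tuples: if
`|P| ≥ 4d·q^{d−1}` then `P` contains at least `c·|P|^{d+1}/q` critical coplanar
`(d+1)`-element subsets. -/
theorem supersaturation_critical_coplanar (d : ℕ) (hd : 2 ≤ d) :
    ∃ c : ℝ, 0 < c ∧ ∀ q : ℕ, IsPrimePow q →
      ∀ (F : Type) [Field F] [Fintype F], Fintype.card F = q →
        ∀ P : Finset (Fin d → F), 4 * d * q ^ (d - 1) ≤ P.card →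
          c * (P.card : ℝ) ^ (d + 1) / (q : ℝ)
            ≤ (({t : Finset (Fin d → F) | t ⊆ P ∧
                  IsCriticalCoplanar F d t}).ncard : ℝ) := by
  classical
  obtain ⟨m, rfl⟩ : ∃ m, d = m + 2 := ⟨d - 2, by omega⟩
  refine ⟨1 / ((2 ^ (m + 1) * (m + 1).factorial) * (16 * ((m : ℝ) + 3) ^ 2) * 2 ^ (m + 3)),
    by positivity, ?_⟩
  rintro q - F _ _ rfl P hP
  have hP' : 4 * (m + 2) * Fintype.card F ^ (m + 1) ≤ P.card := hP
  have hset : {t : Finset (Fin (m + 2) → F) | t ⊆ P ∧ IsCriticalCoplanar F (m + 2) t}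
      = ((P.powerset.filter (fun t => IsCriticalCoplanar F (m + 2) t) :
        Finset (Finset (Fin (m + 2) → F))) : Set (Finset (Fin (m + 2) → F))) := by
    ext t
    simp
  rw [hset, Set.ncard_coe_finset]
  set C := P.powerset.filter (fun t => IsCriticalCoplanar F (m + 2) t) with hC
  have hind := aux_indep m P hP' (m + 1) le_rfl
  set A := P.powerset.filter (fun t : Finset (Fin (m + 2) → F) => t.card = m + 1 ∧
        AffineIndependent F ((↑) : t → (Fin (m + 2) → F))) with hA
  have hq1 : (0 : ℝ) < Fintype.card F := by exact_mod_cast Fintype.card_pos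
  have hdc : A.card • ((P.card : ℝ) ^ 2 / (16 * Fintype.card F) / ((m : ℝ) + 3) ^ 2)
      ≤ C.card • ((2 : ℝ) ^ (m + 3)) := by
    refine Finset.card_nsmul_le_card_nsmul (fun S T => S ⊆ T) ?_ ?_
    · intro S hS
      simp only [hA, Finset.mem_filter, Finset.mem_powerset] at hS
      obtain ⟨hSP, hSc, hSi⟩ := hS
      rw [div_le_iff₀ (by positivity)]
      refine (aux_pairs m P S hSi hSc hSP hP').trans ?_
      refine mul_le_mul_of_nonneg_right ?_ (by positivity)
      refine Nat.cast_le.2 (Finset.card_le_card ?_)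
      intro t ht
      simp only [Finset.mem_filter] at ht
      simp only [Finset.mem_bipartiteAbove, hC, Finset.mem_filter]
      exact ⟨⟨ht.1, ht.2.1⟩, ht.2.2⟩
    · intro T hT
      have hTc : T.card = m + 3 := (Finset.mem_filter.1 hT).2.1
      have : A.bipartiteBelow (fun S T => S ⊆ T) T ⊆ T.powerset := by
        intro S hS
        exact Finset.mem_powerset.2 (Finset.mem_bipartiteBelow _ |>.1 hS).2
      have h7 := Finset.card_le_card this
      rw [Finset.card_powerset, hTc] at h7
      exact_mod_cast h7
  simp only [nsmul_eq_mul] at hdc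
  have h1 : (P.card : ℝ) ^ (m + 1) / (2 ^ (m + 1) * (m + 1).factorial) *
      ((P.card : ℝ) ^ 2 / (16 * Fintype.card F) / ((m : ℝ) + 3) ^ 2)
      ≤ C.card * (2 : ℝ) ^ (m + 3) :=
    (mul_le_mul_of_nonneg_right hind (by positivity)).trans hdc
  rw [← div_le_iff₀ (by positivity)] at h1
  refine le_trans (le_of_eq ?_) h1
  field_simp
  ring
end
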